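/- arXiv:1504.02923 — 2 statements merged into one kernel-verified Lean document; each statement's English description precedes it below -/
import Mathlib

section
/- Let A ∈ ℝ^{m×n} with m < n satisfy the URP, let b ∈ ℝᵐ, and let x be a solution of Aw = b of minimal ‖·‖₀ with k := ‖x‖₀. If 2k ≤ m, then: (i) there exist p ∈ (0,1) and λ > 0 such that every global minimizer of G_p over {w : Aw = b} equals x; and (ii) for every p < 0 there exists λ > 0 such that every global minimizer of G_p over {w : Aw = b} equals x. -/
open MeasureTheory Filter
open scoped BigOperators

noncomputable section

/-- `l0 w` is the number of nonzero entries of `w`. -/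
def l0 {n : ℕ} (w : Fin n → ℝ) : ℕ := (Finset.univ.filter fun i => w i ≠ 0).card

/-- Euclidean (`ℓ²`) norm of a vector. -/
def l2 {k : ℕ} (v : Fin k → ℝ) : ℝ := Real.sqrt (∑ i, v i ^ 2)

/-- Restriction `h_T` of a vector to a finset `T` (zero outside `T`). -/
def restr {n : ℕ} (T : Finset (Fin n)) (h : Fin n → ℝ) : Fin n → ℝ :=
  fun i => if i ∈ T then h i else 0

/-- Unique Representation Property: every `m` columns of `A` are linearly independent. -/
def URP {m n : ℕ} (A : Matrix (Fin m) (Fin n) ℝ) : Prop :=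
  ∀ S : Finset (Fin n), S.card = m →
    LinearIndependent ℝ (fun j : S => (fun i : Fin m => A i (j : Fin n)))

/-- Conditions (I)-(II) on the penalty component `g`. -/
def PenaltyConds (g : ℝ → ℝ) : Prop :=
  g 0 = 0 ∧ (∀ w, g (-w) = g w) ∧ Continuous g ∧
    ((StrictMonoOn g (Set.Ioi 0) ∧ StrictConcaveOn ℝ (Set.Ioi 0) g) ∨
      (∃ γ : ℝ, 0 < γ ∧ StrictMonoOn g (Set.Ioc 0 γ) ∧
        StrictConcaveOn ℝ (Set.Ioc 0 γ) g ∧ ∀ w, γ ≤ w → g w = g γ))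

/-- Spectral (`ℓ² → ℓ²` operator) norm of a matrix. -/
def specNorm {m n : ℕ} (A : Matrix (Fin m) (Fin n) ℝ) : ℝ :=
  sSup {c | ∃ v : Fin n → ℝ, l2 v ≤ 1 ∧ c = l2 (A.mulVec v)}

/-- The `p`-shrinkage function `s_{λ,p}`. -/
def pshrinkFun (lam p t : ℝ) : ℝ :=
  if t ≤ 0 then 0 else max (t - lam ^ (2 - p) * t ^ (p - 1)) 0

/-- `f_p(x) = ∫₀ˣ s_{λ,p}(t) dt`. -/
def pf (lam p x : ℝ) : ℝ := ∫ t in (0 : ℝ)..x, pshrinkFun lam p t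

/-- Legendre–Fenchel transform `f_p*(w) = sup_{x ≥ 0} (x·w − f_p(x))`. -/
def pfstar (lam p w : ℝ) : ℝ := sSup ((fun x => x * w - pf lam p x) '' Set.Ici 0)

/-- The induced `p`-shrinkage penalty component `g_p`. -/
def gp (lam p w : ℝ) : ℝ := (pfstar lam p |w| - w ^ 2 / 2) / lam

/-- The induced `p`-shrinkage penalty `G_p`. -/
def Gp (lam p : ℝ) {n : ℕ} (w : Fin n → ℝ) : ℝ := ∑ i, gp lam p (w i)

/-- The `p`-shrinkage mapping `S_p`. -/
def Sp (lam p : ℝ) {n : ℕ} (x : Fin n → ℝ) : Fin n → ℝ :=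
  fun i => pshrinkFun lam p |x i| * Real.sign (x i)

/-- The objective `F_p(x) = λ G_p(x) + ½‖Ax − b‖₂²`. -/
def Fp (lam p : ℝ) {m n : ℕ} (A : Matrix (Fin m) (Fin n) ℝ) (b : Fin m → ℝ)
    (x : Fin n → ℝ) : ℝ :=
  lam * Gp lam p x + (1 / 2) * (l2 (A.mulVec x - b)) ^ 2

/-- Firm-thresholding penalty component. -/
def gfirm (μ w : ℝ) : ℝ := if |w| ≤ μ then |w| - w ^ 2 / (2 * μ) else μ / 2

/-- Firm-thresholding penalty. -/
def Gfirm (μ : ℝ) {n : ℕ} (w : Fin n → ℝ) : ℝ := ∑ i, gfirm μ (w i)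

/-- The `m × m` submatrix `A_S` of the columns of `A` indexed by `S`. -/
def colsub {m n : ℕ} (A : Matrix (Fin m) (Fin n) ℝ)
    (S : {S : Finset (Fin n) // S.card = m}) : Matrix (Fin m) (Fin m) ℝ :=
  Matrix.of fun i j => A i ((S.1.orderIsoOfFin S.2 j : Fin n))

/-- `α_S = ‖A_S⁻¹ b‖_{-∞}`. -/
def alphaS {m n : ℕ} (A : Matrix (Fin m) (Fin n) ℝ) (b : Fin m → ℝ)
    (S : {S : Finset (Fin n) // S.card = m}) : ℝ :=
  ⨅ i, |((colsub A S)⁻¹).mulVec b i|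

/-- `β_S = ‖A_S⁻¹ b‖_∞`. -/
def betaS {m n : ℕ} (A : Matrix (Fin m) (Fin n) ℝ) (b : Fin m → ℝ)
    (S : {S : Finset (Fin n) // S.card = m}) : ℝ :=
  ⨆ i, |((colsub A S)⁻¹).mulVec b i|

/-- `‖A_S⁻¹‖` (spectral norm). -/
def nrmInv {m n : ℕ} (A : Matrix (Fin m) (Fin n) ℝ)
    (S : {S : Finset (Fin n) // S.card = m}) : ℝ :=
  specNorm ((colsub A S)⁻¹)

section PShrinkage

variable {lam p : ℝ}

/-- On `[lam, ∞)` this is the gap `t - pshrinkFun lam p t`; it is frozen at `lam` to the left. -/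
def pgap (lam p t : ℝ) : ℝ := lam ^ (2 - p) * max t lam ^ (p - 1)

lemma pgap_antitone (hl : 0 < lam) (hp : p < 1) : Antitone (pgap lam p) := fun s t hst =>
  mul_le_mul_of_nonneg_left
    (Real.rpow_le_rpow_of_nonpos (lt_max_of_lt_right hl) (max_le_max_right lam hst)
      (by linarith)) (Real.rpow_nonneg hl.le _)

lemma pgap_strictAntiOn (hl : 0 < lam) (hp : p < 1) :
    StrictAntiOn (pgap lam p) (Set.Ici lam) := fun s hs t ht hst => by
  simp only [pgap, max_eq_left (Set.mem_Ici.1 hs), max_eq_left (Set.mem_Ici.1 ht)]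
  exact mul_lt_mul_of_pos_left
    (Real.rpow_lt_rpow_of_neg (hl.trans_le hs) hst (by linarith)) (Real.rpow_pos_of_pos hl _)

lemma pgap_pos (hl : 0 < lam) (t : ℝ) : 0 < pgap lam p t :=
  mul_pos (Real.rpow_pos_of_pos hl _) (Real.rpow_pos_of_pos (lt_max_of_lt_right hl) _)

lemma pgap_self (hl : 0 < lam) : pgap lam p lam = lam := by
  rw [pgap, max_self, ← Real.rpow_add hl]
  norm_num

lemma pgap_continuous (hl : 0 < lam) : Continuous (pgap lam p) :=
  continuous_const.mul ((continuous_id.max continuous_const).rpow_const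
    fun _ => Or.inl (lt_max_of_lt_right hl).ne')

lemma pshrinkFun_eq (hl : 0 < lam) (hp : p < 1) (t : ℝ) :
    pshrinkFun lam p t = max (t - pgap lam p t) 0 := by
  rcases le_or_gt t lam with h | h
  · have h1 : pgap lam p t = lam := by
      simpa only [pgap, max_self, max_eq_right h] using pgap_self (p := p) hl
    rw [h1, max_eq_right (by linarith)]
    rcases le_or_gt t 0 with h0 | h0
    · simp [pshrinkFun, h0]
    · have h2 : t ≤ lam ^ (2 - p) * t ^ (p - 1) := by
        calc t ≤ pgap lam p lam := by rwa [pgap_self hl]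
          _ ≤ _ := by
            rw [pgap, max_self]
            exact mul_le_mul_of_nonneg_left
              (Real.rpow_le_rpow_of_nonpos h0 h (by linarith)) (Real.rpow_nonneg hl.le _)
      rw [pshrinkFun, if_neg h0.not_ge, max_eq_right (by linarith)]
  · rw [pshrinkFun, if_neg (hl.trans h).not_ge, pgap, max_eq_left h.le]

lemma pshrinkFun_eq_sub_pgap (hl : 0 < lam) (hp : p < 1) {t : ℝ} (ht : lam ≤ t) :
    pshrinkFun lam p t = t - pgap lam p t := by
  rw [pshrinkFun_eq hl hp, max_eq_left]
  have := pgap_antitone hl hp ht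
  rw [pgap_self hl] at this
  linarith

lemma pshrinkFun_self (hl : 0 < lam) (hp : p < 1) : pshrinkFun lam p lam = 0 := by
  rw [pshrinkFun_eq_sub_pgap hl hp le_rfl, pgap_self hl, sub_self]

lemma pshrinkFun_monotone (hl : 0 < lam) (hp : p < 1) : Monotone (pshrinkFun lam p) := by
  intro s t hst
  rw [pshrinkFun_eq hl hp, pshrinkFun_eq hl hp]
  exact max_le_max_right 0 (sub_le_sub hst (pgap_antitone hl hp hst))

lemma pshrinkFun_continuous (hl : 0 < lam) (hp : p < 1) : Continuous (pshrinkFun lam p) := by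
  rw [funext (pshrinkFun_eq hl hp)]
  exact (continuous_id.sub (pgap_continuous hl)).max continuous_const

lemma pf_sub_pf (hl : 0 < lam) (hp : p < 1) (x y : ℝ) :
    pf lam p y - pf lam p x = ∫ t in x..y, pshrinkFun lam p t :=
  intervalIntegral.integral_interval_sub_left
    ((pshrinkFun_continuous hl hp).intervalIntegrable _ _)
    ((pshrinkFun_continuous hl hp).intervalIntegrable _ _)

lemma Monotone.mul_sub_le_integral {h : ℝ → ℝ} (hm : Monotone h) (x y : ℝ) :
    h x * (y - x) ≤ ∫ t in x..y, h t := by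
  rcases le_total x y with hxy | hxy
  · have := intervalIntegral.integral_mono_on (f := fun _ => h x) (g := h) (μ := volume) hxy
      intervalIntegrable_const hm.intervalIntegrable fun t ht => hm ht.1
    simp only [intervalIntegral.integral_const, smul_eq_mul] at this
    linarith
  · have := intervalIntegral.integral_mono_on (g := fun _ => h x) (f := h) (μ := volume) hxy
      hm.intervalIntegrable intervalIntegrable_const fun t ht => hm ht.2
    simp only [intervalIntegral.integral_const, smul_eq_mul] at this
    rw [intervalIntegral.integral_symm]
    linarith

lemma pf_subgradient (hl : 0 < lam) (hp : p < 1) (x y : ℝ) :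
    pf lam p x + pshrinkFun lam p x * (y - x) ≤ pf lam p y := by
  have := (pshrinkFun_monotone hl hp).mul_sub_le_integral x y
  rw [← pf_sub_pf hl hp] at this
  linarith

lemma pf_self (hl : 0 < lam) (hp : p < 1) : pf lam p lam = 0 := by
  have h1 := pf_subgradient hl hp lam 0
  have h2 := pf_subgradient hl hp 0 lam
  have h3 : pf lam p 0 = 0 := intervalIntegral.integral_same
  have h4 : pshrinkFun lam p 0 = 0 := by simp [pshrinkFun]
  rw [pshrinkFun_self hl hp, h3] at h1
  rw [h3, h4] at h2
  linarith

lemma pf_strong_subgradient (hl : 0 < lam) (hp : p < 1) {x y : ℝ} (hx : lam ≤ x)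
    (hy : lam ≤ y) :
    pf lam p x + pshrinkFun lam p x * (y - x) + (y - x) ^ 2 / 2 ≤ pf lam p y := by
  have h1 := Monotone.mul_sub_le_integral (h := fun t => - pgap lam p t)
    (fun s t hst => neg_le_neg (pgap_antitone hl hp hst)) x y
  have h2 : ∫ t in x..y, pshrinkFun lam p t = ∫ t in x..y, (t + - pgap lam p t) := by
    refine intervalIntegral.integral_congr fun t ht => ?_
    have : lam ≤ t := (le_min hx hy).trans ht.1
    simp only [pshrinkFun_eq_sub_pgap hl hp this]
    ring
  rw [intervalIntegral.integral_add (continuous_id'.intervalIntegrable _ _)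
    ((pgap_continuous hl).fun_neg.intervalIntegrable _ _), integral_id, ← pf_sub_pf hl hp] at h2
  rw [pshrinkFun_eq_sub_pgap hl hp hx]
  nlinarith

lemma exists_pshrinkFun_eq (hl : 0 < lam) (hp : p < 1) {w : ℝ} (hw : 0 ≤ w) :
    ∃ t, lam ≤ t ∧ pshrinkFun lam p t = w := by
  have h2 : w ≤ pshrinkFun lam p (w + lam) := by
    rw [pshrinkFun_eq_sub_pgap hl hp (by linarith)]
    have := pgap_antitone hl hp (show lam ≤ w + lam by linarith)
    rw [pgap_self hl] at this
    linarith
  obtain ⟨t, ht, rfl⟩ := intermediate_value_Icc (show lam ≤ w + lam by linarith)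
    (pshrinkFun_continuous hl hp).continuousOn ⟨(pshrinkFun_self hl hp).trans_le hw, h2⟩
  exact ⟨t, ht.1, rfl⟩

lemma isGreatest_pshrinkFun (hl : 0 < lam) (hp : p < 1) {t : ℝ} (ht : lam ≤ t) :
    IsGreatest ((fun x => x * pshrinkFun lam p t - pf lam p x) '' Set.Ici 0)
      (t * pshrinkFun lam p t - pf lam p t) := by
  refine ⟨⟨t, hl.le.trans ht, rfl⟩, ?_⟩
  rintro _ ⟨x, -, rfl⟩
  have := pf_subgradient hl hp t x
  simp only
  linarith

lemma pfstar_pshrinkFun (hl : 0 < lam) (hp : p < 1) {t : ℝ} (ht : lam ≤ t) :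
    pfstar lam p (pshrinkFun lam p t) = t * pshrinkFun lam p t - pf lam p t :=
  (isGreatest_pshrinkFun hl hp ht).csSup_eq

lemma gp_zero (hl : 0 < lam) (hp : p < 1) : gp lam p 0 = 0 := by
  have := pfstar_pshrinkFun hl hp (le_refl lam)
  rw [pshrinkFun_self hl hp, pf_self hl hp] at this
  simp [gp, this]

lemma gp_abs (w : ℝ) : gp lam p |w| = gp lam p w := by
  simp [gp]

lemma gp_supergradient (hl : 0 < lam) (hp : p < 1) {w : ℝ} (hw : 0 ≤ w) :
    ∃ d, 0 < d ∧ (0 < w → d ≤ (lam / w) ^ (1 - p)) ∧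
      ∀ v, 0 ≤ v → v ≠ w → gp lam p v < gp lam p w + d * (v - w) := by
  obtain ⟨t, ht, rfl⟩ := exists_pshrinkFun_eq hl hp hw
  have ht0 : 0 < t := hl.trans_le ht
  have hst := pshrinkFun_eq_sub_pgap hl hp ht
  have hg := pgap_pos (p := p) hl t
  refine ⟨pgap lam p t / lam, div_pos hg hl, fun h => ?_, ?_⟩
  · calc pgap lam p t / lam = (lam / t) ^ (1 - p) := by
          rw [pgap, max_eq_left ht, Real.div_rpow hl.le ht0.le, show p - 1 = -(1 - p) by ring,
            Real.rpow_neg ht0.le, show 2 - p = 1 + (1 - p) by ring, Real.rpow_add hl,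
            Real.rpow_one]
          field_simp
      _ ≤ _ := by
          refine Real.rpow_le_rpow (by positivity) ?_ (by linarith)
          exact div_le_div_of_nonneg_left hl.le h (by linarith)
  · intro v hv hne
    obtain ⟨r, hr, rfl⟩ := exists_pshrinkFun_eq hl hp hv
    have hsr := pshrinkFun_eq_sub_pgap hl hp hr
    have hgap : pgap lam p r ≠ pgap lam p t := fun h =>
      hne (by rw [(pgap_strictAntiOn hl hp).injOn hr ht h])
    have hsq : 0 < (pgap lam p r - pgap lam p t) ^ 2 := by
      have := sub_ne_zero.2 hgap
      positivity
    have hf := pf_strong_subgradient hl hp ht hr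
    rw [gp, gp, abs_of_nonneg hv, abs_of_nonneg hw, pfstar_pshrinkFun hl hp ht,
      pfstar_pshrinkFun hl hp hr, div_mul_eq_mul_div, ← add_div]
    refine div_lt_div_of_pos_right ?_ hl
    rw [hsr, hst] at *
    nlinarith

lemma gp_strictMonoOn (hl : 0 < lam) (hp : p < 1) :
    StrictMonoOn (gp lam p) (Set.Ici 0) := by
  intro v hv w hw hvw
  obtain ⟨d, hd, -, h⟩ := gp_supergradient hl hp (w := w) hw
  have := h v hv hvw.ne
  nlinarith

lemma gp_add_add_gp_sub_lt (hl : 0 < lam) (hp : p < 1) {w e : ℝ} (he : e ≠ 0)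
    (hew : |e| ≤ |w|) : gp lam p (w + e) + gp lam p (w - e) < 2 * gp lam p w := by
  wlog hw : 0 ≤ w generalizing w e
  · have hneg : ∀ v, gp lam p (-v) = gp lam p v := fun v => by simp [gp]
    have := this (w := -w) (e := -e) (by simpa) (by simpa) (by linarith)
    rwa [← neg_add, hneg, hneg, ← neg_sub', hneg] at this
  rw [abs_of_nonneg hw] at hew
  obtain ⟨h1, h2⟩ := abs_le.1 hew
  obtain ⟨d, -, -, h⟩ := gp_supergradient hl hp hw
  have h3 := h (w + e) (by linarith) (by simpa)
  have h4 := h (w - e) (by linarith) (by simpa)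
  linarith

lemma le_gp (hl : 0 < lam) (hp : p < 1) (hp0 : p ≠ 0) {a : ℝ} (ha : lam ≤ a) :
    lam / 2 + lam ^ (1 - p) * ((a ^ p - lam ^ p) / p) ≤ gp lam p a := by
  have ha0 : 0 < a := hl.trans_le ha
  have h1 : a * a - pf lam p a ≤ pfstar lam p a := by
    obtain ⟨t, ht, rfl⟩ := exists_pshrinkFun_eq hl hp ha0.le
    exact le_csSup ⟨_, (isGreatest_pshrinkFun hl hp ht).2⟩ ⟨_, ha0.le, rfl⟩
  have h3 : ∫ t in lam..a, pshrinkFun lam p t =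
      ∫ t in lam..a, (t - lam ^ (2 - p) * t ^ (p - 1)) := by
    refine intervalIntegral.integral_congr fun t ht => ?_
    rw [Set.uIcc_of_le ha] at ht
    simp only [pshrinkFun_eq_sub_pgap hl hp ht.1, pgap, max_eq_left ht.1]
  have h0 : (0 : ℝ) ∉ Set.uIcc lam a := by
    rw [Set.uIcc_of_le ha]
    exact fun h => hl.not_ge h.1
  rw [intervalIntegral.integral_sub (continuous_id'.intervalIntegrable _ _)
    ((intervalIntegral.intervalIntegrable_rpow (Or.inr h0)).const_mul _), integral_id,
    intervalIntegral.integral_const_mul,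
    integral_rpow (Or.inr ⟨by simpa [sub_eq_iff_eq_add] using hp0, h0⟩), ← pf_sub_pf hl hp, pf_self hl hp,
    sub_add_cancel] at h3
  rw [gp, abs_of_pos ha0, le_div_iff₀ hl]
  have h4 : lam ^ (2 - p) = lam ^ (1 - p) * lam := by
    rw [show 2 - p = (1 - p) + 1 by ring, Real.rpow_add hl, Real.rpow_one]
  rw [h4] at h3
  nlinarith

/-- `(lam / a) ^ (1 - p)` bounds the slope of `gp` beyond `a`, so it controls `gp B - gp a`. -/
lemma nat_mul_gp_lt (hl : 0 < lam) (hp : p < 1) {a B : ℝ} (ha : 0 < a) (haB : a ≤ B) (k : ℕ)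
    (h : k * (B - a) * (lam / a) ^ (1 - p) < gp lam p a) :
    k * gp lam p B < (k + 1) * gp lam p a := by
  obtain ⟨d, hd, hda, hs⟩ := gp_supergradient hl hp ha.le
  have h1 : gp lam p B ≤ gp lam p a + (lam / a) ^ (1 - p) * (B - a) := by
    rcases haB.eq_or_lt with rfl | hlt
    · simp
    · have h2 := hs B (ha.le.trans haB) hlt.ne'
      have h3 := mul_le_mul_of_nonneg_right (hda ha) (sub_nonneg.2 haB)
      linarith
  have := mul_le_mul_of_nonneg_left h1 (Nat.cast_nonneg (α := ℝ) k)
  linarith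

lemma exists_nat_mul_gp_lt_of_pos {a B : ℝ} (ha : 0 < a) (haB : a ≤ B) (k : ℕ) :
    ∃ p ∈ Set.Ioo (0 : ℝ) 1, ∃ lam : ℝ, 0 < lam ∧
      k * gp lam p B < (k + 1) * gp lam p a := by
  set K : ℝ := k * (B - a) / a with hK
  have hK0 : 0 ≤ K := div_nonneg (mul_nonneg k.cast_nonneg (sub_nonneg.2 haB)) ha.le
  set p : ℝ := 1 / (2 * (K + 1)) with hp
  have hp0 : 0 < p := by positivity
  have hp1 : p < 1 := by
    rw [hp, div_lt_one (by positivity)]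
    linarith
  set q : ℝ := (1 / 2) ^ (1 / p) with hq
  have hq0 : 0 < q := by positivity
  have hq1 : q ≤ 1 := Real.rpow_le_one (by norm_num) (by norm_num) (by positivity)
  have hqp : q ^ p = 1 / 2 := by
    rw [hq, ← Real.rpow_mul (by norm_num), one_div_mul_cancel hp0.ne', Real.rpow_one]
  have hl : 0 < a * q := by positivity
  refine ⟨p, ⟨hp0, hp1⟩, a * q, hl, nat_mul_gp_lt hl hp1 ha haB k ?_⟩
  refine lt_of_lt_of_le ?_ (le_gp hl hp1 hp0.ne' (mul_le_of_le_one_right ha.le hq1))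
  have h1 : k * (B - a) = K * a := by rw [hK]; field_simp
  have h2 : a ^ (1 - p) * a ^ p = a := by
    rw [← Real.rpow_add ha, sub_add_cancel, Real.rpow_one]
  have h3 : (a * q) ^ (1 - p) * ((a ^ p - (a * q) ^ p) / p) = (K + 1) * a * q ^ (1 - p) := by
    calc _ = (a ^ (1 - p) * a ^ p) * q ^ (1 - p) * (1 - q ^ p) / p := by
          rw [Real.mul_rpow ha.le hq0.le, Real.mul_rpow ha.le hq0.le]
          ring
      _ = _ := by
          rw [h2, hqp, hp]
          field_simp
          ring
  rw [h1, h3, mul_div_cancel_left₀ _ ha.ne']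
  have : 0 < a * q ^ (1 - p) := by positivity
  nlinarith

lemma exists_nat_mul_gp_lt_of_neg {a B : ℝ} (ha : 0 < a) (haB : a ≤ B) (k : ℕ)
    (hp : p < 0) :
    ∃ lam : ℝ, 0 < lam ∧ k * gp lam p B < (k + 1) * gp lam p a := by
  set K : ℝ := k * (B - a) / a with hK
  have hK0 : 0 ≤ K := div_nonneg (mul_nonneg k.cast_nonneg (sub_nonneg.2 haB)) ha.le
  set q : ℝ := (1 / (2 * (K + 1))) ^ (1 / -p) with hq
  have hq0 : 0 < q := by positivity
  have hr : 1 / (2 * (K + 1)) ≤ 1 := by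
    rw [div_le_one (by positivity)]
    linarith
  have hq1 : q ≤ 1 := Real.rpow_le_one (by positivity) hr (one_div_nonneg.2 (by linarith))
  have hqp : q ^ (-p) = 1 / (2 * (K + 1)) := by
    rw [hq, ← Real.rpow_mul (by positivity), one_div_mul_cancel (by linarith), Real.rpow_one]
  have hl : 0 < a * q := by positivity
  have hla : a * q ≤ a := mul_le_of_le_one_right ha.le hq1
  refine ⟨a * q, hl, nat_mul_gp_lt hl (by linarith) ha haB k ?_⟩
  refine lt_of_lt_of_le ?_ (le_gp hl (by linarith) hp.ne hla)
  have h1 : k * (B - a) = K * a := by rw [hK]; field_simp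
  have h2 : 0 ≤ (a * q) ^ (1 - p) * ((a ^ p - (a * q) ^ p) / p) :=
    mul_nonneg (by positivity) (div_nonneg_of_nonpos
      (sub_nonpos.2 (Real.rpow_le_rpow_of_nonpos hl hla hp.le)) hp.le)
  have h3 : q ^ (1 - p) = q * (1 / (2 * (K + 1))) := by
    rw [sub_eq_add_neg, Real.rpow_add hq0, Real.rpow_one, hqp]
  rw [h1, mul_div_cancel_left₀ _ ha.ne', h3]
  have h4 : K * a * (q * (1 / (2 * (K + 1)))) = a * q / 2 - a * q / (2 * (K + 1)) := by
    field_simp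
    ring
  have h5 : 0 < a * q / (2 * (K + 1)) := by positivity
  linarith

end PShrinkage

section SparseSolutions

variable {m n : ℕ} {A : Matrix (Fin m) (Fin n) ℝ}

lemma URP.eq_zero_of_l0_le (hA : URP A) (hmn : m ≤ n) {h : Fin n → ℝ}
    (hh : A.mulVec h = 0) (hc : l0 h ≤ m) : h = 0 := by
  obtain ⟨S, hS, hSm⟩ := Finset.exists_superset_card_eq (n := m) hc (by simpa using hmn)
  have hout : ∀ j, j ∉ S → h j = 0 := fun j hj => by
    by_contra hne
    exact hj (hS (by simpa using hne))
  have hsum : ∑ j : S, h j • (fun i : Fin m => A i (j : Fin n)) = 0 := by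
    ext i
    rw [← hh, Finset.sum_apply, Matrix.mulVec, dotProduct,
      Finset.sum_coe_sort S (fun j => (h j • fun i : Fin m => A i j) i)]
    refine (Finset.sum_subset (Finset.subset_univ S) fun j _ hj => ?_).trans
      (Finset.sum_congr rfl fun j _ => ?_)
    · simp [hout j hj]
    · simp [mul_comm]
  have := Fintype.linearIndependent_iff.1 (hA S hSm) (fun j => h j) hsum
  ext j
  by_cases hj : j ∈ S
  · exact this ⟨j, hj⟩
  · exact hout j hj

lemma l0_sub_le (v w : Fin n → ℝ) : l0 (v - w) ≤ l0 v + l0 w := by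
  refine (Finset.card_le_card fun i hi => ?_).trans (Finset.card_union_le _ _)
  simp only [Finset.mem_filter, Finset.mem_univ, true_and, Finset.mem_union, Pi.sub_apply]
    at hi ⊢
  by_contra! h
  simp [h.1, h.2] at hi

/-- `z` solves `A z = b`, and no nonzero kernel vector is supported in the support of `z`. -/
def IsBasicSolution (A : Matrix (Fin m) (Fin n) ℝ) (b : Fin m → ℝ) (z : Fin n → ℝ) : Prop :=
  A.mulVec z = b ∧ ∀ h : Fin n → ℝ, A.mulVec h = 0 → (∀ i, z i = 0 → h i = 0) → h = 0

lemma finite_isBasicSolution (b : Fin m → ℝ) : {z | IsBasicSolution A b z}.Finite := by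
  refine Set.Finite.of_injOn (f := fun z : Fin n → ℝ => {i | z i = 0}) (Set.mapsTo_univ _ _)
    (fun z hz y hy hzy => ?_) Set.finite_univ
  have := hz.2 (z - y) (by rw [Matrix.mulVec_sub, hz.1, hy.1, sub_self]) fun i hi => by
    have h2 : y i = 0 := (Set.ext_iff.1 hzy i).1 hi
    simp [hi, h2]
  exact sub_eq_zero.1 this

lemma exists_pos_bounds {F : Set (Fin n → ℝ)} (hF : F.Finite) :
    ∃ a B : ℝ, 0 < a ∧ a ≤ B ∧ ∀ z ∈ F, ∀ i, (z i ≠ 0 → a ≤ |z i|) ∧ |z i| ≤ B := by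
  induction F, hF using Set.Finite.induction_on with
  | empty => exact ⟨1, 1, one_pos, le_rfl, by simp⟩
  | @insert z F _ _ ih =>
    obtain ⟨a, B, ha, haB, h⟩ := ih
    have hz : ∃ c > 0, ∀ i, z i ≠ 0 → c ≤ |z i| := by
      have : ∀ i, ∀ᶠ c in nhdsWithin (0 : ℝ) (Set.Ioi 0), z i ≠ 0 → c ≤ |z i| := fun i => by
        by_cases hi : z i = 0
        · simp [hi]
        · filter_upwards [nhdsWithin_le_nhds (eventually_le_nhds (abs_pos.2 hi))] with c hc _
          exact hc
      obtain ⟨c, hc, hc0⟩ := ((eventually_all.2 this).and self_mem_nhdsWithin).exists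
      exact ⟨c, hc0, hc⟩
    obtain ⟨c, hc, hcz⟩ := hz
    refine ⟨min a c, max B ‖z‖, lt_min ha hc, (min_le_left _ _).trans
      (haB.trans (le_max_left _ _)), ?_⟩
    rintro y (rfl | hy) i
    · exact ⟨fun hi => (min_le_right _ _).trans (hcz i hi),
        (norm_le_pi_norm y i).trans (le_max_right _ _)⟩
    · exact ⟨fun hi => (min_le_left _ _).trans ((h y hy i).1 hi),
        (h y hy i).2.trans (le_max_left _ _)⟩

lemma isBasicSolution_of_isMin {lam p : ℝ} (hl : 0 < lam) (hp : p < 1) {b : Fin m → ℝ}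
    {z : Fin n → ℝ} (hz : A.mulVec z = b)
    (hmin : ∀ w : Fin n → ℝ, A.mulVec w = b → Gp lam p z ≤ Gp lam p w) :
    IsBasicSolution A b z := by
  refine ⟨hz, fun h hh hsupp => ?_⟩
  by_contra hne
  obtain ⟨j, hj⟩ := Function.ne_iff.1 hne
  obtain ⟨a, B, ha, -, hab⟩ := exists_pos_bounds (Set.finite_singleton z)
  set ε := a / (‖h‖ + 1) with hε
  have hε0 : 0 < ε := by positivity
  have hle : ∀ i, |ε * h i| ≤ |z i| := fun i => by
    by_cases hi : z i = 0
    · simp [hi, hsupp i hi]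
    · refine le_trans ?_ ((hab z rfl i).1 hi)
      rw [abs_mul, abs_of_pos hε0, hε, div_mul_eq_mul_div, div_le_iff₀ (by positivity)]
      exact mul_le_mul_of_nonneg_left
        ((norm_le_pi_norm h i).trans (by linarith)) ha.le
  have h1 := hmin (z + ε • h) (by rw [Matrix.mulVec_add, Matrix.mulVec_smul, hz, hh]; simp)
  have h2 := hmin (z - ε • h) (by rw [Matrix.mulVec_sub, Matrix.mulVec_smul, hz, hh]; simp)
  have h3 : ∑ i, (gp lam p (z i + ε * h i) + gp lam p (z i - ε * h i)) <
      ∑ i, 2 * gp lam p (z i) := by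
    refine Finset.sum_lt_sum (fun i _ => ?_) ⟨j, Finset.mem_univ j,
      gp_add_add_gp_sub_lt hl hp (mul_ne_zero hε0.ne' hj) (hle j)⟩
    by_cases hi : h i = 0
    · simp [hi, two_mul]
    · exact (gp_add_add_gp_sub_lt hl hp (mul_ne_zero hε0.ne' hi) (hle i)).le
  rw [Finset.sum_add_distrib, ← Finset.mul_sum] at h3
  simp only [Gp, Pi.add_apply, Pi.sub_apply, Pi.smul_apply, smul_eq_mul] at h1 h2
  linarith

lemma Gp_eq_sum_support {lam p : ℝ} (hl : 0 < lam) (hp : p < 1) (z : Fin n → ℝ) :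
    Gp lam p z = ∑ i ∈ Finset.univ.filter fun i => z i ≠ 0, gp lam p |z i| := by
  rw [Gp, Finset.sum_filter]
  refine Finset.sum_congr rfl fun i _ => ?_
  by_cases hi : z i = 0
  · simp [hi, gp_zero hl hp]
  · simp [hi, gp_abs]

lemma eq_of_isMin_Gp (hmn : m < n) (hA : URP A) {b : Fin m → ℝ} {x : Fin n → ℝ}
    (hx : A.mulVec x = b) (hk : 2 * l0 x ≤ m) {a B : ℝ} (ha : 0 < a)
    (hbd : ∀ z, IsBasicSolution A b z → ∀ i, (z i ≠ 0 → a ≤ |z i|) ∧ |z i| ≤ B)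
    {lam p : ℝ} (hl : 0 < lam) (hp : p < 1)
    (hlt : (l0 x : ℝ) * gp lam p B < (l0 x + 1) * gp lam p a) {z : Fin n → ℝ}
    (hz : A.mulVec z = b)
    (hmin : ∀ w : Fin n → ℝ, A.mulVec w = b → Gp lam p z ≤ Gp lam p w) : z = x := by
  by_contra hne
  have hxb : IsBasicSolution A b x := by
    refine ⟨hx, fun h hh hsupp => hA.eq_zero_of_l0_le hmn.le hh ?_⟩
    have : l0 h ≤ l0 x := Finset.card_le_card fun i hi => by
      simp only [Finset.mem_filter, Finset.mem_univ, true_and] at hi ⊢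
      exact fun h0 => hi (hsupp i h0)
    omega
  have hzb := isBasicSolution_of_isMin hl hp hz hmin
  have hcard : l0 x + 1 ≤ l0 z := by
    by_contra! hc
    refine hne (sub_eq_zero.1 (hA.eq_zero_of_l0_le hmn.le
      (by rw [Matrix.mulVec_sub, hz, hx, sub_self]) ?_))
    have := l0_sub_le z x
    omega
  have hmono := (gp_strictMonoOn hl hp).monotoneOn
  have h1 : Gp lam p x ≤ l0 x * gp lam p B := by
    rw [Gp_eq_sum_support hl hp, l0, ← nsmul_eq_mul]
    refine Finset.sum_le_card_nsmul _ _ _ fun i _ => ?_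
    have hi := (hbd x hxb i).2
    exact hmono (Set.mem_Ici.2 (abs_nonneg _)) (Set.mem_Ici.2 ((abs_nonneg _).trans hi)) hi
  have h2 : l0 z * gp lam p a ≤ Gp lam p z := by
    rw [Gp_eq_sum_support hl hp, l0, ← nsmul_eq_mul]
    refine Finset.card_nsmul_le_sum _ _ _ fun i hi => ?_
    exact hmono ha.le (Set.mem_Ici.2 (abs_nonneg _)) ((hbd z hzb i).1 (Finset.mem_filter.1 hi).2)
  have h3 : 0 < gp lam p a := by
    simpa [gp_zero hl hp] using gp_strictMonoOn hl hp Set.self_mem_Ici ha.le ha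
  have h4 : ((l0 x : ℝ) + 1) * gp lam p a ≤ l0 z * gp lam p a :=
    mul_le_mul_of_nonneg_right (by exact_mod_cast hcard) h3.le
  linarith [hmin x hx]

end SparseSolutions

/-- `G_p` exact recovery. -/
theorem stmt7 {m n : ℕ} (hmn : m < n) (A : Matrix (Fin m) (Fin n) ℝ) (hA : URP A)
    (b : Fin m → ℝ)
    (x : Fin n → ℝ) (hxf : A.mulVec x = b)
    (hxmin : ∀ w : Fin n → ℝ, A.mulVec w = b → l0 x ≤ l0 w)
    (hk : 2 * l0 x ≤ m) :
    (∃ p ∈ Set.Ioo (0 : ℝ) 1, ∃ lam : ℝ, 0 < lam ∧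
      ∀ xstar : Fin n → ℝ, A.mulVec xstar = b →
        (∀ w : Fin n → ℝ, A.mulVec w = b → Gp lam p xstar ≤ Gp lam p w) →
        xstar = x) ∧
    (∀ p : ℝ, p < 0 → ∃ lam : ℝ, 0 < lam ∧
      ∀ xstar : Fin n → ℝ, A.mulVec xstar = b →
        (∀ w : Fin n → ℝ, A.mulVec w = b → Gp lam p xstar ≤ Gp lam p w) →
        xstar = x) := by
  obtain ⟨a, B, ha, haB, hbd⟩ := exists_pos_bounds (finite_isBasicSolution (A := A) b)
  refine ⟨?_, fun p hp => ?_⟩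
  · obtain ⟨p, hp, lam, hl, hlt⟩ := exists_nat_mul_gp_lt_of_pos ha haB (l0 x)
    exact ⟨p, hp, lam, hl, fun z hz hmin =>
      eq_of_isMin_Gp hmn hA hxf hk ha hbd hl hp.2 hlt hz hmin⟩
  · obtain ⟨lam, hl, hlt⟩ := exists_nat_mul_gp_lt_of_neg ha haB (l0 x) hp
    exact ⟨lam, hl, fun z hz hmin =>
      eq_of_isMin_Gp hmn hA hxf hk ha hbd hl (by linarith) hlt hz hmin⟩

end
end

section
/- Let λ > 0 and p < 1, let A ∈ ℝ^{m×n} have spectral norm ‖A‖ < 1, and let b ∈ ℝᵐ. Define the IPS sequence x^{k+1} = S_p(x^k − Aᵀ(A x^k − b)), where x⁰ is arbitrary if 0 ≤ p < 1, while if p < 0 assume in addition λ² > p·‖b‖₂²/(p − 2) and x⁰ = 0. Then the sequence {x^k} converges to a fixed point x̄ of the IPS iteration map, i.e., x̄ = S_p(x̄ − Aᵀ(A x̄ − b)) (equivalently, a first-order stationary point of F_p). -/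
open MeasureTheory Filter
open scoped BigOperators

noncomputable section

open scoped Topology

/-- Division of a real-analytic germ by a linear functional. -/
theorem AnalyticAt.exists_eq_add_functional_mul {E : Type*} [NormedAddCommGroup E]
    [NormedSpace ℝ E] {h : E → ℝ} (hh : AnalyticAt ℝ h 0) (l : E →L[ℝ] ℝ) (e : E) :
    ∃ q : E → ℝ, AnalyticAt ℝ q 0 ∧ ∀ᶠ x in 𝓝 0, h x = h (x - l x • e) + l x * q x := by
  obtain ⟨p, r, hp⟩ := hh
  set π : E →L[ℝ] E := ContinuousLinearMap.id ℝ E - l.smulRight e with hπ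
  have hπx : ∀ x, π x = x - l x • e := fun x => by simp [hπ]
  set c : ℝ := 1 + ‖π‖ with hc
  have hc1 : 1 ≤ c := by simp [hc]
  let q : FormalMultilinearSeries ℝ E ℝ := fun n =>
    ∑ i : Fin (n + 1), ((p (n + 1)).curryMid i e).compContinuousLinearMap
      (fun j : Fin n => if j.castSucc < i then π else ContinuousLinearMap.id ℝ E)
  have hqn : ∀ n, ‖q n‖ ≤ (n + 1) * (‖p (n + 1)‖ * ‖e‖ * c ^ n) := by
    intro n
    refine (norm_sum_le _ _).trans ?_
    have : ∀ i ∈ (Finset.univ : Finset (Fin (n + 1))),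
        ‖((p (n + 1)).curryMid i e).compContinuousLinearMap
      (fun j : Fin n => if j.castSucc < i then π else ContinuousLinearMap.id ℝ E)‖
        ≤ ‖p (n + 1)‖ * ‖e‖ * c ^ n := by
      intro i _
      refine (ContinuousMultilinearMap.norm_compContinuousLinearMap_le _ _).trans ?_
      have h1 : ‖(p (n + 1)).curryMid i e‖ ≤ ‖p (n + 1)‖ * ‖e‖ := by
        refine (ContinuousLinearMap.le_opNorm _ _).trans ?_
        rw [ContinuousMultilinearMap.norm_curryMid]
      have h2 : ∏ j : Fin n, ‖(if j.castSucc < i then π else ContinuousLinearMap.id ℝ E)‖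
          ≤ c ^ n := by
        refine (Finset.prod_le_prod (g := fun _ => c) (fun _ _ => norm_nonneg _)
          fun j _ => ?_).trans (by simp)
        split_ifs
        · simp [hc]
        · exact ContinuousLinearMap.norm_id_le.trans hc1
      gcongr
    refine (Finset.sum_le_card_nsmul _ _ _ this).trans ?_
    simp
  have hqx : ∀ n x, p (n + 1) (fun _ => x) - p (n + 1) (fun _ => π x)
      = l x * q n (fun _ => x) := by
    intro n x
    let z : ℕ → Fin (n + 1) → E := fun k j => if (j : ℕ) < k then π x else x
    have h0 : z 0 = fun _ => x := by ext j; simp [z]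
    have h1 : z (n + 1) = fun _ => π x := by
      ext j; simp only [z, j.is_lt, if_true]
    have h2 : p (n + 1) (z 0) - p (n + 1) (z (n + 1))
        = ∑ k ∈ Finset.range (n + 1), (p (n + 1) (z k) - p (n + 1) (z (k + 1))) := by
      rw [Finset.sum_range_sub']
    rw [← h0, ← h1, h2, Finset.sum_range]
    simp only [q, _root_.sum_apply, Finset.mul_sum]
    refine Finset.sum_congr rfl fun i _ => ?_
    simp only [ContinuousMultilinearMap.compContinuousLinearMap_apply,
      ContinuousMultilinearMap.curryMid_apply]
    have h3 : z i = Function.update (z i) i x := by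
      simp [z]
    have h4 : z (i + 1) = Function.update (z i) i (π x) := by
      ext j
      by_cases hj : j = i
      · subst hj; simp [z]
      · have : (j : ℕ) ≠ i := fun h => hj (Fin.ext h)
        simp only [z, Function.update_of_ne hj]
        have : (j : ℕ) < i + 1 ↔ (j : ℕ) < i := by omega
        simp [this]
    have h5 : i.insertNth e (fun j : Fin n =>
        (if j.castSucc < i then π else ContinuousLinearMap.id ℝ E) x)
        = Function.update (z i) i e := by
      ext j
      refine Fin.succAboveCases i ?_ (fun j => ?_) j
      · simp
      · simp only [Fin.insertNth_apply_succAbove, Function.update_of_ne (Fin.succAbove_ne i j), z]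
        by_cases hj : j.castSucc < i
        · have h6 : (j : ℕ) < i := hj
          simp [hj, Fin.succAbove_of_castSucc_lt _ _ hj, h6]
        · have h6 : ¬ ((j : ℕ) + 1 < i) := by
            have : ¬ ((j : ℕ) < i) := hj
            omega
          simp [hj, Fin.succAbove_of_le_castSucc _ _ (not_lt.1 hj), h6]
    rw [h4]
    conv_lhs => rw [h3]
    rw [Function.update_idem, ← ContinuousMultilinearMap.map_update_sub]
    rw [hπx, sub_sub_cancel, ContinuousMultilinearMap.map_update_smul, smul_eq_mul, ← h5]
  obtain ⟨s, hs0, hsr⟩ := ENNReal.lt_iff_exists_nnreal_btwn.1 (hp.r_pos)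
  have hs0 : 0 < s := by exact_mod_cast hs0
  obtain ⟨C, hC, hpC⟩ := p.norm_mul_pow_le_of_lt_radius (hsr.trans_le hp.r_le)
  set ρ : NNReal := s / (2 * Real.toNNReal c) with hρ
  have hρ0 : 0 < ρ := by
    exact div_pos hs0 (mul_pos two_pos (Real.toNNReal_pos.2 (by linarith)))
  have hrad : (ρ : ENNReal) ≤ q.radius := by
    refine q.le_radius_of_bound (‖e‖ * C / s) fun n => ?_
    have h1 : (ρ : ℝ) = s / (2 * c) := by
      simp [hρ, Real.coe_toNNReal c (by linarith)]
    have h2 : (n + 1 : ℝ) ≤ 2 ^ n := by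
      have := Nat.lt_two_pow_self (n := n)
      exact_mod_cast this
    have h3 := hpC (n + 1)
    have hs' : (0 : ℝ) < s := hs0
    calc ‖q n‖ * (ρ : ℝ) ^ n ≤ ((n + 1) * (‖p (n + 1)‖ * ‖e‖ * c ^ n)) * (s / (2 * c)) ^ n := by
          rw [h1]; gcongr; exact hqn n
      _ = (n + 1) / 2 ^ n * (‖e‖ * (‖p (n + 1)‖ * s ^ (n + 1)) / s) := by
          have : c ≠ 0 := by linarith
          rw [div_pow, mul_pow, pow_succ]
          field_simp
      _ ≤ 1 * (‖e‖ * (‖p (n + 1)‖ * s ^ (n + 1)) / s) := by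
          gcongr
          rw [div_le_one (by positivity)]; exact h2
      _ ≤ ‖e‖ * C / s := by rw [one_mul]; gcongr
  have hqp : 0 < q.radius := lt_of_lt_of_le (by exact_mod_cast hρ0) hrad
  have hqs := q.hasFPowerSeriesOnBall hqp
  refine ⟨q.sum, hqs.analyticAt, ?_⟩
  have hx1 : ∀ᶠ x : E in 𝓝 0, x ∈ Metric.eball (0 : E) r := Metric.eball_mem_nhds _ hp.r_pos
  have hx2 : ∀ᶠ x : E in 𝓝 0, π x ∈ Metric.eball (0 : E) r := by
    have : Tendsto π (𝓝 0) (𝓝 0) := by simpa using π.continuous.tendsto 0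
    exact this (Metric.eball_mem_nhds _ hp.r_pos)
  have hx3 : ∀ᶠ x : E in 𝓝 0, x ∈ Metric.eball (0 : E) q.radius := Metric.eball_mem_nhds _ hqp
  filter_upwards [hx1, hx2, hx3] with x h1 h2 h3
  have e1 := hp.hasSum h1
  have e2 := hp.hasSum h2
  have e3 := (hqs.hasSum h3).mul_left (l x)
  simp only [zero_add] at e1 e2 e3
  have e4 := e1.sub e2
  rw [← hasSum_nat_add_iff' 1] at e4
  simp only [hqx] at e4
  have e5 := e4.unique e3
  have e6 : p 0 (fun _ => x) = p 0 (fun _ => π x) := congrArg _ (Subsingleton.elim _ _)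
  simp only [Finset.range_one, Finset.sum_singleton, e6, sub_self, sub_zero] at e5
  rw [← hπx]
  linarith

/-- The partial derivative in the last variable. -/
def wderiv {E : Type*} (g : E × ℝ → ℝ) : E × ℝ → ℝ := fun p => deriv (fun t => g (p.1, t)) p.2

theorem wderiv_iterate_apply {E : Type*} (k : ℕ) (g : E × ℝ → ℝ) (u : E) (w : ℝ) :
    wderiv^[k] g (u, w) = deriv^[k] (fun t => g (u, t)) w := by
  induction k generalizing g with
  | zero => rfl
  | succ k ih => simp only [Function.iterate_succ, Function.comp_apply, ih]; rfl

section

variable {E : Type*} [NormedAddCommGroup E] [NormedSpace ℝ E]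

theorem wderiv_eq_fderiv {g : E × ℝ → ℝ} {p : E × ℝ} (hg : DifferentiableAt ℝ g p) :
    wderiv g p = fderiv ℝ g p (0, 1) := by
  have h1 : HasDerivAt (fun t : ℝ => (p.1, t)) ((0 : E), (1 : ℝ)) p.2 :=
    (hasDerivAt_const _ _).prodMk (hasDerivAt_id _)
  have h2 : HasFDerivAt g (fderiv ℝ g p) (p.1, p.2) := hg.hasFDerivAt
  exact (h2.comp_hasDerivAt p.2 h1).deriv

theorem AnalyticAt.wderiv {g : E × ℝ → ℝ} {p : E × ℝ} (hg : AnalyticAt ℝ g p) :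
    AnalyticAt ℝ (wderiv g) p := by
  have h1 : AnalyticAt ℝ (fun q => fderiv ℝ g q (0, 1)) p :=
    ((ContinuousLinearMap.apply ℝ ℝ ((0 : E), (1 : ℝ))).analyticAt _).comp hg.fderiv
  refine h1.congr ?_
  filter_upwards [hg.eventually_analyticAt] with q hq
  exact (wderiv_eq_fderiv hq.differentiableAt).symm

theorem AnalyticAt.wderiv_iterate {g : E × ℝ → ℝ} {p : E × ℝ} (hg : AnalyticAt ℝ g p) (k : ℕ) :
    AnalyticAt ℝ (_root_.wderiv^[k] g) p := by
  induction k with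
  | zero => exact hg
  | succ k ih => rw [Function.iterate_succ_apply']; exact ih.wderiv

/-- Repeated division by the last variable. -/
theorem AnalyticAt.exists_taylor {g : E × ℝ → ℝ} (hg : AnalyticAt ℝ g 0) (d : ℕ) :
    ∃ (a : ℕ → E → ℝ) (e : E × ℝ → ℝ), (∀ j, AnalyticAt ℝ (a j) 0) ∧ AnalyticAt ℝ e 0 ∧
      ∀ᶠ p : E × ℝ in 𝓝 0, g p = ∑ j ∈ Finset.range d, a j p.1 * p.2 ^ j + p.2 ^ d * e p := by
  induction d with
  | zero => exact ⟨fun _ _ => 0, g, fun _ => analyticAt_const, hg, by simp⟩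
  | succ d ih =>
    obtain ⟨a, e, ha, he, h⟩ := ih
    obtain ⟨q, hq, hqe⟩ := he.exists_eq_add_functional_mul (ContinuousLinearMap.snd ℝ E ℝ) (0, 1)
    refine ⟨fun j => if j = d then fun u => e (u, 0) else a j, q, fun j => ?_, hq, ?_⟩
    · dsimp only
      split_ifs
      · exact AnalyticAt.comp (f := fun u : E => (u, (0 : ℝ))) (x := 0) he
          (analyticAt_id.prod analyticAt_const)
      · exact ha j
    · filter_upwards [h, hqe] with p h1 h2
      have h3 : p - p.2 • ((0 : E), (1 : ℝ)) = (p.1, 0) := by ext <;> simp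
      simp only [ContinuousLinearMap.coe_snd', h3] at h2
      have h4 : ∑ j ∈ Finset.range d, (if j = d then fun u => e (u, 0) else a j) p.1 * p.2 ^ j
          = ∑ j ∈ Finset.range d, a j p.1 * p.2 ^ j :=
        Finset.sum_congr rfl fun j hj => by rw [if_neg (Finset.mem_range.1 hj).ne]
      rw [h1, Finset.sum_range_succ, if_pos rfl, h2, h4]
      ring

end

theorem AnalyticAt.exists_deriv_iterate_pow_mul {e : ℝ → ℝ} (he : AnalyticAt ℝ e 0) (m k : ℕ)
    (hk : k ≤ m) : ∃ e' : ℝ → ℝ, AnalyticAt ℝ e' 0 ∧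
      deriv^[k] (fun t => t ^ m * e t) =ᶠ[𝓝 0] (fun t => t ^ (m - k) * e' t) ∧
      e' 0 = m.descFactorial k * e 0 := by
  induction k with
  | zero => exact ⟨e, he, by simp, by simp⟩
  | succ k ih =>
    obtain ⟨e', he', h, h0⟩ := ih (by omega)
    obtain ⟨r, hr⟩ : ∃ r, m - k = r + 1 := ⟨m - k - 1, by omega⟩
    have hr' : m - (k + 1) = r := by omega
    refine ⟨fun t => (r + 1) * e' t + t * deriv e' t, ?_, ?_, ?_⟩
    · exact (analyticAt_const.mul he').add (analyticAt_id.mul he'.deriv)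
    · rw [Function.iterate_succ_apply']
      refine h.deriv.trans ?_
      filter_upwards [he'.eventually_analyticAt] with t ht
      have := ((hasDerivAt_pow (m - k) t).mul ht.differentiableAt.hasDerivAt).deriv
      refine this.trans ?_
      rw [hr, hr']
      push_cast
      ring
    · simp only [zero_mul, add_zero, h0, Nat.descFactorial_succ, hr]
      push_cast
      ring

theorem deriv_iterate_taylor_zero {d : ℕ} {f e : ℝ → ℝ} {a : ℕ → ℝ} (he : AnalyticAt ℝ e 0)
    (h : ∀ᶠ t in 𝓝 0, f t = ∑ j ∈ Finset.range d, a j * t ^ j + t ^ d * e t) :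
    (∀ k < d, deriv^[k] f 0 = k.factorial * a k) ∧ deriv^[d] f 0 = d.factorial * e 0 := by
  have key : ∀ k ≤ d, deriv^[k] f 0 = ∑ j ∈ Finset.range d, deriv^[k] (fun t => t ^ j * a j) 0
      + deriv^[k] (fun t => t ^ d * e t) 0 := by
    intro k _
    simp only [← iteratedDeriv_eq_iterate]
    have h' : f =ᶠ[𝓝 0] (fun t => ∑ j ∈ Finset.range d, t ^ j * a j) + fun t => t ^ d * e t := by
      filter_upwards [h] with t ht
      rw [ht]; simp [mul_comm]
    rw [h'.iteratedDeriv_eq, iteratedDeriv_add, iteratedDeriv_fun_sum]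
    · intro j _; fun_prop
    · fun_prop
    · have : AnalyticAt ℝ (fun t => t ^ d * e t) 0 := (analyticAt_id.pow d).mul he
      exact this.contDiffAt
  have hlt : ∀ (e : ℝ → ℝ), AnalyticAt ℝ e 0 → ∀ k m, k < m →
      deriv^[k] (fun t => t ^ m * e t) 0 = 0 := by
    intro e he k m hkm
    obtain ⟨e', -, h1, -⟩ := he.exists_deriv_iterate_pow_mul m k hkm.le
    rw [h1.eq_of_nhds]
    simp [Nat.sub_ne_zero_of_lt hkm]
  have heq : ∀ (e : ℝ → ℝ), AnalyticAt ℝ e 0 → ∀ m,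
      deriv^[m] (fun t => t ^ m * e t) 0 = m.factorial * e 0 := by
    intro e he m
    obtain ⟨e', -, h1, h2⟩ := he.exists_deriv_iterate_pow_mul m m le_rfl
    rw [h1.eq_of_nhds, h2]
    simp [Nat.descFactorial_self]
  have hgt : ∀ k j (c : ℝ), j < k → deriv^[k] (fun t => t ^ j * c) 0 = 0 := by
    intro k j c hjk
    obtain ⟨r, rfl⟩ := Nat.exists_eq_add_of_lt hjk
    rw [← iteratedDeriv_eq_iterate]
    have : (fun t : ℝ => t ^ j * c) = fun t => c * t ^ j := by ext; ring
    rw [this, iteratedDeriv_const_mul_field, iteratedDeriv_eq_iterate, iter_deriv_pow]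
    have : ∏ i ∈ Finset.range (j + r + 1), ((j : ℝ) - i) = 0 :=
      Finset.prod_eq_zero (Finset.mem_range.2 hjk) (sub_self _)
    simp [this]
  constructor
  · intro k hk
    rw [key k hk.le, hlt e he k d hk, Finset.sum_eq_single_of_mem k (Finset.mem_range.2 hk),
      heq (fun _ => a k) analyticAt_const k, add_zero]
    intro j _ hjk
    rcases lt_or_gt_of_ne hjk with h1 | h1
    · exact hgt _ _ _ h1
    · exact hlt (fun _ => a j) analyticAt_const _ _ h1
  · rw [key d le_rfl, heq e he, Finset.sum_eq_zero, zero_add]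
    intro j hj
    exact hgt _ _ _ (Finset.mem_range.1 hj)

section

variable {E : Type*} [NormedAddCommGroup E] [NormedSpace ℝ E]

theorem wderiv_iterate_taylor {g e : E × ℝ → ℝ} {a : ℕ → E → ℝ} {d : ℕ} (he : AnalyticAt ℝ e 0)
    (h : ∀ᶠ p : E × ℝ in 𝓝 0, g p = ∑ j ∈ Finset.range d, a j p.1 * p.2 ^ j + p.2 ^ d * e p) :
    (∀ k < d, ∀ᶠ u in 𝓝 (0 : E), wderiv^[k] g (u, 0) = k.factorial * a k u) ∧
      wderiv^[d] g 0 = d.factorial * e 0 := by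
  have hu : ∀ᶠ u in 𝓝 (0 : E), (∀ k < d, wderiv^[k] g (u, 0) = k.factorial * a k u) ∧
      wderiv^[d] g (u, 0) = d.factorial * e (u, 0) := by
    have hc : Tendsto (fun u : E => (u, (0 : ℝ))) (𝓝 0) (𝓝 0) := by
      have : Continuous (fun u : E => (u, (0 : ℝ))) := by fun_prop
      exact this.tendsto' _ _ rfl
    filter_upwards [hc.eventually h.eventually_nhds, hc.eventually he.eventually_analyticAt]
      with u h1 h2
    simp only [wderiv_iterate_apply]
    have hs : Tendsto (fun t : ℝ => (u, t)) (𝓝 0) (𝓝 (u, 0)) :=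
      Continuous.tendsto (by fun_prop) 0
    have hes : AnalyticAt ℝ (fun t : ℝ => e (u, t)) 0 :=
      AnalyticAt.comp (f := fun t : ℝ => (u, t)) (x := 0) h2 (analyticAt_const.prod analyticAt_id)
    exact deriv_iterate_taylor_zero (f := fun t => g (u, t)) (e := fun t => e (u, t))
      (a := fun j => a j u) hes (hs.eventually h1)
  exact ⟨fun k hk => hu.mono fun u h => h.1 k hk, hu.self_of_nhds.2⟩

end

theorem wderiv_iterate_comp_shift {E : Type*} (g : E × ℝ → ℝ) (ζ : E → ℝ) (k : ℕ) (u : E) (w : ℝ) :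
    wderiv^[k] (fun p : E × ℝ => g (p.1, p.2 + ζ p.1)) (u, w) = wderiv^[k] g (u, w + ζ u) := by
  simp only [wderiv_iterate_apply, ← iteratedDeriv_eq_iterate]
  rw [iteratedDeriv_comp_add_const (f := fun t => g (u, t))]

theorem AnalyticAt.exists_wderiv_zero {E : Type*} [NormedAddCommGroup E] [NormedSpace ℝ E]
    [CompleteSpace E] {g : E × ℝ → ℝ} (hg : AnalyticAt ℝ g 0) {d : ℕ}
    (h1 : _root_.wderiv^[d + 1] g 0 ≠ 0) (h0 : _root_.wderiv^[d] g 0 = 0) :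
    ∃ ζ : E → ℝ, AnalyticAt ℝ ζ 0 ∧ ζ 0 = 0 ∧ ∀ᶠ u in 𝓝 0, _root_.wderiv^[d] g (u, ζ u) = 0 := by
  set f := _root_.wderiv^[d] g
  have hf : AnalyticAt ℝ f (0, 0) := hg.wderiv_iterate d
  have hf' : fderiv ℝ f (0, 0) (0, 1) ≠ 0 := by
    rw [← wderiv_eq_fderiv hf.differentiableAt]
    rwa [Function.iterate_succ_apply'] at h1
  have hinv : (fderiv ℝ f (0, 0) ∘L .inr ℝ E ℝ).IsInvertible := by
    refine ⟨ContinuousLinearEquiv.unitsEquivAut ℝ (Units.mk0 _ hf'), ?_⟩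
    ext
    simp
  have hc : ContDiffAt ℝ ⊤ f (0, 0) := hf.contDiffAt
  refine ⟨hc.implicitFunction (by simp) hinv, ?_, ?_, ?_⟩
  · exact (hc.contDiffAt_implicitFunction (by simp) hinv).analyticAt
  · exact hc.implicitFunction_apply_self (by simp) hinv
  · have := hc.eventually_apply_implicitFunction (by simp) hinv
    filter_upwards [this] with u hu
    rw [hu]; exact h0

theorem AnalyticAt.exists_deriv_iterate_ne_zero {f : ℝ → ℝ} (hf : AnalyticAt ℝ f 0)
    (h : ¬ f =ᶠ[𝓝 0] 0) : ∃ k, deriv^[k] f 0 ≠ 0 := by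
  obtain ⟨k, e, he, he0, hfe⟩ := hf.exists_eventuallyEq_pow_smul_nonzero_iff.2 h
  refine ⟨k, ?_⟩
  obtain ⟨e', -, h1, h2⟩ := he.exists_deriv_iterate_pow_mul k k le_rfl
  have h3 : f =ᶠ[𝓝 0] fun t => t ^ k * e t := by
    filter_upwards [hfe] with t ht; rw [ht]; simp
  rw [← iteratedDeriv_eq_iterate, h3.iteratedDeriv_eq, iteratedDeriv_eq_iterate, h1.eq_of_nhds, h2]
  simp [Nat.descFactorial_self, he0, Nat.factorial_ne_zero]

section

variable {E : Type*} [NormedAddCommGroup E] [NormedSpace ℝ E]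

/-- Germs of analytic functions form a domain. -/
theorem AnalyticAt.eventuallyEq_zero_or_of_mul {g h : E → ℝ} {x : E} (hg : AnalyticAt ℝ g x)
    (hh : AnalyticAt ℝ h x) (hgh : ∀ᶠ u in 𝓝 x, g u * h u = 0) :
    g =ᶠ[𝓝 x] 0 ∨ h =ᶠ[𝓝 x] 0 := by
  obtain ⟨r, hr, hB⟩ := Metric.eventually_nhds_iff_ball.1
    (hgh.and (hg.eventually_analyticAt.and hh.eventually_analyticAt))
  by_cases hz : ∀ u ∈ Metric.ball x r, g u = 0
  · left; filter_upwards [Metric.ball_mem_nhds x hr] with u hu using hz u hu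
  · push Not at hz
    obtain ⟨u, hu, hgu⟩ := hz
    right
    have h1 : h =ᶠ[𝓝 u] 0 := by
      filter_upwards [(hB u hu).2.1.continuousAt.eventually_ne hgu,
        Metric.isOpen_ball.mem_nhds hu] with v hv hvB
      exact (mul_eq_zero.1 (hB v hvB).1).resolve_left hv
    have hA : AnalyticOnNhd ℝ h (Metric.ball x r) := fun v hv => (hB v hv).2.2
    have := hA.eqOn_zero_of_preconnected_of_eventuallyEq_zero
      (convex_ball x r).isPreconnected hu h1
    filter_upwards [Metric.ball_mem_nhds x hr] with v hv using this hv

theorem AnalyticAt.mul_left_cancel {l g h : E → ℝ} {x : E} (hl : AnalyticAt ℝ l x)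
    (hg : AnalyticAt ℝ g x) (hh : AnalyticAt ℝ h x) (hl0 : ¬ l =ᶠ[𝓝 x] 0)
    (hgh : ∀ᶠ u in 𝓝 x, l u * g u = l u * h u) : g =ᶠ[𝓝 x] h := by
  rcases hl.eventuallyEq_zero_or_of_mul (hg.sub hh) (hgh.mono fun u hu => by
    simp [mul_sub, hu]) with h1 | h1
  · exact absurd h1 hl0
  · filter_upwards [h1] with u hu
    exact sub_eq_zero.1 hu

theorem AnalyticAt.prod_not_eventuallyEq_zero {ι : Type*} {s : Finset ι} {f : ι → E → ℝ} {x : E}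
    (hf : ∀ i ∈ s, AnalyticAt ℝ (f i) x) (h0 : ∀ i ∈ s, ¬ f i =ᶠ[𝓝 x] 0) :
    ¬ (fun u => ∏ i ∈ s, f i u) =ᶠ[𝓝 x] 0 := by
  classical
  induction s using Finset.induction_on with
  | empty =>
    intro h
    simpa using h.self_of_nhds
  | insert i s his ih =>
    intro h
    rcases (hf i (by simp)).eventuallyEq_zero_or_of_mul (h := fun u => ∏ i ∈ s, f i u)
      (Finset.analyticAt_fun_prod s fun j hj => hf j (by simp [hj]))
      (h.mono fun u hu => (Finset.prod_insert his).symm.trans hu) with h1 | h1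
    · exact h0 i (by simp) h1
    · exact ih (fun j hj => hf j (by simp [hj])) (fun j hj => h0 j (by simp [hj])) h1

end

/-- A monomial times a unit, as a germ at the origin. -/
def IsMono {n : ℕ} (f : (Fin n → ℝ) → ℝ) : Prop :=
  ∃ (α : Fin n → ℕ) (e : (Fin n → ℝ) → ℝ), AnalyticAt ℝ e 0 ∧ e 0 ≠ 0 ∧
    f =ᶠ[𝓝 0] fun u => (∏ j, u j ^ α j) * e u

section

variable {n : ℕ}

theorem analyticAt_coord (i : Fin n) (x : Fin n → ℝ) :
    AnalyticAt ℝ (fun u : Fin n → ℝ => u i) x :=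
  (ContinuousLinearMap.proj (R := ℝ) (φ := fun _ : Fin n => ℝ) i).analyticAt x

theorem analyticAt_monomial (α : Fin n → ℕ) (x : Fin n → ℝ) :
    AnalyticAt ℝ (fun u : Fin n → ℝ => ∏ j, u j ^ α j) x :=
  Finset.analyticAt_fun_prod _ fun j _ => (analyticAt_coord j x).pow _

theorem coord_not_eventuallyEq_zero (i : Fin n) :
    ¬ (fun u : Fin n → ℝ => u i) =ᶠ[𝓝 0] 0 := by
  intro h
  have hs : Tendsto (fun t : ℝ => (fun _ : Fin n => t)) (𝓝 0) (𝓝 0) :=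
    (Continuous.tendsto' (by fun_prop) _ _ rfl)
  have h1 : ∀ᶠ t : ℝ in 𝓝 0, t = 0 := hs.eventually h
  obtain ⟨r, hr, h2⟩ := Metric.eventually_nhds_iff_ball.1 h1
  have := h2 (r / 2) (by simp [abs_of_pos hr, hr])
  linarith

theorem IsMono.congr {f g : (Fin n → ℝ) → ℝ} (hf : IsMono f) (h : f =ᶠ[𝓝 0] g) : IsMono g := by
  obtain ⟨α, e, he, he0, h1⟩ := hf
  exact ⟨α, e, he, he0, h.symm.trans h1⟩

theorem IsMono.mul {f g : (Fin n → ℝ) → ℝ} (hf : IsMono f) (hg : IsMono g) :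
    IsMono fun u => f u * g u := by
  obtain ⟨α, e, he, he0, h1⟩ := hf
  obtain ⟨β, e', he', he0', h1'⟩ := hg
  refine ⟨α + β, fun u => e u * e' u, he.mul he', mul_ne_zero he0 he0', ?_⟩
  filter_upwards [h1, h1'] with u h2 h3
  rw [h2, h3]
  simp only [Pi.add_apply, pow_add, Finset.prod_mul_distrib]
  ring

theorem IsMono.of_unit {f : (Fin n → ℝ) → ℝ} (hf : AnalyticAt ℝ f 0) (h0 : f 0 ≠ 0) : IsMono f :=
  ⟨0, f, hf, h0, by simp⟩

theorem IsMono.monomial (α : Fin n → ℕ) : IsMono fun u : Fin n → ℝ => ∏ j, u j ^ α j :=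
  ⟨α, fun _ => 1, analyticAt_const, one_ne_zero, by simp⟩

theorem prod_pow_add_single (α : Fin n → ℕ) (i : Fin n) (u : Fin n → ℝ) :
    ∏ j, u j ^ ((α + Pi.single i 1 : Fin n → ℕ) j) = u i * ∏ j, u j ^ α j := by
  simp only [Pi.add_apply, pow_add, Finset.prod_mul_distrib]
  rw [Finset.prod_eq_single i (f := fun j => u j ^ (Pi.single i 1 : Fin n → ℕ) j)]
  · simp [mul_comm]
  · intro j _ hj; simp [hj]
  · simp

theorem IsMono.coord_mul {g : (Fin n → ℝ) → ℝ} (i : Fin n) (hg : IsMono g) :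
    IsMono fun u => u i * g u := by
  refine IsMono.mul ?_ hg
  refine (IsMono.monomial (Pi.single i 1)).congr (Eventually.of_forall fun u => ?_)
  have := prod_pow_add_single 0 i u
  simpa using this

/-- A factor of a monomial is a monomial. -/
theorem IsMono.of_mul {g h : (Fin n → ℝ) → ℝ} (hg : AnalyticAt ℝ g 0) (hh : AnalyticAt ℝ h 0)
    (hgh : IsMono fun u => g u * h u) : IsMono g := by
  obtain ⟨α, e, he, he0, h1⟩ := hgh
  obtain ⟨N, hN⟩ : ∃ N, ∑ j, α j = N := ⟨_, rfl⟩
  induction N generalizing α g h with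
  | zero =>
    have hα : α = 0 := by
      ext j
      simpa using Finset.sum_eq_zero_iff.1 hN j (Finset.mem_univ j)
    refine IsMono.of_unit hg ?_
    have := h1.self_of_nhds
    simp only [hα, Pi.zero_apply, pow_zero, Finset.prod_const_one, one_mul] at this
    intro h0
    rw [h0, zero_mul] at this
    exact he0 this.symm
  | succ N ih =>
    obtain ⟨i, hi⟩ : ∃ i, α i ≠ 0 := by
      by_contra! hc
      simp [hc] at hN
    set β : Fin n → ℕ := α - Pi.single i 1 with hβ
    have hαβ : α = β + Pi.single i 1 := by
      ext j
      by_cases hj : j = i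
      · subst hj; simp [hβ]; omega
      · simp [hβ, hj]
    have hβN : ∑ j, β j = N := by
      rw [hαβ] at hN
      simp only [Pi.add_apply, Finset.sum_add_distrib, Finset.sum_pi_single', Finset.mem_univ,
        if_true] at hN
      omega
    have hdiv : ∀ f : (Fin n → ℝ) → ℝ, AnalyticAt ℝ f 0 →
        (∀ᶠ u : Fin n → ℝ in 𝓝 0, f (u - u i • Pi.single i 1) = 0) →
        ∃ q, AnalyticAt ℝ q 0 ∧ ∀ᶠ u : Fin n → ℝ in 𝓝 0, f u = u i * q u := by
      intro f hf hf0
      obtain ⟨q, hq, hqe⟩ := hf.exists_eq_add_functional_mul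
        (ContinuousLinearMap.proj (R := ℝ) (φ := fun _ : Fin n => ℝ) i) (Pi.single i 1)
      refine ⟨q, hq, ?_⟩
      filter_upwards [hqe, hf0] with u h2 h3
      simp only [ContinuousLinearMap.proj_apply] at h2
      rw [h2, h3, zero_add]
    have hcont : Continuous fun u : Fin n → ℝ => u - u i • (Pi.single i 1 : Fin n → ℝ) := by
      fun_prop
    have hπ : Tendsto (fun u : Fin n → ℝ => u - u i • (Pi.single i 1 : Fin n → ℝ))
        (𝓝 0) (𝓝 0) := hcont.tendsto' _ _ (by simp)
    have hπa : AnalyticAt ℝ (fun u : Fin n → ℝ => u - u i • (Pi.single i 1 : Fin n → ℝ)) 0 :=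
      analyticAt_id.sub ((analyticAt_coord i 0).smul analyticAt_const)
    have hπ0 : (fun u : Fin n → ℝ => u - u i • (Pi.single i 1 : Fin n → ℝ)) 0 = 0 := by simp
    have hz : ∀ᶠ u : Fin n → ℝ in 𝓝 0,
        g (u - u i • Pi.single i 1) * h (u - u i • Pi.single i 1) = 0 := by
      filter_upwards [hπ.eventually h1] with u hu
      rw [hu, hαβ, prod_pow_add_single]
      simp
    have hcancel : ∀ q r : (Fin n → ℝ) → ℝ, AnalyticAt ℝ q 0 → AnalyticAt ℝ r 0 →
        (∀ᶠ u : Fin n → ℝ in 𝓝 0, g u * h u = u i * (q u * r u)) →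
        (fun u => q u * r u) =ᶠ[𝓝 0] fun u => (∏ j, u j ^ β j) * e u := by
      intro q r hq hr hqr
      refine (analyticAt_coord i 0).mul_left_cancel (hq.mul hr) ((analyticAt_monomial β 0).mul he)
        (coord_not_eventuallyEq_zero i) ?_
      filter_upwards [hqr, h1] with u h2 h3
      rw [← h2, h3, hαβ, prod_pow_add_single]
      ring
    have hg' : AnalyticAt ℝ (fun u : Fin n → ℝ => g (u - u i • Pi.single i 1)) 0 :=
      AnalyticAt.comp_of_eq hg hπa hπ0
    have hh' : AnalyticAt ℝ (fun u : Fin n → ℝ => h (u - u i • Pi.single i 1)) 0 :=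
      AnalyticAt.comp_of_eq hh hπa hπ0
    rcases hg'.eventuallyEq_zero_or_of_mul hh' hz with h2 | h2
    · obtain ⟨q, hq, hqe⟩ := hdiv g hg h2
      refine (IsMono.coord_mul i (ih hq hh β ?_ hβN)).congr (Filter.EventuallyEq.symm hqe)
      refine hcancel q h hq hh ?_
      filter_upwards [hqe] with u hu
      rw [hu]; ring
    · obtain ⟨q, hq, hqe⟩ := hdiv h hh h2
      refine ih hg hq β ?_ hβN
      refine hcancel g q hg hq ?_
      filter_upwards [hqe] with u hu
      rw [hu]; ring

theorem IsMono.of_prod {ι : Type*} {s : Finset ι} {f : ι → (Fin n → ℝ) → ℝ}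
    (hf : ∀ i ∈ s, AnalyticAt ℝ (f i) 0) (h : IsMono fun u => ∏ i ∈ s, f i u) :
    ∀ i ∈ s, IsMono (f i) := by
  classical
  intro i hi
  refine IsMono.of_mul (h := fun u => ∏ j ∈ s.erase i, f j u) (hf i hi)
    (Finset.analyticAt_fun_prod _ fun j hj => hf j (Finset.mem_of_mem_erase hj)) ?_
  exact h.congr (Eventually.of_forall fun u => (Finset.mul_prod_erase s (fun j => f j u) hi).symm)

theorem pow_exponent_eq_of_sub {A B C : ℝ → ℝ} {A0 B0 C0 : ℝ} {a b c : ℕ} (hab : b < a)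
    (hA : Tendsto A (𝓝[>] 0) (𝓝 A0)) (hB : Tendsto B (𝓝[>] 0) (𝓝 B0))
    (hC : Tendsto C (𝓝[>] 0) (𝓝 C0)) (hB0 : B0 ≠ 0) (hC0 : C0 ≠ 0)
    (h : ∀ᶠ t in 𝓝[>] (0 : ℝ), t ^ a * A t - t ^ b * B t = t ^ c * C t) : c = b := by
  have ht : ∀ k, k ≠ 0 → Tendsto (fun t : ℝ => t ^ k) (𝓝[>] 0) (𝓝 0) := by
    intro k hk
    exact ((continuous_pow k).tendsto' 0 0 (by simp [hk])).mono_left nhdsWithin_le_nhds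
  obtain ⟨k, rfl⟩ := Nat.exists_eq_add_of_lt hab
  have hpos : ∀ᶠ t in 𝓝[>] (0 : ℝ), 0 < t := self_mem_nhdsWithin
  rcases lt_trichotomy c b with hcb | hcb | hcb
  · obtain ⟨r, rfl⟩ := Nat.exists_eq_add_of_lt hcb
    have h1 : Tendsto (fun t => t ^ (r + 1) * (t ^ (k + 1) * A t - B t)) (𝓝[>] 0)
        (𝓝 (0 * (0 * A0 - B0))) :=
      (ht _ (by omega)).mul (((ht _ (by omega)).mul hA).sub hB)
    have h2 := hC.congr' (f₂ := fun t => t ^ (r + 1) * (t ^ (k + 1) * A t - B t)) (by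
      filter_upwards [h, hpos] with t h3 h4
      refine mul_left_cancel₀ (pow_ne_zero c h4.ne') ?_
      rw [← h3]; ring)
    have := tendsto_nhds_unique h1 h2
    simp at this
    exact absurd this.symm hC0
  · exact hcb
  · obtain ⟨r, rfl⟩ := Nat.exists_eq_add_of_lt hcb
    have h1 : Tendsto (fun t => t ^ (k + 1) * A t - t ^ (r + 1) * C t) (𝓝[>] 0)
        (𝓝 (0 * A0 - 0 * C0)) :=
      ((ht _ (by omega)).mul hA).sub ((ht _ (by omega)).mul hC)
    have h2 := hB.congr' (f₂ := fun t => t ^ (k + 1) * A t - t ^ (r + 1) * C t) (by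
      filter_upwards [h, hpos] with t h3 h4
      refine mul_left_cancel₀ (pow_ne_zero b h4.ne') ?_
      linear_combination -h3)
    have := tendsto_nhds_unique h1 h2
    simp at this
    exact absurd this.symm hB0

/-- If the difference of two monomials-times-units is zero or again a monomial times a unit, then
one of the two monomials divides the other. -/
theorem exponent_le_or_le {α β : Fin n → ℕ} {e₁ e₂ : (Fin n → ℝ) → ℝ} (h₁ : ContinuousAt e₁ 0)
    (h₂ : ContinuousAt e₂ 0) (h10 : e₁ 0 ≠ 0) (h20 : e₂ 0 ≠ 0)
    (h : (fun u => (∏ j, u j ^ α j) * e₁ u - (∏ j, u j ^ β j) * e₂ u) =ᶠ[𝓝 0] 0 ∨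
      IsMono fun u => (∏ j, u j ^ α j) * e₁ u - (∏ j, u j ^ β j) * e₂ u) :
    (∀ j, α j ≤ β j) ∨ ∀ j, β j ≤ α j := by
  by_contra! hcon
  obtain ⟨⟨k, hk⟩, l, hl⟩ := hcon
  have hcurve : ∀ m : Fin n → ℕ, (∀ j, 0 < m j) →
      Tendsto (fun t : ℝ => fun j => t ^ m j) (𝓝[>] 0) (𝓝 (0 : Fin n → ℝ)) := by
    intro m hm
    refine (Continuous.tendsto' (by fun_prop) _ _ ?_).mono_left nhdsWithin_le_nhds
    ext j; simp [(hm j).ne']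
  have hmon : ∀ (m α : Fin n → ℕ) (t : ℝ), ∏ j, (t ^ m j) ^ α j = t ^ ∑ j, m j * α j := by
    intro m α t
    simp only [← pow_mul, Finset.prod_pow_eq_pow_sum]
  obtain hz | ⟨δ, e₃, he₃, h30, h3⟩ := h
  · let m : Fin n → ℕ := fun j => 1 + if j = k then ∑ j, β j else 0
    have hm : ∀ j, 0 < m j := fun j => by simp [m]
    have hlt : ∑ j, m j * β j < ∑ j, m j * α j := by
      simp only [m, add_mul, one_mul, Finset.sum_add_distrib, ite_mul, zero_mul,
        Finset.sum_ite_eq', Finset.mem_univ, if_true]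
      have : (∑ j, β j) * (β k + 1) ≤ (∑ j, β j) * α k := Nat.mul_le_mul_left _ hk
      have h2 : 1 ≤ ∑ j, α j := by
        have := Finset.single_le_sum (f := α) (fun _ _ => Nat.zero_le _) (Finset.mem_univ k)
        omega
      nlinarith
    have h1 := (hcurve m hm).eventually hz
    simp only [hmon, Pi.zero_apply] at h1
    have := pow_exponent_eq_of_sub (c := ∑ j, m j * β j + 1) (C := fun t => t ^ 0 * 1)
      (A := fun t => e₁ (fun j => t ^ m j) + t ^ 0 * 0) (a := ∑ j, m j * α j) hlt
      (B := fun t => e₂ (fun j => t ^ m j) - t * 1)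
      (A0 := e₁ 0) (B0 := e₂ 0) (C0 := 1) ?_ ?_ ?_ h20 one_ne_zero ?_
    · omega
    · simpa [Function.comp_def] using h₁.tendsto.comp (hcurve m hm)
    · have h4 : Tendsto (fun t : ℝ => t) (𝓝[>] 0) (𝓝 0) := nhdsWithin_le_nhds
      simpa [Function.comp_def] using (h₂.tendsto.comp (hcurve m hm)).sub h4
    · simp
    · filter_upwards [h1] with t ht
      linear_combination ht
  · have key : ∀ m : Fin n → ℕ, (∀ j, 0 < m j) →
        (∑ j, m j * β j < ∑ j, m j * α j → ∑ j, m j * δ j = ∑ j, m j * β j) ∧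
        (∑ j, m j * α j < ∑ j, m j * β j → ∑ j, m j * δ j = ∑ j, m j * α j) := by
      intro m hm
      have h1 := (hcurve m hm).eventually h3
      simp only [hmon] at h1
      have c1 := h₁.tendsto.comp (hcurve m hm)
      have c2 := h₂.tendsto.comp (hcurve m hm)
      have c3 := he₃.continuousAt.tendsto.comp (hcurve m hm)
      constructor
      · intro hlt
        exact pow_exponent_eq_of_sub hlt c1 c2 c3 h20 h30 h1
      · intro hlt
        refine pow_exponent_eq_of_sub hlt c2 c1 c3.neg h10 (neg_ne_zero.2 h30) ?_
        filter_upwards [h1] with t ht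
        simp only [Function.comp_apply]
        linear_combination -ht
    have weights : ∀ (α β δ : Fin n → ℕ) (k : Fin n), β k < α k →
        (∀ m : Fin n → ℕ, (∀ j, 0 < m j) → ∑ j, m j * β j < ∑ j, m j * α j →
          ∑ j, m j * δ j = ∑ j, m j * β j) → δ = β := by
      intro α β δ k hk H
      have hlt : ∀ r : Fin n → ℕ, (∀ j, r j ≤ 2) → ∑ j, (r j + if j = k then 2 * ∑ j, β j + 1 else 0)
          * β j < ∑ j, (r j + if j = k then 2 * ∑ j, β j + 1 else 0) * α j := by
        intro r hr
        simp only [add_mul, one_mul, Finset.sum_add_distrib, ite_mul, zero_mul,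
          Finset.sum_ite_eq', Finset.mem_univ, if_true]
        have h2 : ∑ j, r j * β j ≤ 2 * ∑ j, β j := by
          rw [Finset.mul_sum]
          exact Finset.sum_le_sum fun j _ => Nat.mul_le_mul_right _ (hr j)
        have : (2 * ∑ j, β j + 1) * (β k + 1) ≤ (2 * ∑ j, β j + 1) * α k := Nat.mul_le_mul_left _ hk
        nlinarith [Nat.zero_le (∑ j, r j * α j)]
      ext i
      have e1 := H _ (fun j => by positivity) (hlt (fun _ => 1) (fun _ => by norm_num))
      have e2 := H _ (fun j => by positivity) (hlt (fun j => 1 + if j = i then 1 else 0)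
        (fun j => by split_ifs <;> norm_num))
      simp only [add_mul, one_mul, Finset.sum_add_distrib, ite_mul, zero_mul,
          Finset.sum_ite_eq', Finset.mem_univ, if_true] at e1 e2
      omega
    have e1 := weights α β δ k hk fun m hm => (key m hm).1
    have e2 := weights β α δ l hl fun m hm => (key m hm).2
    rw [← e1, ← e2] at hk
    exact lt_irrefl _ hk

end

/-- `φ` is an analytic map germ at the origin through which the sequence `x` tends to zero. -/
structure IsChart {X Y : Type*} [NormedAddCommGroup X] [NormedSpace ℝ X] [NormedAddCommGroup Y]
    [NormedSpace ℝ Y] (U : Filter ℕ) (φ : Y → X) (y : ℕ → Y) (x : ℕ → X) : Prop where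
  analytic : AnalyticAt ℝ φ 0
  map_zero : φ 0 = 0
  tendsto : Tendsto y U (𝓝 0)
  eventually_eq : ∀ᶠ i in U, φ (y i) = x i

/-- `f` becomes a monomial after lifting the sequence `x` through a suitable chart. -/
def Resolves {X : Type*} [NormedAddCommGroup X] [NormedSpace ℝ X] (U : Filter ℕ) (d : ℕ)
    (x : ℕ → X) (f : X → ℝ) : Prop :=
  ∃ (φ : (Fin d → ℝ) → X) (y : ℕ → Fin d → ℝ), IsChart U φ y x ∧ IsMono (f ∘ φ)

/-- Local uniformization along `U` in dimension `n`. -/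
def LocalUniformization (U : Filter ℕ) (n : ℕ) : Prop :=
  ∀ (f : (Fin n → ℝ) → ℝ), AnalyticAt ℝ f 0 → ¬ f =ᶠ[𝓝 0] 0 →
    ∀ x : ℕ → Fin n → ℝ, Tendsto x U (𝓝 0) → Resolves U n x f

section

variable {X Y Z : Type*} [NormedAddCommGroup X] [NormedSpace ℝ X] [NormedAddCommGroup Y]
    [NormedSpace ℝ Y] [NormedAddCommGroup Z] [NormedSpace ℝ Z] {U : Filter ℕ}

theorem IsChart.tendsto_map {φ : Y → X} {y : ℕ → Y} {x : ℕ → X} (h : IsChart U φ y x) :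
    Tendsto φ (𝓝 0) (𝓝 0) := by
  simpa [h.map_zero] using h.analytic.continuousAt.tendsto

theorem IsChart.comp {φ : Y → X} {ψ : Z → Y} {z : ℕ → Z} {y : ℕ → Y} {x : ℕ → X}
    (h : IsChart U φ y x) (h' : IsChart U ψ z y) : IsChart U (φ ∘ ψ) z x where
  analytic := h.analytic.comp_of_eq h'.analytic h'.map_zero
  map_zero := by simp [h.map_zero, h'.map_zero]
  tendsto := h'.tendsto
  eventually_eq := by
    filter_upwards [h.eventually_eq, h'.eventually_eq] with i h1 h2
    simp [h1, h2]

theorem IsChart.prodMap_id {φ : Y → X} {y : ℕ → Y} {x : ℕ → X} {w : ℕ → ℝ}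
    (h : IsChart U φ y x) (hw : Tendsto w U (𝓝 0)) :
    IsChart U (fun p : Y × ℝ => (φ p.1, p.2)) (fun i => (y i, w i)) (fun i => (x i, w i)) where
  analytic := by
    have h1 : AnalyticAt ℝ (fun p : Y × ℝ => φ p.1) 0 :=
      AnalyticAt.comp_of_eq h.analytic analyticAt_fst rfl
    exact h1.prod analyticAt_snd
  map_zero := by simp [h.map_zero]
  tendsto := h.tendsto.prodMk_nhds hw
  eventually_eq := h.eventually_eq.mono fun i hi => by simp [hi]

theorem Resolves.of_chart {φ : Y → X} {y : ℕ → Y} {x : ℕ → X} {d : ℕ} {f : X → ℝ} {g : Y → ℝ}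
    (h : IsChart U φ y x) (hg : Resolves U d y g) (hfg : f ∘ φ =ᶠ[𝓝 0] g) : Resolves U d x f := by
  obtain ⟨ψ, z, h', hm⟩ := hg
  exact ⟨φ ∘ ψ, z, h.comp h', hm.congr (h'.tendsto_map.eventually hfg.symm)⟩

theorem IsChart.refl {x : ℕ → X} (hx : Tendsto x U (𝓝 0)) : IsChart U id x x :=
  ⟨analyticAt_id, rfl, hx, by simp⟩

theorem Resolves.congr {x : ℕ → X} {d : ℕ} {f g : X → ℝ}
    (hf : Resolves U d x g) (hx : Tendsto x U (𝓝 0)) (h : f =ᶠ[𝓝 0] g) : Resolves U d x f :=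
  Resolves.of_chart (IsChart.refl hx) hf h

theorem IsChart.analyticAt_comp {φ : Y → X} {y : ℕ → Y} {x : ℕ → X} (h : IsChart U φ y x)
    {f : X → ℝ} (hf : AnalyticAt ℝ f 0) : AnalyticAt ℝ (fun u => f (φ u)) 0 :=
  AnalyticAt.comp_of_eq hf h.analytic h.map_zero

end

section

variable {n : ℕ} {U : Filter ℕ}

theorem resolves_prod_monomial {p : ℕ → (Fin n → ℝ) × ℝ} (hp : Tendsto p U (𝓝 0))
    (γ : Fin n → ℕ) (k : ℕ) {e : (Fin n → ℝ) × ℝ → ℝ} (he : AnalyticAt ℝ e 0) (he0 : e 0 ≠ 0) :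
    Resolves U (n + 1) p (fun q => (∏ j, q.1 j ^ γ j) * (q.2 ^ k * e q)) := by
  have ha : AnalyticAt ℝ (fun u : Fin (n + 1) → ℝ => ((fun i : Fin n => u i.succ), u 0)) 0 :=
    (AnalyticAt.pi fun i : Fin n => analyticAt_coord (n := n + 1) i.succ 0).prod
      (analyticAt_coord (n := n + 1) 0 0)
  refine ⟨fun u => ((fun i : Fin n => u i.succ), u 0), fun i => Fin.cons (p i).2 (p i).1,
    ⟨ha, rfl, ?_, by simp⟩, Fin.cons k γ, fun u => e ((fun i : Fin n => u i.succ), u 0), ?_, he0, ?_⟩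
  · rw [tendsto_pi_nhds]
    have h1 : Tendsto (fun i => (p i).1) U (𝓝 0) := (continuous_fst.tendsto' _ _ rfl).comp hp
    have h2 : Tendsto (fun i => (p i).2) U (𝓝 0) := (continuous_snd.tendsto' _ _ rfl).comp hp
    intro j
    refine Fin.cases ?_ (fun j => ?_) j
    · simpa using h2
    · simpa using (tendsto_pi_nhds.1 h1) j
  · exact AnalyticAt.comp_of_eq he ha rfl
  · refine Eventually.of_forall fun u => ?_
    simp only [Function.comp_apply, Fin.prod_univ_succ, Fin.cons_zero, Fin.cons_succ]
    ring

theorem LocalUniformization.finset (h : LocalUniformization U n) {x : ℕ → Fin n → ℝ}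
    (hx : Tendsto x U (𝓝 0)) (s : Finset ((Fin n → ℝ) → ℝ)) (hs : ∀ f ∈ s, AnalyticAt ℝ f 0) :
    ∃ (φ : (Fin n → ℝ) → Fin n → ℝ) (y : ℕ → Fin n → ℝ), IsChart U φ y x ∧
      ∀ f ∈ s, ¬ f =ᶠ[𝓝 0] 0 → IsMono (f ∘ φ) := by
  classical
  set s' := s.filter fun f => ¬ f =ᶠ[𝓝 0] 0
  have hs' : ∀ f ∈ s', AnalyticAt ℝ f 0 := fun f hf => hs f (Finset.mem_filter.1 hf).1
  obtain ⟨φ, y, hφ, hm⟩ := h (fun u => ∏ f ∈ s', f u) (Finset.analyticAt_fun_prod _ hs')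
    (AnalyticAt.prod_not_eventuallyEq_zero hs' fun f hf => (Finset.mem_filter.1 hf).2) x hx
  refine ⟨φ, y, hφ, fun f hf hf0 => ?_⟩
  exact IsMono.of_prod (f := fun f => f ∘ φ) (s := s') (fun f hf => hφ.analyticAt_comp (hs' f hf))
    hm f (Finset.mem_filter.2 ⟨hf, hf0⟩)

theorem prod_coord_pow_mono {φ : (Fin n → ℝ) → Fin n → ℝ} (h : ∀ i, IsMono fun u => φ u i)
    (γ : Fin n → ℕ) : IsMono fun u => ∏ i, φ u i ^ γ i := by
  have hpow : ∀ (f : (Fin n → ℝ) → ℝ) (k : ℕ), IsMono f → IsMono fun u => f u ^ k := by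
    intro f k hf
    induction k with
    | zero => simpa using IsMono.of_unit analyticAt_const one_ne_zero
    | succ k ih => simpa only [pow_succ] using ih.mul hf
  have : ∀ s : Finset (Fin n), IsMono fun u => ∏ i ∈ s, φ u i ^ γ i := by
    classical
    intro s
    induction s using Finset.induction_on with
    | empty => simpa using IsMono.of_unit analyticAt_const one_ne_zero
    | insert i s his ih =>
      simp only [Finset.prod_insert his]
      exact (hpow _ _ (h i)).mul ih
  exact this _

/-- Extraction of `N`-th roots of the coordinates along an ultrafilter. -/
theorem exists_root_chart (U : Ultrafilter ℕ) {N : ℕ} (hN : N ≠ 0) {x : ℕ → Fin n → ℝ}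
    (hx : Tendsto x U (𝓝 0)) : ∃ (ε : Fin n → ℝ) (y : ℕ → Fin n → ℝ), (∀ i, ε i ≠ 0) ∧
      IsChart (U : Filter ℕ) (fun u i => ε i * u i ^ N) y x := by
  have hsign : ∀ i, ∃ ε : ℝ, ε ≠ 0 ∧ ∀ᶠ k in (U : Filter ℕ), x k i = ε * |x k i| := by
    intro i
    rcases Ultrafilter.eventually_or.1 (Eventually.of_forall (f := (U : Filter ℕ))
      fun k => le_total 0 (x k i)) with h | h
    · exact ⟨1, one_ne_zero, h.mono fun k hk => by rw [abs_of_nonneg hk, one_mul]⟩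
    · exact ⟨-1, by norm_num, h.mono fun k hk => by rw [abs_of_nonpos hk]; ring⟩
  choose ε hε0 hε using hsign
  refine ⟨ε, fun k i => |x k i| ^ ((N : ℝ)⁻¹), hε0, ?_, ?_, ?_, ?_⟩
  · exact AnalyticAt.pi fun i => analyticAt_const.mul ((analyticAt_coord i 0).pow N)
  · ext i; simp [hN]
  · rw [tendsto_pi_nhds] at hx ⊢
    intro i
    have h1 : Tendsto (fun k => |x k i|) U (𝓝 0) := by simpa using (hx i).abs
    have h2 : 0 < (N : ℝ)⁻¹ := by positivity
    have := h1.rpow_const (p := (N : ℝ)⁻¹) (Or.inr h2.le)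
    simpa [Real.zero_rpow h2.ne'] using this
  · filter_upwards [eventually_all.2 hε] with k hk
    ext i
    rw [Real.rpow_inv_natCast_pow (abs_nonneg _) hN]
    exact (hk i).symm

/-- After a chart, the coefficients of a polynomial have quasi-homogeneous monomial content. -/
theorem LocalUniformization.exists_content {U : Ultrafilter ℕ} (h : LocalUniformization U n)
    {x : ℕ → Fin n → ℝ} (hx : Tendsto x U (𝓝 0)) (γ : Fin n → ℕ) {D : ℕ}
    {a : ℕ → (Fin n → ℝ) → ℝ} (ha : ∀ j, AnalyticAt ℝ (a j) 0)
    (hne : ∃ j ≤ D, ¬ a j =ᶠ[𝓝 0] 0) :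
    ∃ (φ : (Fin n → ℝ) → Fin n → ℝ) (y : ℕ → Fin n → ℝ) (κ γ' : Fin n → ℕ)
      (v : (Fin n → ℝ) → ℝ) (b : ℕ → (Fin n → ℝ) → ℝ), IsChart (U : Filter ℕ) φ y x ∧
      AnalyticAt ℝ v 0 ∧ v 0 ≠ 0 ∧ (∀ j, AnalyticAt ℝ (b j) 0) ∧ (∃ j ≤ D, b j 0 ≠ 0) ∧
      (∀ j ≤ D, ∀ᶠ u in 𝓝 0, a j (φ u) = (∏ i, u i ^ κ i) ^ (D + 2 - j) * b j u) ∧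
      ∀ᶠ u in 𝓝 0, ∏ i, φ u i ^ γ i = (∏ i, u i ^ γ' i) * v u := by
  classical
  set N := (D + 2).factorial with hN
  have hN0 : N ≠ 0 := Nat.factorial_ne_zero _
  have hdvd : ∀ j ≤ D, (D + 2 - j) * (N / (D + 2 - j)) = N := fun j hj =>
    Nat.mul_div_cancel' (Nat.dvd_factorial (by omega) (by omega))
  set P : ℕ → (Fin n → ℝ) → ℝ := fun j u => a j u ^ (N / (D + 2 - j)) with hP
  have hPa : ∀ j, AnalyticAt ℝ (P j) 0 := fun j => (ha j).pow _
  set s : Finset ((Fin n → ℝ) → ℝ) :=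
    Finset.univ.image (fun (i : Fin n) (u : Fin n → ℝ) => u i) ∪ (Finset.range (D + 1)).image a ∪
      (Finset.range (D + 1) ×ˢ Finset.range (D + 1)).image (fun q u => P q.1 u - P q.2 u) with hs
  have hsa : ∀ f ∈ s, AnalyticAt ℝ f 0 := by
    intro f hf
    simp only [hs, Finset.mem_union, Finset.mem_image, Finset.mem_univ, true_and] at hf
    rcases hf with (⟨i, rfl⟩ | ⟨j, -, rfl⟩) | ⟨q, -, rfl⟩
    · exact analyticAt_coord i 0
    · exact ha j
    · exact (hPa _).sub (hPa _)
  obtain ⟨φ, y, hφ, hm⟩ := h.finset hx s hsa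
  have hγ := prod_coord_pow_mono (φ := φ) (fun i => hm (fun u => u i) (by simp [hs])
    (coord_not_eventuallyEq_zero i)) γ
  obtain ⟨γ₁, v₁, hv₁, hv₁0, hγ₁⟩ := hγ
  set J := (Finset.range (D + 1)).filter fun j => ¬ a j =ᶠ[𝓝 0] 0 with hJ
  have hJD : ∀ j ∈ J, j ≤ D := fun j hj => by
    have := Finset.mem_range.1 (Finset.mem_filter.1 hj).1; omega
  have hJm : ∀ j ∈ J, IsMono (a j ∘ φ) := fun j hj =>
    hm (a j) (by
      simp only [hs, Finset.mem_union, Finset.mem_image]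
      exact Or.inl (Or.inr ⟨j, (Finset.mem_filter.1 hj).1, rfl⟩)) (Finset.mem_filter.1 hj).2
  have hαe : ∀ j, ∃ (α : Fin n → ℕ) (e : (Fin n → ℝ) → ℝ), AnalyticAt ℝ e 0 ∧ (j ∈ J → e 0 ≠ 0) ∧
      (j ≤ D → a j ∘ φ =ᶠ[𝓝 0] fun u => (∏ i, u i ^ α i) * e u) ∧
      (j ∉ J → e = 0) := by
    intro j
    by_cases hj : j ∈ J
    · obtain ⟨α, e, he, he0, h1⟩ := hJm j hj
      exact ⟨α, e, he, fun _ => he0, fun _ => h1, fun h => absurd hj h⟩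
    · refine ⟨0, 0, analyticAt_const, fun h => absurd h hj, fun hjD => ?_, fun _ => rfl⟩
      have h0 : a j =ᶠ[𝓝 0] 0 := by
        by_contra hc
        exact hj (Finset.mem_filter.2 ⟨Finset.mem_range.2 (by omega), hc⟩)
      filter_upwards [hφ.tendsto_map.eventually h0] with u hu
      simpa using hu
  choose α e hea he0 hae hez using hαe
  have hJne : J.Nonempty := by
    obtain ⟨j, hj, hj0⟩ := hne
    exact ⟨j, Finset.mem_filter.2 ⟨Finset.mem_range.2 (by omega), hj0⟩⟩
  set β : ℕ → Fin n → ℕ := fun j i => α j i * (N / (D + 2 - j)) with hβ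
  obtain ⟨j₀, hj₀, hmin⟩ := J.exists_min_image (fun j => ∑ i, β j i) hJne
  have hPm : ∀ j ∈ J, (fun u => P j (φ u)) =ᶠ[𝓝 0]
      fun u => (∏ i, u i ^ β j i) * e j u ^ (N / (D + 2 - j)) := by
    intro j hj
    filter_upwards [hae j (hJD j hj)] with u hu
    simp only [Function.comp_apply] at hu
    simp only [hP, hβ, hu, mul_pow, pow_mul, Finset.prod_pow]
  have hle : ∀ j ∈ J, ∀ i, β j₀ i ≤ β j i := by
    intro j hj
    have hcmp := exponent_le_or_le (α := β j₀) (β := β j)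
      (e₁ := fun u => e j₀ u ^ (N / (D + 2 - j₀))) (e₂ := fun u => e j u ^ (N / (D + 2 - j)))
      ((hea j₀).continuousAt.pow _) ((hea j).continuousAt.pow _)
      (pow_ne_zero _ (he0 j₀ hj₀)) (pow_ne_zero _ (he0 j hj)) ?_
    · rcases hcmp with h1 | h1
      · exact h1
      · have h2 := (Finset.sum_eq_sum_iff_of_le fun i _ => h1 i).1
          (le_antisymm (Finset.sum_le_sum fun i _ => h1 i) (hmin j hj))
        exact fun i => (h2 i (Finset.mem_univ i)).ge
    · have hEq : (fun u => P j₀ (φ u) - P j (φ u)) =ᶠ[𝓝 0] fun u =>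
          (∏ i, u i ^ β j₀ i) * e j₀ u ^ (N / (D + 2 - j₀)) -
            (∏ i, u i ^ β j i) * e j u ^ (N / (D + 2 - j)) := (hPm j₀ hj₀).sub (hPm j hj)
      by_cases hz : (fun u => P j₀ u - P j u) =ᶠ[𝓝 0] 0
      · left
        exact hEq.symm.trans (hφ.tendsto_map.eventually hz)
      · right
        refine (hm (fun u => P j₀ u - P j u) ?_ hz).congr hEq
        simp only [hs, Finset.mem_union, Finset.mem_image]
        exact Or.inr ⟨(j₀, j), Finset.mem_product.2
          ⟨(Finset.mem_filter.1 hj₀).1, (Finset.mem_filter.1 hj).1⟩, rfl⟩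
  obtain ⟨ε, z, hε, hψ⟩ := exists_root_chart U hN0 hφ.tendsto
  set ψ : (Fin n → ℝ) → Fin n → ℝ := fun u i => ε i * u i ^ N with hψdef
  have hmonψ : ∀ (δ : Fin n → ℕ) u, ∏ i, ψ u i ^ δ i
      = (∏ i, ε i ^ δ i) * ∏ i, u i ^ (N * δ i) := by
    intro δ u
    simp only [hψdef, mul_pow, Finset.prod_mul_distrib, pow_mul]
  have hεne : ∀ δ : Fin n → ℕ, ∏ i, ε i ^ δ i ≠ 0 := fun δ =>
    Finset.prod_ne_zero_iff.2 fun i _ => pow_ne_zero _ (hε i)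
  refine ⟨φ ∘ ψ, z, β j₀, fun i => N * γ₁ i, fun u => (∏ i, ε i ^ γ₁ i) * v₁ (ψ u),
    fun j u => (∏ i, ε i ^ α j i) * (∏ i, u i ^ (N * α j i - β j₀ i * (D + 2 - j))) * e j (ψ u),
    hφ.comp hψ, analyticAt_const.mul (hψ.analyticAt_comp hv₁), ?_, fun j => ?_, ⟨j₀, hJD j₀ hj₀, ?_⟩,
    fun j hj => ?_, ?_⟩
  · dsimp only
    rw [hψ.map_zero]; exact mul_ne_zero (hεne _) hv₁0
  · exact (analyticAt_const.mul (analyticAt_monomial _ 0)).mul (hψ.analyticAt_comp (hea j))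
  · dsimp only
    rw [hψ.map_zero]
    refine mul_ne_zero (mul_ne_zero (hεne _) ?_) (he0 j₀ hj₀)
    have h1 : ∀ i, N * α j₀ i - β j₀ i * (D + 2 - j₀) = 0 := by
      intro i
      have := hdvd j₀ (hJD j₀ hj₀)
      have h2 : β j₀ i * (D + 2 - j₀) = N * α j₀ i := by
        calc β j₀ i * (D + 2 - j₀) = α j₀ i * ((D + 2 - j₀) * (N / (D + 2 - j₀))) := by
              simp only [hβ]; ring
          _ = _ := by rw [this]; ring
      omega
    simp [h1]
  · filter_upwards [hψ.tendsto_map.eventually (hae j hj)] with u hu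
    simp only [Function.comp_apply] at hu ⊢
    rw [hu]
    by_cases hjJ : j ∈ J
    · have h1 : ∏ i, u i ^ (N * α j i) = (∏ i, u i ^ β j₀ i) ^ (D + 2 - j) *
          ∏ i, u i ^ (N * α j i - β j₀ i * (D + 2 - j)) := by
        rw [← Finset.prod_pow, ← Finset.prod_mul_distrib]
        refine Finset.prod_congr rfl fun i _ => ?_
        rw [← pow_mul, ← pow_add]
        congr 1
        have h2 : β j i * (D + 2 - j) = N * α j i := by
          calc β j i * (D + 2 - j) = α j i * ((D + 2 - j) * (N / (D + 2 - j))) := by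
                simp only [hβ]; ring
            _ = _ := by rw [hdvd j hj]; ring
        have h3 := Nat.mul_le_mul_right (D + 2 - j) (hle j hjJ i)
        omega
      rw [hmonψ, h1]
      ring
    · simp [hez j hjJ]
  · filter_upwards [hψ.tendsto_map.eventually hγ₁] with u hu
    simp only [Function.comp_apply] at hu ⊢
    rw [hu, hmonψ]
    ring

end

/-- Every `g` of order at most `d` in the last variable, times a monomial in the others, becomes a
monomial along `U`. -/
def ResolvesOrder (U : Filter ℕ) (n d : ℕ) : Prop :=
  ∀ p : ℕ → (Fin n → ℝ) × ℝ, Tendsto p U (𝓝 0) → ∀ (γ : Fin n → ℕ) (g : (Fin n → ℝ) × ℝ → ℝ),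
    AnalyticAt ℝ g 0 → (∃ j ≤ d, wderiv^[j] g 0 ≠ 0) →
      Resolves U (n + 1) p fun q => (∏ j, q.1 j ^ γ j) * g q

section

variable {n : ℕ}

theorem analyticAt_fst_comp {f : (Fin n → ℝ) → ℝ} {q : (Fin n → ℝ) × ℝ} (hf : AnalyticAt ℝ f q.1) :
    AnalyticAt ℝ (fun p : (Fin n → ℝ) × ℝ => f p.1) q :=
  AnalyticAt.comp_of_eq hf analyticAt_fst rfl

theorem deriv_iterate_shifted_ne_zero (D : ℕ) (c : ℕ → ℝ) {y₀ e₀ : ℝ} (hy : y₀ ≠ 0)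
    (he : e₀ ≠ 0) : deriv^[D + 1] (fun t => ∑ j ∈ Finset.range (D + 1), c j * (y₀ + t) ^ j
      + (y₀ + t) ^ (D + 2) * e₀) 0 ≠ 0 := by
  have h1 : deriv^[D + 1] (fun t => ∑ j ∈ Finset.range (D + 1), c j * (y₀ + t) ^ j
      + (y₀ + t) ^ (D + 2) * e₀) 0 = deriv^[D + 1] (fun s => ∑ j ∈ Finset.range (D + 1), c j * s ^ j
      + e₀ * s ^ (D + 2)) y₀ := by
    simp only [← iteratedDeriv_eq_iterate]
    have := congrFun (iteratedDeriv_comp_const_add (D + 1)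
      (fun s => ∑ j ∈ Finset.range (D + 1), c j * s ^ j + e₀ * s ^ (D + 2)) y₀) 0
    simpa [mul_comm e₀] using this
  rw [h1]
  have h2 : deriv^[D + 1] (fun s => ∑ j ∈ Finset.range (D + 1), c j * s ^ j
      + e₀ * s ^ (D + 2)) y₀ = ∑ j ∈ Finset.range (D + 1), deriv^[D + 1] (fun s => c j * s ^ j) y₀
      + deriv^[D + 1] (fun s => e₀ * s ^ (D + 2)) y₀ := by
    simp only [← iteratedDeriv_eq_iterate]
    have h3 : (fun s => ∑ j ∈ Finset.range (D + 1), c j * s ^ j + e₀ * s ^ (D + 2))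
      = (fun s => ∑ j ∈ Finset.range (D + 1), c j * s ^ j) + fun s => e₀ * s ^ (D + 2) := rfl
    rw [h3, iteratedDeriv_add, iteratedDeriv_fun_sum]
    · intro j _; fun_prop
    · fun_prop
    · fun_prop
  have h4 : ∀ (a : ℝ) (k : ℕ), deriv^[D + 1] (fun s : ℝ => a * s ^ k) y₀
      = a * ((∏ i ∈ Finset.range (D + 1), ((k : ℝ) - i)) * y₀ ^ (k - (D + 1))) := by
    intro a k
    rw [← iteratedDeriv_eq_iterate, iteratedDeriv_const_mul_field, iteratedDeriv_eq_iterate,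
      iter_deriv_pow]
  rw [h2, Finset.sum_eq_zero, zero_add, h4]
  · refine mul_ne_zero he (mul_ne_zero (Finset.prod_ne_zero_iff.2 fun i hi => ?_) (pow_ne_zero _ hy))
    have : (i : ℝ) < (D + 2 : ℕ) := by
      have := Finset.mem_range.1 hi
      exact_mod_cast (by omega : i < D + 2)
    exact (sub_pos.2 this).ne'
  · intro j hj
    rw [h4, Finset.prod_eq_zero hj (sub_self _)]
    ring

theorem prod_update_pow (κ : Fin n → ℕ) (u : Fin n → ℝ) (i : Fin n) (w : ℝ) :
    ∏ j, (Function.update u i (w * u i)) j ^ κ j = w ^ κ i * ∏ j, u j ^ κ j := by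
  rw [← Finset.mul_prod_erase _ _ (Finset.mem_univ i),
    ← Finset.mul_prod_erase Finset.univ (fun j => u j ^ κ j) (Finset.mem_univ i)]
  rw [Function.update_self, mul_pow, mul_assoc]
  congr 2
  refine Finset.prod_congr rfl fun j hj => ?_
  rw [Function.update_of_ne (Finset.ne_of_mem_erase hj)]

theorem prod_pow_add_single_mul (α : Fin n → ℕ) (i : Fin n) (k : ℕ) (u : Fin n → ℝ) :
    ∏ j, u j ^ ((α + Pi.single i k : Fin n → ℕ) j) = u i ^ k * ∏ j, u j ^ α j := by
  simp only [Pi.add_apply, pow_add, Finset.prod_mul_distrib]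
  rw [Finset.prod_eq_single i (f := fun j => u j ^ (Pi.single i k : Fin n → ℕ) j)]
  · simp [mul_comm]
  · intro j _ hj; simp [hj]
  · simp

/-- Along an ultrafilter two null sequences are comparable, up to a convergent quotient. -/
theorem exists_tendsto_quotient (U : Ultrafilter ℕ) (a w : ℕ → ℝ) :
    (∃ (y : ℕ → ℝ) (y₀ : ℝ), Tendsto y U (𝓝 y₀) ∧ ∀ᶠ k in (U : Filter ℕ), w k = a k * y k) ∨
      ∃ z : ℕ → ℝ, Tendsto z U (𝓝 0) ∧ ∀ᶠ k in (U : Filter ℕ), a k = w k * z k := by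
  have hlim : ∀ f : ℕ → ℝ, (∀ᶠ k in (U : Filter ℕ), |f k| ≤ 1) → ∃ l, Tendsto f U (𝓝 l) := by
    intro f hf
    have h1 : ((U.map f : Ultrafilter ℝ) : Filter ℝ) ≤ 𝓟 (Set.Icc (-1) 1) := by
      rw [le_principal_iff]
      exact hf.mono fun k hk => abs_le.1 hk
    obtain ⟨l, -, hl⟩ := isCompact_Icc.ultrafilter_le_nhds _ h1
    exact ⟨l, hl⟩
  have hquot : ∀ c d : ℝ, |d| ≤ |c| → d = c * (d / c) ∧ |d / c| ≤ 1 := by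
    intro c d h
    by_cases hc : c = 0
    · subst hc
      simp only [abs_zero, abs_nonpos_iff] at h
      simp [h]
    · exact ⟨by field_simp, by rw [abs_div]; exact div_le_one_of_le₀ h (abs_nonneg _)⟩
  rcases Ultrafilter.eventually_or.1 (Eventually.of_forall (f := (U : Filter ℕ))
      fun k => le_total |w k| |a k|) with h | h
  · left
    obtain ⟨l, hl⟩ := hlim (fun k => w k / a k) (h.mono fun k hk => (hquot _ _ hk).2)
    exact ⟨_, l, hl, h.mono fun k hk => (hquot _ _ hk).1⟩
  · obtain ⟨l, hl⟩ := hlim (fun k => a k / w k) (h.mono fun k hk => (hquot _ _ hk).2)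
    by_cases hl0 : l = 0
    · right
      subst hl0
      exact ⟨_, hl, h.mono fun k hk => (hquot _ _ hk).1⟩
    · left
      refine ⟨fun k => (a k / w k)⁻¹, l⁻¹, hl.inv₀ hl0, ?_⟩
      filter_upwards [h, hl.eventually_ne hl0] with k hk hk0
      have h1 := (hquot _ _ hk).1
      have h2 : a k ≠ 0 := fun h => hk0 (by simp [h])
      field_simp

/-- Resolution of a polynomial without subleading term and with quasi-homogeneous content. -/
theorem resolves_of_content {U : Ultrafilter ℕ} {D : ℕ}
    (hS : ∀ d ≤ D + 1, ResolvesOrder (U : Filter ℕ) n d)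
    (p : ℕ → (Fin n → ℝ) × ℝ) (hp : Tendsto p U (𝓝 0)) (κ γ : Fin n → ℕ)
    {b : ℕ → (Fin n → ℝ) → ℝ} {e : (Fin n → ℝ) × ℝ → ℝ} (hb : ∀ j, AnalyticAt ℝ (b j) 0)
    (he : AnalyticAt ℝ e 0) (he0 : e 0 ≠ 0) (hb0 : ∃ j ≤ D, b j 0 ≠ 0) :
    Resolves (U : Filter ℕ) (n + 1) p fun q => (∏ i, q.1 i ^ γ i) *
      (∑ j ∈ Finset.range (D + 1), (∏ i, q.1 i ^ κ i) ^ (D + 2 - j) * b j q.1 * q.2 ^ j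
        + q.2 ^ (D + 2) * e q) := by
  obtain ⟨N, hN⟩ : ∃ N, ∑ i, κ i = N := ⟨_, rfl⟩
  induction N generalizing κ γ b e p with
  | zero =>
    obtain ⟨j₀, hj₀, hbj⟩ := hb0
    have hκ : κ = 0 := by
      ext j
      simpa using Finset.sum_eq_zero_iff.1 hN j (Finset.mem_univ j)
    subst hκ
    simp only [Pi.zero_apply, pow_zero, Finset.prod_const_one, one_pow, one_mul]
    refine hS j₀ (by omega) p hp γ _ ?_ ⟨j₀, le_rfl, ?_⟩
    · refine AnalyticAt.add ?_ ((analyticAt_snd.pow _).mul he)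
      exact Finset.analyticAt_fun_sum _ fun j _ => (analyticAt_fst_comp (hb j)).mul
        (analyticAt_snd.pow _)
    · have h1 := (wderiv_iterate_taylor (a := fun j => if j = D + 1 then 0 else b j)
        (g := fun q : (Fin n → ℝ) × ℝ => ∑ j ∈ Finset.range (D + 1), b j q.1 * q.2 ^ j
        + q.2 ^ (D + 2) * e q) (d := D + 2) he (Eventually.of_forall fun q => by
          rw [Finset.sum_range_succ _ (D + 1), if_pos rfl]
          simp only [Pi.zero_apply, zero_mul, add_zero]
          congr 1
          refine Finset.sum_congr rfl fun j hj => ?_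
          rw [if_neg (Finset.mem_range.1 hj).ne])).1 j₀ (by omega)
      have h2 := h1.self_of_nhds
      rw [if_neg (by omega)] at h2
      rw [← Prod.mk_zero_zero, h2]
      exact mul_ne_zero (by exact_mod_cast Nat.factorial_ne_zero _) hbj
  | succ N ih =>
    obtain ⟨i, hi⟩ : ∃ i, κ i ≠ 0 := by
      by_contra! hc
      simp [hc] at hN
    have hp1 : Tendsto (fun k => (p k).1) U (𝓝 0) := (continuous_fst.tendsto' _ _ rfl).comp hp
    have hp2 : Tendsto (fun k => (p k).2) U (𝓝 0) := (continuous_snd.tendsto' _ _ rfl).comp hp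
    have hcoord : ∀ i : Fin n, AnalyticAt ℝ (fun q : (Fin n → ℝ) × ℝ => q.1 i) 0 := fun i =>
      analyticAt_fst_comp (q := 0) (analyticAt_coord i 0)
    have hmon : ∀ δ : Fin n → ℕ, AnalyticAt ℝ (fun q : (Fin n → ℝ) × ℝ => ∏ i, q.1 i ^ δ i) 0 :=
      fun δ => analyticAt_fst_comp (q := 0) (analyticAt_monomial δ 0)
    rcases exists_tendsto_quotient U (fun k => (p k).1 i) (fun k => (p k).2) with
      ⟨y, y₀, hy, hwy⟩ | ⟨z, hz, hzw⟩
    · set κ' : Fin n → ℕ := κ - Pi.single i 1 with hκ'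
      have hκκ' : κ = κ' + Pi.single i 1 := by
        ext j
        by_cases hj : j = i
        · subst hj; simp [hκ']; omega
        · simp [hκ', hj]
      have hκ'N : ∑ j, κ' j = N := by
        rw [hκκ'] at hN
        simp only [Pi.add_apply, Finset.sum_add_distrib, Finset.sum_pi_single', Finset.mem_univ,
          if_true] at hN
        omega
      set ψ : (Fin n → ℝ) × ℝ → (Fin n → ℝ) × ℝ := fun q => (q.1, q.1 i * (y₀ + q.2)) with hψ
      have hψ0 : ψ 0 = 0 := by simp [hψ]
      have hψa : AnalyticAt ℝ ψ 0 :=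
        analyticAt_fst.prod ((hcoord i).mul (analyticAt_const.add analyticAt_snd))
      have hq : Tendsto (fun k => ((p k).1, y k - y₀)) U (𝓝 (0 : (Fin n → ℝ) × ℝ)) :=
        hp1.prodMk_nhds (by simpa using hy.sub_const y₀)
      have hchart : IsChart (U : Filter ℕ) ψ (fun k => ((p k).1, y k - y₀)) p := by
        refine ⟨hψa, hψ0, hq, ?_⟩
        filter_upwards [hwy] with k hk
        simp only [hψ]
        ext1
        · rfl
        · simp [hk]
      have heψ : AnalyticAt ℝ (fun q => e (ψ q)) 0 := hchart.analyticAt_comp he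
      set G : (Fin n → ℝ) × ℝ → ℝ := fun q => ∑ j ∈ Finset.range (D + 1),
        (∏ i, q.1 i ^ κ' i) ^ (D + 2 - j) * b j q.1 * (y₀ + q.2) ^ j
          + (y₀ + q.2) ^ (D + 2) * e (ψ q) with hG
      have hGeq : ∀ q : (Fin n → ℝ) × ℝ, (∏ i, (ψ q).1 i ^ γ i) *
          (∑ j ∈ Finset.range (D + 1), (∏ i, (ψ q).1 i ^ κ i) ^ (D + 2 - j) * b j (ψ q).1 *
            (ψ q).2 ^ j + (ψ q).2 ^ (D + 2) * e (ψ q))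
          = (∏ j, q.1 j ^ ((γ + Pi.single i (D + 2) : Fin n → ℕ) j)) * G q := by
        intro q
        rw [prod_pow_add_single_mul, hκκ']
        simp only [prod_pow_add_single, hG]
        have h1 : ∀ j ∈ Finset.range (D + 1),
            ((ψ q).1 i * ∏ i, (ψ q).1 i ^ κ' i) ^ (D + 2 - j) * b j (ψ q).1 * (ψ q).2 ^ j
            = q.1 i ^ (D + 2) *
              ((∏ i, q.1 i ^ κ' i) ^ (D + 2 - j) * b j q.1 * (y₀ + q.2) ^ j) := by
          intro j hj
          have hj' : D + 2 = (D + 2 - j) + j := by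
            have := Finset.mem_range.1 hj; omega
          have h2 : q.1 i ^ (D + 2) = q.1 i ^ (D + 2 - j) * q.1 i ^ j := by
            rw [← pow_add, ← hj']
          rw [h2]
          simp only [hψ, mul_pow]
          ring
        rw [Finset.sum_congr rfl h1, ← Finset.mul_sum]
        simp only [hψ, mul_pow]
        ring
      refine Resolves.of_chart hchart ?_ (Eventually.of_forall hGeq)
      by_cases hy0 : y₀ = 0
      · have h1 := ih _ hq κ' (γ + Pi.single i (D + 2)) hb heψ (by rwa [hψ0]) hb0 hκ'N
        simpa only [hG, hy0, zero_add] using h1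
      · refine hS (D + 1) le_rfl _ hq _ G ?_ ⟨D + 1, le_rfl, ?_⟩
        · refine AnalyticAt.add ?_ (((analyticAt_const.add analyticAt_snd).pow _).mul heψ)
          exact Finset.analyticAt_fun_sum _ fun j _ => (((hmon κ').pow _).mul
            (analyticAt_fst_comp (hb j))).mul ((analyticAt_const.add analyticAt_snd).pow _)
        · rw [← Prod.mk_zero_zero, wderiv_iterate_apply]
          have h1 := deriv_iterate_shifted_ne_zero D
            (fun j => (∏ i, (0 : Fin n → ℝ) i ^ κ' i) ^ (D + 2 - j) * b j 0) hy0 he0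
          have h2 : ∀ t : ℝ, ψ (0, t) = 0 := fun t => by simp [hψ]
          simpa only [hG, h2] using h1
    · set ψ : (Fin n → ℝ) × ℝ → (Fin n → ℝ) × ℝ :=
        fun q => (Function.update q.1 i (q.2 * q.1 i), q.2) with hψ
      have hψ0 : ψ 0 = 0 := by simp [hψ]
      have hψa : AnalyticAt ℝ ψ 0 := by
        refine AnalyticAt.prod (AnalyticAt.pi fun j => ?_) analyticAt_snd
        by_cases hj : j = i
        · subst hj
          simp only [Function.update_self]
          exact analyticAt_snd.mul (hcoord j)
        · simpa [hj] using hcoord j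
      have hchart : IsChart (U : Filter ℕ) ψ
          (fun k => (Function.update (p k).1 i (z k), (p k).2)) p := by
        refine ⟨hψa, hψ0, ?_, ?_⟩
        · refine Tendsto.prodMk_nhds ?_ hp2
          rw [tendsto_pi_nhds] at hp1 ⊢
          intro j
          by_cases hj : j = i
          · subst hj; simpa using hz
          · simpa [hj] using hp1 j
        · filter_upwards [hzw] with k hk
          simp only [hψ, Function.update_self, Function.update_idem, ← hk]
          rw [Function.update_eq_self]
      have hψ1 : AnalyticAt ℝ (fun q => (ψ q).1) 0 := analyticAt_fst.comp_of_eq hψa rfl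
      set W : (Fin n → ℝ) × ℝ → ℝ := fun q => ∑ j ∈ Finset.range (D + 1),
        q.2 ^ ((κ i - 1) * (D + 2 - j)) * (∏ i, q.1 i ^ κ i) ^ (D + 2 - j) * b j (ψ q).1
          + e (ψ q) with hW
      have hWa : AnalyticAt ℝ W 0 := by
        refine AnalyticAt.add ?_ (hchart.analyticAt_comp he)
        exact Finset.analyticAt_fun_sum _ fun j _ => ((analyticAt_snd.pow _).mul
          ((hmon κ).pow _)).mul (AnalyticAt.comp_of_eq (hb j) hψ1 (by rw [hψ0]; rfl))
      have hW0 : W 0 ≠ 0 := by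
        have h1 : ∏ j, (0 : Fin n → ℝ) j ^ κ j = 0 :=
          Finset.prod_eq_zero (Finset.mem_univ i) (by simp [hi])
        have h2 : W 0 = e 0 := by
          simp only [hW, hψ0, Prod.fst_zero, h1]
          rw [Finset.sum_eq_zero, zero_add]
          intro j hj
          rw [zero_pow (by have := Finset.mem_range.1 hj; omega)]
          ring
        rwa [h2]
      refine Resolves.of_chart hchart
        (resolves_prod_monomial hchart.tendsto γ (γ i + (D + 2)) hWa hW0)
        (Eventually.of_forall fun q => ?_)
      have h1 : ∀ δ : Fin n → ℕ, ∏ j, (ψ q).1 j ^ δ j = q.2 ^ δ i * ∏ j, q.1 j ^ δ j := fun δ =>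
        prod_update_pow δ q.1 i q.2
      simp only [Function.comp_apply, h1, hW]
      have h2 : (ψ q).2 = q.2 := rfl
      have h3 : ∀ j ∈ Finset.range (D + 1), (q.2 ^ κ i * ∏ i, q.1 i ^ κ i) ^ (D + 2 - j) *
          b j (ψ q).1 * (ψ q).2 ^ j = q.2 ^ (D + 2) * (q.2 ^ ((κ i - 1) * (D + 2 - j)) *
          (∏ i, q.1 i ^ κ i) ^ (D + 2 - j) * b j (ψ q).1) := by
        intro j hj
        obtain ⟨r, hr⟩ : ∃ r, κ i = r + 1 := ⟨κ i - 1, by omega⟩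
        have hj' : D + 2 = (D + 2 - j) + j := by
          have := Finset.mem_range.1 hj; omega
        have h4 : q.2 ^ (D + 2) = q.2 ^ (D + 2 - j) * q.2 ^ j := by rw [← pow_add, ← hj']
        rw [h2, h4, mul_pow, ← pow_mul, hr, Nat.add_sub_cancel, add_mul, pow_add, one_mul]
        ring
      rw [Finset.sum_congr rfl h3, ← Finset.mul_sum, h2, pow_add]
      ring

end

section

variable {n : ℕ}

theorem LocalUniformization.resolvesOrder {U : Ultrafilter ℕ}
    (h : LocalUniformization (U : Filter ℕ) n) (d : ℕ) : ResolvesOrder (U : Filter ℕ) n d := by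
  induction d using Nat.strong_induction_on with
  | _ d ih =>
  intro p hp γ g hg hj
  by_cases hlow : ∃ j < d, wderiv^[j] g 0 ≠ 0
  · obtain ⟨j, hjd, hj0⟩ := hlow
    exact ih j hjd p hp γ g hg ⟨j, le_rfl, hj0⟩
  push Not at hlow
  have hd : wderiv^[d] g 0 ≠ 0 := by
    obtain ⟨j, hjd, hj0⟩ := hj
    rcases hjd.lt_or_eq with h1 | rfl
    · exact absurd (hlow j h1) hj0
    · exact hj0
  rcases d with _ | d
  · simpa using resolves_prod_monomial hp γ 0 hg hd
  obtain ⟨ζ, hζ, hζ0, hζd⟩ := hg.exists_wderiv_zero hd (hlow d (Nat.lt_succ_self d))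
  have hp1 : Tendsto (fun k => (p k).1) U (𝓝 0) := (continuous_fst.tendsto' _ _ rfl).comp hp
  have hp2 : Tendsto (fun k => (p k).2) U (𝓝 0) := (continuous_snd.tendsto' _ _ rfl).comp hp
  have hζp : Tendsto (fun k => ζ (p k).1) U (𝓝 0) := by
    have : Tendsto ζ (𝓝 0) (𝓝 0) := by simpa [hζ0] using hζ.continuousAt.tendsto
    exact this.comp hp1
  set ψ : (Fin n → ℝ) × ℝ → (Fin n → ℝ) × ℝ := fun q => (q.1, q.2 + ζ q.1) with hψ
  have hchart : IsChart (U : Filter ℕ) ψ (fun k => ((p k).1, (p k).2 - ζ (p k).1)) p := by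
    refine ⟨analyticAt_fst.prod (analyticAt_snd.add (analyticAt_fst_comp (q := 0) hζ)),
      by simp [hψ, hζ0], hp1.prodMk_nhds (by simpa using hp2.sub hζp), ?_⟩
    exact Eventually.of_forall fun k => by simp [hψ]
  set g' : (Fin n → ℝ) × ℝ → ℝ := fun q => g (q.1, q.2 + ζ q.1) with hg'
  have hg'a : AnalyticAt ℝ g' 0 := hchart.analyticAt_comp hg
  refine Resolves.of_chart (g := fun q => (∏ j, q.1 j ^ γ j) * g' q) hchart ?_
    (Eventually.of_forall fun q => rfl)
  obtain ⟨a, e, ha, he, hge⟩ := hg'a.exists_taylor (d + 1)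
  obtain ⟨hT, hTd⟩ := wderiv_iterate_taylor he hge
  have he0 : e 0 ≠ 0 := by
    rw [← Prod.mk_zero_zero, wderiv_iterate_comp_shift, hζ0, add_zero, Prod.mk_zero_zero] at hTd
    intro h0
    rw [h0, mul_zero] at hTd
    exact hd hTd
  have had : a d =ᶠ[𝓝 0] 0 := by
    filter_upwards [hT d (Nat.lt_succ_self d), hζd] with u h1 h2
    rw [wderiv_iterate_comp_shift, zero_add, h2] at h1
    have : ((d.factorial : ℕ) : ℝ) ≠ 0 := by exact_mod_cast Nat.factorial_ne_zero _
    simpa [this] using h1.symm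
  have hfst : Tendsto (fun q : (Fin n → ℝ) × ℝ => q.1) (𝓝 0) (𝓝 0) :=
    continuous_fst.tendsto' _ _ rfl
  by_cases hz : ∀ j < d, a j =ᶠ[𝓝 0] 0
  · refine (resolves_prod_monomial hchart.tendsto γ (d + 1) he he0).congr hchart.tendsto ?_
    have hz' : ∀ᶠ u in 𝓝 (0 : Fin n → ℝ), ∀ j ∈ Finset.range (d + 1), a j u = 0 := by
      rw [eventually_all_finset]
      intro j hj
      rcases (Nat.lt_succ_iff.1 (Finset.mem_range.1 hj)).lt_or_eq with h1 | rfl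
      · exact hz j h1
      · exact had
    filter_upwards [hge, hfst.eventually hz'] with q h1 h2
    rw [h1, Finset.sum_eq_zero fun j hj => by rw [h2 j hj, zero_mul], zero_add]
  push Not at hz
  obtain ⟨j₁, hj₁, hj₁z⟩ := hz
  obtain ⟨D, rfl⟩ : ∃ D, d = D + 1 := ⟨d - 1, by omega⟩
  obtain ⟨φ, y, κ, γ', v, b, hφ, hv, hv0, hb, ⟨j₀, hj₀, hbj₀⟩, hab, hγ⟩ :=
    h.exists_content hp1 γ (D := D) ha ⟨j₁, by omega, hj₁z⟩
  have hchart' := hφ.prodMap_id (w := fun k => (p k).2 - ζ (p k).1) (by simpa using hp2.sub hζp)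
  set Φ : (Fin n → ℝ) × ℝ → (Fin n → ℝ) × ℝ := fun q => (φ q.1, q.2) with hΦ
  have heΦ : AnalyticAt ℝ (fun q => e (Φ q)) 0 := hchart'.analyticAt_comp he
  have hvf : AnalyticAt ℝ (fun q : (Fin n → ℝ) × ℝ => v q.1) 0 := analyticAt_fst_comp (q := 0) hv
  refine Resolves.of_chart hchart' (resolves_of_content (D := D) (fun d' hd' => ih d' (by omega)) _
    hchart'.tendsto κ γ' (b := fun j u => v u * b j u) (e := fun q => v q.1 * e (Φ q))
    (fun j => hv.mul (hb j)) (hvf.mul heΦ) ?_ ⟨j₀, hj₀, mul_ne_zero hv0 hbj₀⟩) ?_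
  · rw [hchart'.map_zero]
    exact mul_ne_zero hv0 he0
  · have hab' : ∀ᶠ u in 𝓝 (0 : Fin n → ℝ), ∀ j ∈ Finset.range (D + 1),
        a j (φ u) = (∏ i, u i ^ κ i) ^ (D + 2 - j) * b j u := by
      rw [eventually_all_finset]
      exact fun j hj => hab j (Nat.lt_succ_iff.1 (Finset.mem_range.1 hj))
    filter_upwards [hchart'.tendsto_map.eventually hge, hfst.eventually hab',
      hfst.eventually (hφ.tendsto_map.eventually had), hfst.eventually hγ] with q h1 h2 h3 h4
    simp only [Function.comp_apply]
    rw [h1, Finset.sum_range_succ]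
    have h5 : (Φ q).1 = φ q.1 := rfl
    have h6 : (Φ q).2 = q.2 := rfl
    simp only [h5, h6, h3, h4, Pi.zero_apply, zero_mul, add_zero]
    rw [Finset.sum_congr rfl fun j hj => by rw [h2 j hj]]
    rw [mul_assoc, mul_add, mul_add, mul_add, Finset.mul_sum]
    congr 2
    · refine Finset.sum_congr rfl fun j _ => ?_
      ring
    · ring

theorem exists_line_not_eventuallyEq_zero {E : Type*} [NormedAddCommGroup E] [NormedSpace ℝ E]
    {f : E → ℝ} (hf : AnalyticAt ℝ f 0) (h : ¬ f =ᶠ[𝓝 0] 0) :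
    ∃ v : E, ¬ (fun t : ℝ => f (t • v)) =ᶠ[𝓝 0] 0 := by
  obtain ⟨r, hr, hB⟩ := Metric.eventually_nhds_iff_ball.1 hf.eventually_analyticAt
  by_contra! hcon
  refine h ?_
  filter_upwards [Metric.ball_mem_nhds (0 : E) hr] with v hv
  set s : Set ℝ := (fun t : ℝ => t • v) ⁻¹' Metric.ball (0 : E) r with hs
  have hsc : Convex ℝ s := (convex_ball (0 : E) r).is_linear_preimage
    ⟨fun x y => add_smul x y v, fun c x => by rw [smul_eq_mul, mul_smul]⟩
  have hA : AnalyticOnNhd ℝ (fun t : ℝ => f (t • v)) s := fun t ht =>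
    AnalyticAt.comp (f := fun t : ℝ => t • v) (hB _ ht) (analyticAt_id.smul analyticAt_const)
  have := hA.eqOn_zero_of_preconnected_of_eventuallyEq_zero hsc.isPreconnected (z₀ := 0)
    (by simp [hs, hr]) (hcon v)
  simpa using this (x := 1) (by simpa [hs] using hv)

theorem localUniformization (U : Ultrafilter ℕ) (n : ℕ) :
    LocalUniformization (U : Filter ℕ) n := by
  induction n with
  | zero =>
    intro f hf hf0 x hx
    refine ⟨id, x, IsChart.refl hx, IsMono.of_unit hf fun h0 => hf0 ?_⟩
    exact Eventually.of_forall fun u => by rw [Subsingleton.elim u 0]; simpa using h0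
  | succ n ih =>
    intro f hf hf0 x hx
    obtain ⟨v, hv⟩ := exists_line_not_eventuallyEq_zero hf hf0
    by_cases hv0 : v = 0
    · subst hv0
      refine ⟨id, x, IsChart.refl hx, IsMono.of_unit hf fun h0 => hv ?_⟩
      exact Eventually.of_forall fun t => by simpa using h0
    have hline : AnalyticAt ℝ (fun t : ℝ => f (t • v)) 0 :=
      AnalyticAt.comp_of_eq hf (f := fun t : ℝ => t • v) (analyticAt_id.smul analyticAt_const)
        (by simp)
    obtain ⟨k, hk⟩ := hline.exists_deriv_iterate_ne_zero hv
    obtain ⟨T, hT⟩ := SeparatingDual.exists_continuousLinearEquiv_apply_eq (R := ℝ)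
      (x := (Pi.single 0 1 : Fin (n + 1) → ℝ)) (y := v) (by
        intro h; simpa using congrFun h 0) hv0
    let B : ((Fin n → ℝ) × ℝ) ≃L[ℝ] (Fin (n + 1) → ℝ) :=
      ((ContinuousLinearEquiv.prodComm ℝ (Fin n → ℝ) ℝ).trans
        (Fin.consEquivL ℝ (fun _ : Fin (n + 1) => ℝ))).trans T
    have hBv : ∀ t : ℝ, B (0, t) = t • v := by
      intro t
      rw [← hT, ← map_smul]
      change T (Fin.cons t (0 : Fin n → ℝ)) = _
      congr 1
      ext j
      refine Fin.cases ?_ (fun j => ?_) j <;> simp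
    have hchart : IsChart (U : Filter ℕ) B (fun k => B.symm (x k)) x :=
      ⟨B.toContinuousLinearMap.analyticAt 0, map_zero B,
        (B.symm.continuous.tendsto' _ _ (map_zero _)).comp hx, by simp⟩
    have hg : AnalyticAt ℝ (fun q => f (B q)) 0 := hchart.analyticAt_comp hf
    have h1 := ih.resolvesOrder k _ hchart.tendsto 0 (fun q => f (B q)) hg ⟨k, le_rfl, by
      rw [← Prod.mk_zero_zero, wderiv_iterate_apply]
      simpa only [hBv] using hk⟩
    refine Resolves.of_chart hchart h1 (Eventually.of_forall fun q => ?_)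
    simp

end

section

variable {n : ℕ}

theorem abs_monomial_le_coord_mul_partial {α : Fin n → ℕ} {e : (Fin n → ℝ) → ℝ}
    (he : AnalyticAt ℝ e 0) (he0 : e 0 ≠ 0) {j : Fin n} (hj : α j ≠ 0) :
    ∀ᶠ y in 𝓝 (0 : Fin n → ℝ), |(∏ i, y i ^ α i) * e y| ≤
      2 * |y j| * |fderiv ℝ (fun u => (∏ i, u i ^ α i) * e u) y (Pi.single j 1)| := by
  have h1 : ContinuousAt (fun y : Fin n → ℝ => |e y| / 2 - |y j * fderiv ℝ e y (Pi.single j 1)|) 0 := by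
    have h2 : ContinuousAt (fun y => fderiv ℝ e y (Pi.single j 1)) 0 :=
      he.fderiv.continuousAt.clm_apply continuousAt_const
    have h3 := he.continuousAt
    have h4 : ContinuousAt (fun y : Fin n → ℝ => y j) 0 := (continuous_apply j).continuousAt
    exact (h3.abs.div_const 2).sub (h4.mul h2).abs
  have h2 : ∀ᶠ y in 𝓝 (0 : Fin n → ℝ), 0 < |e y| / 2 - |y j * fderiv ℝ e y (Pi.single j 1)| :=
    h1.eventually (lt_mem_nhds (by simpa using he0))
  filter_upwards [h2, he.eventually_analyticAt] with y hy hey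
  have hd : DifferentiableAt ℝ (fun u : Fin n → ℝ => (∏ i, u i ^ α i) * e u) y :=
    ((analyticAt_monomial α y).mul hey).differentiableAt
  have hu := hasDerivAt_update y j (y j)
  have hyy : y = Function.update y j (y j) := by simp
  have hd1 : HasDerivAt (fun t => (∏ i, Function.update y j t i ^ α i) * e (Function.update y j t))
      (fderiv ℝ (fun u : Fin n → ℝ => (∏ i, u i ^ α i) * e u) y (Pi.single j 1)) (y j) := by
    have := hd.hasFDerivAt
    rw [hyy] at this
    simpa [Function.comp_def] using this.comp_hasDerivAt (y j) hu
  have hd2 : HasDerivAt (fun t => e (Function.update y j t))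
      (fderiv ℝ e y (Pi.single j 1)) (y j) := by
    have := hey.differentiableAt.hasFDerivAt
    rw [hyy] at this
    simpa [Function.comp_def] using this.comp_hasDerivAt (y j) hu
  set c := ∏ i ∈ Finset.univ.erase j, y i ^ α i with hc
  have hprod : ∀ t, ∏ i, Function.update y j t i ^ α i = t ^ α j * c := by
    intro t
    rw [← Finset.mul_prod_erase _ _ (Finset.mem_univ j), Function.update_self, hc]
    congr 1
    refine Finset.prod_congr rfl fun i hi => ?_
    rw [Function.update_of_ne (Finset.ne_of_mem_erase hi)]
  simp only [hprod] at hd1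
  have hd3 := hd1.unique ((((hasDerivAt_id (y j)).pow (α j)).mul_const c).mul hd2)
  have hpy : ∏ i, y i ^ α i = y j ^ α j * c := by rw [← hprod (y j), ← hyy]
  simp only [Function.update_eq_self, id_eq, mul_one, Pi.pow_apply] at hd3
  obtain ⟨a, ha⟩ := Nat.exists_eq_succ_of_ne_zero hj
  set D := fderiv ℝ e y (Pi.single j 1) with hD
  rw [mul_assoc, ← abs_mul, hd3, hpy, ha]
  have key : y j * (((a.succ : ℕ) : ℝ) * y j ^ (a.succ - 1) * c * e y + y j ^ a.succ * c * D)
      = (y j ^ a.succ * c) * (((a : ℝ) + 1) * e y + y j * D) := by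
    simp only [Nat.succ_eq_add_one, Nat.add_sub_cancel]
    push_cast
    ring
  rw [key, abs_mul, abs_mul (y j ^ a.succ * c) (_ + _)]
  have h5 : |e y| / 2 ≤ |((a : ℝ) + 1) * e y + y j * D| := by
    have h6 : |((a : ℝ) + 1) * e y| ≤ |((a : ℝ) + 1) * e y + y j * D| + |y j * D| := by
      simpa using abs_sub (((a : ℝ) + 1) * e y + y j * D) (y j * D)
    have h7 : |e y| ≤ |((a : ℝ) + 1) * e y| := by
      rw [abs_mul, abs_of_nonneg (by positivity : (0 : ℝ) ≤ (a : ℝ) + 1)]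
      nlinarith [abs_nonneg (e y), (Nat.cast_nonneg a : (0 : ℝ) ≤ a)]
    linarith
  nlinarith [abs_nonneg (y j ^ a.succ * c)]

theorem exists_min_coord_pow_le_prod {α : Fin n → ℕ} {y : Fin n → ℝ} (hα : ∃ j, α j ≠ 0) :
    ∃ j, α j ≠ 0 ∧ |y j| ^ (∑ i, α i) ≤ ∏ i, |y i| ^ α i := by
  classical
  obtain ⟨j₀, hj₀⟩ := hα
  obtain ⟨j, hj, hmin⟩ := Finset.exists_min_image (Finset.univ.filter fun i => α i ≠ 0)
    (fun i => |y i|) ⟨j₀, by simpa using hj₀⟩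
  refine ⟨j, by simpa using hj, ?_⟩
  rw [← Finset.prod_pow_eq_pow_sum]
  refine Finset.prod_le_prod (fun i _ => by positivity) fun i _ => ?_
  by_cases hi : α i = 0
  · simp [hi]
  · exact pow_le_pow_left₀ (abs_nonneg _) (hmin i (by simpa using hi)) _

theorem exists_lojasiewicz_zero (U : Ultrafilter ℕ) {f : (Fin n → ℝ) → ℝ}
    (hf : AnalyticAt ℝ f 0) (hf0 : f 0 = 0) {x : ℕ → Fin n → ℝ} (hx : Tendsto x U (𝓝 0)) :
    ∃ N : ℕ, N ≠ 0 ∧ ∃ C : ℝ, 0 ≤ C ∧ ∀ᶠ k in (U : Filter ℕ),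
      |f (x k)| ^ N ≤ C * |f (x k)| * ‖fderiv ℝ f (x k)‖ ^ N := by
  by_cases hz : f =ᶠ[𝓝 0] 0
  · refine ⟨1, one_ne_zero, 0, le_rfl, ?_⟩
    filter_upwards [hx.eventually hz] with k hk
    simp [hk]
  obtain ⟨φ, y, hφ, α, e, he, he0, hm⟩ := localUniformization U n f hf hz x hx
  have hα : ∃ j, α j ≠ 0 := by
    by_contra hα
    push Not at hα
    have := hm.self_of_nhds
    simp [hα, hφ.map_zero, hf0] at this
    exact he0 this.symm
  set h : (Fin n → ℝ) → ℝ := fun u => (∏ j, u j ^ α j) * e u with hh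
  obtain ⟨c, hc, hce⟩ : ∃ c : ℝ, 0 < c ∧ ∀ᶠ u in 𝓝 (0 : Fin n → ℝ), c ≤ |e u| :=
    ⟨|e 0| / 2, by positivity, (he.continuousAt.abs).eventually
      (le_mem_nhds (by linarith [abs_pos.2 he0]))⟩
  set B := ‖fderiv ℝ φ 0‖ + 1 with hB
  have hBpos : 0 < B := by positivity
  have hφB : ∀ᶠ u in 𝓝 (0 : Fin n → ℝ), ‖fderiv ℝ φ u‖ ≤ B :=
    hφ.analytic.fderiv.continuousAt.norm.eventually (ge_mem_nhds (by rw [hB]; linarith))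
  have hpart : ∀ᶠ u in 𝓝 (0 : Fin n → ℝ), ∀ j, α j ≠ 0 →
      |h u| ≤ 2 * |u j| * |fderiv ℝ h u (Pi.single j 1)| := by
    rw [eventually_all]
    intro j
    by_cases hj : α j = 0
    · simp [hj]
    · filter_upwards [abs_monomial_le_coord_mul_partial he he0 hj] with u hu _ using hu
  have hchain : ∀ᶠ u in 𝓝 (0 : Fin n → ℝ),
      fderiv ℝ h u = (fderiv ℝ f (φ u)).comp (fderiv ℝ φ u) := by
    filter_upwards [hm.eventually_nhds, hφ.analytic.eventually_analyticAt,
      hφ.tendsto_map.eventually hf.eventually_analyticAt] with u h1 h2 h3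
    have h1' : f ∘ φ =ᶠ[𝓝 u] h := h1
    rw [← h1'.fderiv_eq]
    exact fderiv_comp u h3.differentiableAt h2.differentiableAt
  refine ⟨∑ i, α i, ?_, (2 * B) ^ (∑ i, α i) / c, by positivity, ?_⟩
  · obtain ⟨j, hj⟩ := hα
    intro h0
    exact hj (Finset.sum_eq_zero_iff.1 h0 j (Finset.mem_univ j))
  filter_upwards [hφ.tendsto.eventually hpart, hφ.tendsto.eventually hchain,
    hφ.tendsto.eventually hφB, hφ.tendsto.eventually hce, hφ.tendsto.eventually hm,
    hφ.eventually_eq] with k h1 h2 h3 h4 h5 h6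
  obtain ⟨j, hj, hmin⟩ := exists_min_coord_pow_le_prod (y := y k) hα
  simp only [Function.comp_apply, h6] at h5
  rw [h6] at h2
  have hv : f (x k) = h (y k) := h5
  rw [hv]
  set G := ‖fderiv ℝ f (x k)‖ with hG
  have h7 : |fderiv ℝ h (y k) (Pi.single j 1)| ≤ G * B := by
    rw [h2, ContinuousLinearMap.comp_apply]
    refine (ContinuousLinearMap.le_opNorm (fderiv ℝ f (x k)) _).trans ?_
    refine mul_le_mul_of_nonneg_left ?_ (norm_nonneg _)
    refine (ContinuousLinearMap.le_opNorm _ _).trans ?_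
    have : ‖(Pi.single j 1 : Fin n → ℝ)‖ = 1 := by rw [Pi.norm_single, norm_one]
    rw [this, mul_one]; exact h3
  have hG0 : 0 ≤ G := norm_nonneg _
  have h8 : |h (y k)| ≤ |y k j| * (2 * B * G) := by
    refine (h1 j hj).trans ?_
    nlinarith [mul_le_mul_of_nonneg_left h7 (abs_nonneg (y k j))]
  have h9 : |y k j| ^ (∑ i, α i) ≤ |h (y k)| / c := by
    rw [le_div_iff₀ hc, show h (y k) = (∏ i, y k i ^ α i) * e (y k) from rfl, abs_mul,
      Finset.abs_prod]
    simp only [abs_pow]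
    exact mul_le_mul hmin h4 hc.le (by positivity)
  calc |h (y k)| ^ (∑ i, α i) ≤ (|y k j| * (2 * B * G)) ^ (∑ i, α i) :=
        pow_le_pow_left₀ (abs_nonneg _) h8 _
    _ = |y k j| ^ (∑ i, α i) * (2 * B * G) ^ (∑ i, α i) := mul_pow _ _ _
    _ ≤ (|h (y k)| / c) * (2 * B * G) ^ (∑ i, α i) :=
        mul_le_mul_of_nonneg_right h9 (by positivity)
    _ = _ := by rw [mul_pow]; ring

/-- The Łojasiewicz gradient inequality along an ultrafilter. -/
theorem exists_lojasiewicz (U : Ultrafilter ℕ) {f : (Fin n → ℝ) → ℝ} {a : Fin n → ℝ}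
    (hf : AnalyticAt ℝ f a) {x : ℕ → Fin n → ℝ} (hx : Tendsto x U (𝓝 a)) :
    ∃ N : ℕ, N ≠ 0 ∧ ∃ C : ℝ, 0 ≤ C ∧ ∀ᶠ k in (U : Filter ℕ),
      |f (x k) - f a| ^ N ≤ C * |f (x k) - f a| * ‖fderiv ℝ f (x k)‖ ^ N := by
  have hg : AnalyticAt ℝ (fun u => f (a + u) - f a) 0 :=
    (AnalyticAt.comp_of_eq hf (f := fun u => a + u) (analyticAt_const.add analyticAt_id)
      (by simp)).sub analyticAt_const
  obtain ⟨N, hN, C, hC, h⟩ := exists_lojasiewicz_zero U hg (by simp)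
    (x := fun k => x k - a) (by simpa using hx.sub_const a)
  refine ⟨N, hN, C, hC, h.mono fun k hk => ?_⟩
  have : fderiv ℝ (fun u => f (a + u) - f a) (x k - a) = fderiv ℝ f (x k) := by
    rw [fderiv_sub_const, fderiv_comp_add_left]
    simp
  simpa [this] using hk

end

theorem rpow_le_mul_of_pow_le {v C δ : ℝ} {N m : ℕ} (hN : N ≠ 0) (hv : 0 ≤ v) (hv1 : v ≤ 1)
    (hδ : 0 ≤ δ) (h : v ^ N ≤ C * v * δ ^ N) (hNm : N ≤ m + 2) (hCm : C ≤ m + 2) :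
    v ^ (1 - 1 / ((m : ℝ) + 2)) ≤ (m + 2) * δ := by
  have hm : (0 : ℝ) < (m : ℝ) + 2 := by positivity
  have hexp : (0 : ℝ) < 1 - 1 / ((m : ℝ) + 2) := by
    rw [sub_pos, div_lt_one hm]; linarith [(Nat.cast_nonneg m : (0 : ℝ) ≤ m)]
  rcases hv.eq_or_lt with rfl | hv'
  · rw [Real.zero_rpow hexp.ne']; positivity
  obtain ⟨M, rfl⟩ := Nat.exists_eq_succ_of_ne_zero hN
  have hN0 : (0 : ℝ) < ((M.succ : ℕ) : ℝ) := by positivity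
  have h1 : v ^ M ≤ C * δ ^ M.succ := by
    have : v * v ^ M ≤ v * (C * δ ^ M.succ) := by
      calc v * v ^ M = v ^ M.succ := by rw [pow_succ]; ring
        _ ≤ _ := h
        _ = _ := by ring
    exact le_of_mul_le_mul_left this hv'
  have h2 : v ^ M ≤ ((m + 2) * δ) ^ M.succ := by
    refine h1.trans ?_
    rw [mul_pow]
    refine mul_le_mul_of_nonneg_right (hCm.trans ?_) (by positivity)
    exact le_self_pow₀ (by linarith [(Nat.cast_nonneg m : (0 : ℝ) ≤ m)]) (Nat.succ_ne_zero M)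
  refine le_of_pow_le_pow_left₀ (Nat.succ_ne_zero M) (by positivity) (le_trans ?_ h2)
  rw [← Real.rpow_natCast, ← Real.rpow_mul hv, ← Real.rpow_natCast v M]
  refine Real.rpow_le_rpow_of_exponent_ge hv' hv1 ?_
  have h3 : ((M.succ : ℕ) : ℝ) / ((m : ℝ) + 2) ≤ 1 := by
    rw [div_le_one hm]; exact_mod_cast hNm
  have h4 : (1 - 1 / ((m : ℝ) + 2)) * ((M.succ : ℕ) : ℝ) =
      ((M.succ : ℕ) : ℝ) - ((M.succ : ℕ) : ℝ) / ((m : ℝ) + 2) := by ring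
  rw [h4]
  have h5 : ((M.succ : ℕ) : ℝ) = M + 1 := by push_cast; ring
  linarith

theorem rpow_exponent_mono {v δ : ℝ} {m m' : ℕ} (hv : 0 ≤ v) (hv1 : v ≤ 1) (hδ : 0 ≤ δ)
    (hm : m ≤ m') (h : v ^ (1 - 1 / ((m : ℝ) + 2)) ≤ (m + 2) * δ) :
    v ^ (1 - 1 / ((m' : ℝ) + 2)) ≤ (m' + 2) * δ := by
  have hmm : (m : ℝ) ≤ m' := by exact_mod_cast hm
  have h0 : (0 : ℝ) < 1 - 1 / ((m : ℝ) + 2) := by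
    rw [sub_pos, div_lt_one (by positivity)]; linarith [(Nat.cast_nonneg m : (0 : ℝ) ≤ m)]
  have h1 : 1 - 1 / ((m : ℝ) + 2) ≤ 1 - 1 / ((m' : ℝ) + 2) := by
    gcongr
  refine le_trans ?_ (h.trans ?_)
  · rcases hv.eq_or_lt with rfl | hv'
    · rw [Real.zero_rpow h0.ne', Real.zero_rpow (h0.trans_le h1).ne']
    · exact Real.rpow_le_rpow_of_exponent_ge hv' hv1 h1
  · gcongr

/-- A monotone family of properties that is eventually reached along every ultrafilter is
eventually reached uniformly. -/
theorem exists_eventually_of_forall_ultrafilter {ι : Type*} [Nonempty ι] {F : Filter ι} {Q : ℕ → ι → Prop}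
    (hmono : ∀ᶠ k in F, ∀ m m', m ≤ m' → Q m k → Q m' k)
    (h : ∀ U : Ultrafilter ι, (U : Filter ι) ≤ F → ∃ m, ∀ᶠ k in (U : Filter ι), Q m k) :
    ∃ m, ∀ᶠ k in F, Q m k := by
  by_contra hcon
  push Not at hcon
  have hne : (F ⊓ ⨅ m, 𝓟 {k | ¬ Q m k}).NeBot := by
    have hdir : Directed (· ≥ ·) fun m => F ⊓ 𝓟 ({k | ¬ Q m k} ∩ {k | ∀ m m', m ≤ m' → Q m k → Q m' k}) := by
      refine directed_of_isDirected_le fun m m' hm => ?_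
      refine inf_le_inf_left _ (principal_mono.2 ?_)
      rintro k ⟨hk, hk'⟩
      exact ⟨fun hq => hk (hk' m m' hm hq), hk'⟩
    have h1 : (⨅ m, F ⊓ 𝓟 ({k | ¬ Q m k} ∩ {k | ∀ m m', m ≤ m' → Q m k → Q m' k})).NeBot := by
      rw [iInf_neBot_iff_of_directed hdir]
      intro m
      rw [inf_principal_neBot_iff]
      intro s hs
      obtain ⟨k, hk, h1, h2⟩ := ((hcon m).and_eventually (hmono.and hs)).exists
      exact ⟨k, h2, hk, h1⟩
    refine h1.mono ?_
    rw [← inf_iInf]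
    exact inf_le_inf_left _ (iInf_mono fun m => principal_mono.2 Set.inter_subset_left)
  obtain ⟨U, hU⟩ := @Ultrafilter.exists_le _ _ hne
  obtain ⟨m, hm⟩ := h U (hU.trans inf_le_left)
  have h2 : ∀ᶠ k in (U : Filter ι), ¬ Q m k :=
    hU.trans (inf_le_right.trans (iInf_le _ m)) (mem_principal_self _)
  obtain ⟨k, hk⟩ := (hm.and h2).exists
  exact hk.2 hk.1

theorem pow_sub_pow_le_mul {a b : ℝ} (hb : 0 ≤ b) (hab : b ≤ a) (N : ℕ) :
    a ^ (N + 1) - b ^ (N + 1) ≤ (N + 1) * a ^ N * (a - b) := by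
  induction N with
  | zero => simp
  | succ N ih =>
    have h1 : a ^ (N + 1 + 1) - b ^ (N + 1 + 1) =
        a * (a ^ (N + 1) - b ^ (N + 1)) + b ^ (N + 1) * (a - b) := by ring
    have h2 : b ^ (N + 1) * (a - b) ≤ a ^ (N + 1) * (a - b) :=
      mul_le_mul_of_nonneg_right (pow_le_pow_left₀ hb hab _) (by linarith)
    have h3 := mul_le_mul_of_nonneg_left ih (hb.trans hab)
    rw [h1]
    push_cast
    calc _ ≤ a * ((N + 1) * a ^ N * (a - b)) + a ^ (N + 1) * (a - b) := add_le_add h3 h2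
      _ = _ := by ring

/-- The Łojasiewicz argument: sufficient decrease and a gradient inequality with lagged increments
force finite length. -/
theorem cauchySeq_of_lojasiewicz {X : Type*} [PseudoMetricSpace X] {t : ℕ → X} {V : ℕ → ℝ}
    {l K C : ℝ} {m : ℕ} (hK : 0 ≤ K) (hC : 0 ≤ C) (hl : ∀ k, l ≤ V k)
    (hdesc : ∀ k, dist (t (k + 1)) (t (k + 2)) ^ 2 ≤ K * (V k - V (k + 1)))
    (hanti : ∀ k, V (k + 1) ≤ V k)
    (hloj : ∀ᶠ k in atTop, (V k - l) ^ (1 - 1 / ((m : ℝ) + 2)) ≤ C * dist (t k) (t (k + 1))) :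
    CauchySeq t := by
  obtain ⟨k₀, hk₀⟩ := eventually_atTop.1 hloj
  set δ : ℕ → ℝ := fun k => dist (t (k + k₀)) (t (k + k₀ + 1)) with hδ
  have hδ0 : ∀ k, 0 ≤ δ k := fun k => dist_nonneg
  have hm : (0 : ℝ) < (m : ℝ) + 2 := by positivity
  set a : ℕ → ℝ := fun k => (V (k + k₀) - l) ^ (1 / ((m : ℝ) + 2)) with ha
  have ha0 : ∀ k, 0 ≤ a k := fun k => Real.rpow_nonneg (by linarith [hl (k + k₀)]) _
  have haN : ∀ k, a k ^ (m + 2) = V (k + k₀) - l := fun k => by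
    rw [ha, ← Real.rpow_natCast]
    dsimp only
    rw [← Real.rpow_mul (by linarith [hl (k + k₀)])]
    push_cast
    rw [one_div_mul_cancel hm.ne', Real.rpow_one]
  have haN1 : ∀ k, a k ^ (m + 1) = (V (k + k₀) - l) ^ (1 - 1 / ((m : ℝ) + 2)) := fun k => by
    rw [ha, ← Real.rpow_natCast]
    dsimp only
    rw [← Real.rpow_mul (by linarith [hl (k + k₀)])]
    congr 1
    push_cast
    field_simp
    ring
  have haa : ∀ k, a (k + 1) ≤ a k := fun k => by
    refine Real.rpow_le_rpow (by linarith [hl (k + 1 + k₀)]) ?_ (by positivity)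
    have := hanti (k + k₀)
    rw [show k + 1 + k₀ = k + k₀ + 1 by ring]
    linarith
  set M := K * ((m + 2) * C) with hM
  have hM0 : 0 ≤ M := by positivity
  have hstep : ∀ k, δ (k + 1) ≤ δ k / 2 + M / 2 * (a k - a (k + 1)) := fun k => by
    have h1 : δ (k + 1) ^ 2 ≤ K * (a k ^ (m + 2) - a (k + 1) ^ (m + 2)) := by
      rw [haN, haN]
      have := hdesc (k + k₀)
      simp only [hδ, show k + 1 + k₀ = k + k₀ + 1 by ring]
      convert this using 1
      ring
    have h2 := pow_sub_pow_le_mul (ha0 (k + 1)) (haa k) (m + 1)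
    push_cast at h2
    have h3 : a k ^ (m + 1) ≤ C * δ k := by
      rw [haN1]
      exact hk₀ (k + k₀) (by omega)
    have hd : 0 ≤ a k - a (k + 1) := by linarith [haa k]
    have h4 : δ (k + 1) ^ 2 ≤ M * δ k * (a k - a (k + 1)) := by
      refine h1.trans ?_
      have h5 : a k ^ (m + 2) - a (k + 1) ^ (m + 2) ≤ (m + 2) * (C * δ k) * (a k - a (k + 1)) := by
        refine h2.trans ?_
        rw [show (m : ℝ) + 1 + 1 = m + 2 by ring]
        gcongr
      calc _ ≤ K * ((m + 2) * (C * δ k) * (a k - a (k + 1))) := by gcongr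
        _ = _ := by rw [hM]; ring
    refine abs_le_of_sq_le_sq' ?_ ?_ |>.2
    · nlinarith [sq_nonneg (δ k - M * (a k - a (k + 1)))]
    · have := hδ0 k
      positivity
  have hbound : ∀ N, ∑ k ∈ Finset.range N, δ k ≤ 2 * δ 0 + M * a 0 := by
    have h1 : ∀ N, ∑ k ∈ Finset.range N, δ k + δ N + M * a N ≤ 2 * δ 0 + M * a 0 - δ N := by
      intro N
      induction N with
      | zero => simp; linarith
      | succ N ih =>
        rw [Finset.sum_range_succ]
        linarith [hstep N]
    intro N
    have := h1 N
    have := hδ0 N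
    have := mul_nonneg hM0 (ha0 N)
    linarith
  have hsum : Summable δ := summable_of_sum_range_le hδ0 hbound
  refine cauchySeq_of_summable_dist ((summable_nat_add_iff k₀).1 ?_)
  exact hsum

/-- A primitive of `t ↦ t ^ (p - 1)` on the positive half-line. -/
def powPrimitive (p t : ℝ) : ℝ := if p = 0 then Real.log t else t ^ p / p

/-- The positive branch of `p`-shrinkage, without truncation. -/
def shrinkPos (lam p t : ℝ) : ℝ := t - lam ^ (2 - p) * t ^ (p - 1)

/-- The primitive of `shrinkPos lam p` vanishing at `lam`. -/
def shrinkPot (lam p t : ℝ) : ℝ :=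
  (t ^ 2 - lam ^ 2) / 2 - lam ^ (2 - p) * (powPrimitive p t - powPrimitive p lam)

/-- Scalar `p`-shrinkage as a difference of truncated branches. -/
def scalarShrink (lam p t : ℝ) : ℝ := shrinkPos lam p (max t lam) - shrinkPos lam p (max (-t) lam)

/-- The convex potential whose derivative is `scalarShrink lam p`. -/
def scalarPot (lam p t : ℝ) : ℝ := shrinkPot lam p (max t lam) + shrinkPot lam p (max (-t) lam)

section

variable {lam p : ℝ}

theorem hasDerivAt_powPrimitive {t : ℝ} (ht : 0 < t) :
    HasDerivAt (powPrimitive p) (t ^ (p - 1)) t := by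
  unfold powPrimitive
  by_cases hp : p = 0
  · simp only [hp, if_true]
    refine (Real.hasDerivAt_log ht.ne').congr_deriv ?_
    rw [zero_sub, Real.rpow_neg_one]
  · simp only [hp, if_false]
    refine ((Real.hasDerivAt_rpow_const (p := p) (Or.inl ht.ne')).div_const p).congr_deriv ?_
    field_simp

theorem analyticAt_rpow_const {q t : ℝ} (ht : 0 < t) : AnalyticAt ℝ (fun s => s ^ q) t := by
  refine AnalyticAt.congr (f := fun s => Real.exp (Real.log s * q))
    (((analyticAt_id.log ht).mul analyticAt_const).rexp) ?_
  filter_upwards [lt_mem_nhds ht] with s hs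
  rw [Real.rpow_def_of_pos hs]

theorem analyticAt_powPrimitive {t : ℝ} (ht : 0 < t) : AnalyticAt ℝ (powPrimitive p) t := by
  unfold powPrimitive
  by_cases hp : p = 0
  · simp only [hp, if_true]
    exact analyticAt_id.log ht
  · simp only [hp, if_false]
    exact (analyticAt_rpow_const ht).div_const

theorem analyticAt_shrinkPos {t : ℝ} (ht : 0 < t) : AnalyticAt ℝ (shrinkPos lam p) t :=
  analyticAt_id.sub (analyticAt_const.mul (analyticAt_rpow_const ht))

theorem analyticAt_shrinkPot {t : ℝ} (ht : 0 < t) : AnalyticAt ℝ (shrinkPot lam p) t :=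
  (((analyticAt_id.pow 2).sub analyticAt_const).div_const).sub
    (analyticAt_const.mul ((analyticAt_powPrimitive ht).sub analyticAt_const))

theorem hasDerivAt_shrinkPos {t : ℝ} (ht : 0 < t) :
    HasDerivAt (shrinkPos lam p) (1 + lam ^ (2 - p) * ((1 - p) * t ^ (p - 2))) t := by
  refine ((hasDerivAt_id t).sub
    ((Real.hasDerivAt_rpow_const (p := p - 1) (Or.inl ht.ne')).const_mul (lam ^ (2 - p)))).congr_deriv
      ?_
  rw [show p - 1 - 1 = p - 2 by ring]
  ring

theorem hasDerivAt_shrinkPot {t : ℝ} (ht : 0 < t) :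
    HasDerivAt (shrinkPot lam p) (shrinkPos lam p t) t := by
  refine (((((hasDerivAt_id t).pow 2).sub_const (lam ^ 2)).div_const 2).sub
    (((hasDerivAt_powPrimitive (p := p) ht).sub_const (powPrimitive p lam)).const_mul
      (lam ^ (2 - p)))).congr_deriv ?_
  simp [shrinkPos]

theorem rpow_two_sub_mul_rpow (hlam : 0 < lam) (q : ℝ) : lam ^ (2 - p) * lam ^ (q + p - 2) = lam ^ q := by
  rw [← Real.rpow_add hlam]; congr 1; ring

theorem shrinkPos_self (hlam : 0 < lam) : shrinkPos lam p lam = 0 := by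
  have := rpow_two_sub_mul_rpow (p := p) hlam 1
  rw [show 1 + p - 2 = p - 1 by ring, Real.rpow_one] at this
  simp [shrinkPos, this]

theorem shrinkPot_self : shrinkPot lam p lam = 0 := by simp [shrinkPot]

theorem shrinkPos_monotoneOn (hlam : 0 < lam) (hp : p < 1) :
    MonotoneOn (shrinkPos lam p) (Set.Ioi 0) := by
  intro a ha b _ hab
  have h1 : b ^ (p - 1) ≤ a ^ (p - 1) :=
    Real.rpow_le_rpow_of_nonpos ha hab (by linarith)
  have h2 := mul_le_mul_of_nonneg_left h1 (Real.rpow_pos_of_pos hlam (2 - p)).le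
  unfold shrinkPos
  linarith

theorem shrinkPos_nonneg (hlam : 0 < lam) (hp : p < 1) {t : ℝ} (ht : lam ≤ t) :
    0 ≤ shrinkPos lam p t := by
  rw [← shrinkPos_self (p := p) hlam]
  exact shrinkPos_monotoneOn hlam hp hlam (hlam.trans_le ht) ht

theorem shrinkPot_tangent (hlam : 0 < lam) (hp : p < 1) {a b : ℝ} (ha : 0 < a) (hb : 0 < b) :
    shrinkPos lam p a * (b - a) ≤ shrinkPot lam p b - shrinkPot lam p a := by
  have hmvt : ∀ u v, 0 < u → u < v → ∃ c, u < c ∧ c < v ∧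
      shrinkPot lam p v - shrinkPot lam p u = shrinkPos lam p c * (v - u) := by
    intro u v hu huv
    obtain ⟨c, hc, h⟩ := exists_hasDerivAt_eq_slope (shrinkPot lam p) (shrinkPos lam p) huv
      (fun x hx => (hasDerivAt_shrinkPot (hu.trans_le hx.1)).continuousAt.continuousWithinAt)
      (fun x hx => hasDerivAt_shrinkPot (hu.trans hx.1))
    refine ⟨c, hc.1, hc.2, ?_⟩
    rw [h, div_mul_cancel₀ _ (by linarith : v - u ≠ 0)]
  have hmono := shrinkPos_monotoneOn (lam := lam) (p := p) hlam hp
  rcases lt_trichotomy a b with h | rfl | h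
  · obtain ⟨c, h1, h2, h3⟩ := hmvt a b ha h
    rw [h3]
    exact mul_le_mul_of_nonneg_right (hmono ha (ha.trans h1) h1.le) (by linarith)
  · simp
  · obtain ⟨c, h1, h2, h3⟩ := hmvt b a hb h
    have := mul_le_mul_of_nonneg_right (hmono (hb.trans h1) ha h2.le) (by linarith : 0 ≤ a - b)
    linarith

theorem scalarPot_tangent (hlam : 0 < lam) (hp : p < 1) (a b : ℝ) :
    scalarShrink lam p a * (b - a) ≤ scalarPot lam p b - scalarPot lam p a := by
  have hpos : ∀ s, 0 < max s lam := fun s => lt_max_of_lt_right hlam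
  have h : ∀ a b, shrinkPos lam p (max a lam) * (b - a) ≤
      shrinkPot lam p (max b lam) - shrinkPot lam p (max a lam) := by
    intro a b
    refine le_trans ?_ (shrinkPot_tangent hlam hp (hpos a) (hpos b))
    rcases le_total a lam with h | h
    · rw [max_eq_right h, shrinkPos_self hlam]; simp
    · rw [max_eq_left h]
      exact mul_le_mul_of_nonneg_left (sub_le_sub_right (le_max_left _ _) _)
        (shrinkPos_nonneg hlam hp h)
  have h1 := h a b
  have h2 := h (-a) (-b)
  unfold scalarShrink scalarPot
  linarith

theorem scalarShrink_neg (t : ℝ) : scalarShrink lam p (-t) = -scalarShrink lam p t := by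
  simp [scalarShrink]

theorem scalarPot_neg (t : ℝ) : scalarPot lam p (-t) = scalarPot lam p t := by
  simp [scalarPot, add_comm]

theorem scalarShrink_of_le (hlam : 0 < lam) {t : ℝ} (ht : lam ≤ t) :
    scalarShrink lam p t = shrinkPos lam p t := by
  rw [scalarShrink, max_eq_left ht, max_eq_right (by linarith), shrinkPos_self hlam, sub_zero]

theorem scalarPot_of_le (hlam : 0 < lam) {t : ℝ} (ht : lam ≤ t) :
    scalarPot lam p t = shrinkPot lam p t := by
  rw [scalarPot, max_eq_left ht, max_eq_right (by linarith), shrinkPot_self, add_zero]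

theorem scalarShrink_of_abs_le {t : ℝ} (ht : |t| ≤ lam) : scalarShrink lam p t = 0 := by
  rw [scalarShrink, max_eq_right (abs_le.1 ht).2, max_eq_right (by linarith [(abs_le.1 ht).1]),
    sub_self]

theorem scalarPot_of_abs_le {t : ℝ} (ht : |t| ≤ lam) : scalarPot lam p t = 0 := by
  rw [scalarPot, max_eq_right (abs_le.1 ht).2, max_eq_right (by linarith [(abs_le.1 ht).1]),
    shrinkPot_self, add_zero]

theorem continuous_scalarShrink (hlam : 0 < lam) : Continuous (scalarShrink lam p) := by
  have h : Continuous fun t => shrinkPos lam p (max t lam) := by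
    rw [continuous_iff_continuousAt]
    intro t
    have h1 : ContinuousAt (shrinkPos lam p) (max t lam) :=
      (analyticAt_shrinkPos (lt_max_of_lt_right hlam)).continuousAt
    exact h1.comp (f := fun t => max t lam) (by fun_prop)
  exact h.sub (h.comp continuous_neg)

theorem pshrinkFun_mul_sign (hlam : 0 < lam) (hp : p < 1) (t : ℝ) :
    pshrinkFun lam p |t| * Real.sign t = scalarShrink lam p t := by
  have hpos : ∀ t, 0 < t → pshrinkFun lam p t = scalarShrink lam p t := by
    intro t ht
    rw [pshrinkFun, if_neg ht.not_ge]
    rcases le_total lam t with h | h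
    · rw [scalarShrink_of_le hlam h]
      exact max_eq_left (shrinkPos_nonneg hlam hp h)
    · rw [scalarShrink_of_abs_le (by rwa [abs_of_pos ht])]
      refine max_eq_right ?_
      rw [← shrinkPos_self (p := p) hlam]
      exact shrinkPos_monotoneOn hlam hp ht hlam h
  rcases lt_trichotomy t 0 with h | rfl | h
  · rw [Real.sign_of_neg h, abs_of_neg h, hpos _ (by linarith), scalarShrink_neg]; ring
  · rw [scalarShrink_of_abs_le (by simpa using hlam.le)]; simp
  · rw [Real.sign_of_pos h, abs_of_pos h, hpos _ h, mul_one]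

/-- The scalar penalty `t S(t) - θ(t) - S(t)² / 2` evaluated along the shrinkage map. -/
def scalarPenalty (lam p t : ℝ) : ℝ :=
  t * scalarShrink lam p t - scalarPot lam p t - scalarShrink lam p t ^ 2 / 2

theorem scalarPenalty_neg (t : ℝ) : scalarPenalty lam p (-t) = scalarPenalty lam p t := by
  simp [scalarPenalty, scalarShrink_neg, scalarPot_neg]

theorem scalarPenalty_abs (t : ℝ) : scalarPenalty lam p |t| = scalarPenalty lam p t := by
  rcases abs_choice t with h | h <;> rw [h]
  exact scalarPenalty_neg t

theorem scalarPenalty_of_abs_le {t : ℝ} (ht : |t| ≤ lam) : scalarPenalty lam p t = 0 := by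
  simp [scalarPenalty, scalarShrink_of_abs_le ht, scalarPot_of_abs_le ht]

theorem scalarPenalty_of_le (hlam : 0 < lam) {t : ℝ} (ht : lam ≤ t) :
    scalarPenalty lam p t = lam ^ (2 - p) * (powPrimitive p t - powPrimitive p lam) +
      (lam ^ 2 - (lam ^ (2 - p) * t ^ (p - 1)) ^ 2) / 2 := by
  rw [scalarPenalty, scalarShrink_of_le hlam ht, scalarPot_of_le hlam ht, shrinkPos, shrinkPot]
  ring

theorem powPrimitive_le (hlam : 0 < lam) {t : ℝ} (ht : lam ≤ t) :
    powPrimitive p lam ≤ powPrimitive p t := by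
  have hd : ∀ s ∈ Set.Ioi (0 : ℝ), HasDerivAt (powPrimitive p) (s ^ (p - 1)) s :=
    fun s hs => hasDerivAt_powPrimitive hs
  refine monotoneOn_of_deriv_nonneg (convex_Ioi (0 : ℝ))
    (fun s hs => (hd s hs).continuousAt.continuousWithinAt) ?_ ?_ hlam (hlam.trans_le ht) ht
  · rw [interior_Ioi]
    exact fun s hs => (hd s hs).differentiableAt.differentiableWithinAt
  · rw [interior_Ioi]
    intro s hs
    rw [(hd s hs).deriv]
    exact Real.rpow_nonneg hs.le _

theorem le_scalarPenalty (hlam : 0 < lam) (hp : p < 1) {t : ℝ} (ht : lam ≤ t) :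
    lam ^ (2 - p) * (powPrimitive p t - powPrimitive p lam) ≤ scalarPenalty lam p t := by
  rw [scalarPenalty_of_le hlam ht]
  have h1 : t ^ (p - 1) ≤ lam ^ (p - 1) := Real.rpow_le_rpow_of_nonpos hlam ht (by linarith)
  have h2 := mul_le_mul_of_nonneg_left h1 (Real.rpow_pos_of_pos hlam (2 - p)).le
  have h3 : lam ^ (2 - p) * lam ^ (p - 1) = lam := by
    have := shrinkPos_self (p := p) hlam
    rw [shrinkPos] at this
    linarith
  rw [h3] at h2
  have h4 : 0 ≤ lam ^ (2 - p) * t ^ (p - 1) :=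
    mul_nonneg (Real.rpow_nonneg hlam.le _) (Real.rpow_nonneg (hlam.le.trans ht) _)
  have := pow_le_pow_left₀ h4 h2 2
  linarith

theorem scalarPenalty_nonneg (hlam : 0 < lam) (hp : p < 1) (t : ℝ) : 0 ≤ scalarPenalty lam p t := by
  rw [← scalarPenalty_abs]
  rcases le_total lam |t| with h | h
  · refine le_trans ?_ (le_scalarPenalty hlam hp h)
    exact mul_nonneg (Real.rpow_nonneg hlam.le _) (sub_nonneg.2 (powPrimitive_le hlam h))
  · rw [scalarPenalty_of_abs_le (by simpa using h)]

theorem eventually_lt_scalarPenalty (hlam : 0 < lam) (hp : p < 1) {B : ℝ}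
    (hB : 0 ≤ p ∨ p < 0 ∧ B < lam ^ 2 * (p - 2) / (2 * p)) :
    ∀ᶠ t in atTop, B < scalarPenalty lam p t := by
  have hk := Real.rpow_pos_of_pos hlam (2 - p)
  rcases hB with h0 | ⟨h0, hB⟩
  · have hL : Tendsto (powPrimitive p) atTop atTop := by
      unfold powPrimitive
      by_cases hp0 : p = 0
      · simp only [hp0, if_true]; exact Real.tendsto_log_atTop
      · simp only [hp0, if_false]
        have : 0 < p := lt_of_le_of_ne h0 (Ne.symm hp0)
        exact (tendsto_rpow_atTop this).atTop_div_const this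
    have h1 : Tendsto (fun t => lam ^ (2 - p) * (powPrimitive p t - powPrimitive p lam))
        atTop atTop := (tendsto_atTop_add_const_right _ (-powPrimitive p lam) hL).const_mul_atTop hk
    filter_upwards [h1.eventually_gt_atTop B, eventually_ge_atTop lam] with t h2 h3
    exact h2.trans_le (le_scalarPenalty hlam hp h3)
  · have hL : Tendsto (powPrimitive p) atTop (𝓝 0) := by
      unfold powPrimitive
      simp only [h0.ne, if_false]
      have := (tendsto_rpow_neg_atTop (y := -p) (by linarith)).div_const p
      simpa using this
    have hT : Tendsto (fun t : ℝ => t ^ (p - 1)) atTop (𝓝 0) := by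
      have := tendsto_rpow_neg_atTop (y := -(p - 1)) (by linarith)
      simpa using this
    have h1 : Tendsto (fun t => lam ^ (2 - p) * (powPrimitive p t - powPrimitive p lam) +
      (lam ^ 2 - (lam ^ (2 - p) * t ^ (p - 1)) ^ 2) / 2) atTop
      (𝓝 (lam ^ (2 - p) * (0 - powPrimitive p lam) +
        (lam ^ 2 - (lam ^ (2 - p) * 0) ^ 2) / 2)) :=
      ((hL.sub_const _).const_mul _).add ((((hT.const_mul _).pow 2).const_sub _).div_const 2)
    have h2 : lam ^ (2 - p) * (0 - powPrimitive p lam) +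
        (lam ^ 2 - (lam ^ (2 - p) * 0) ^ 2) / 2 = lam ^ 2 * (p - 2) / (2 * p) := by
      have h3 : lam ^ (2 - p) * lam ^ p = lam ^ 2 := by
        rw [← Real.rpow_add hlam, sub_add_cancel]; norm_num
      have h4 : lam ^ (2 - p) * (0 - powPrimitive p lam) = - (lam ^ 2 / p) := by
        simp only [powPrimitive, h0.ne, if_false]
        rw [← h3]; ring
      rw [h4]
      have := h0.ne
      field_simp
      ring
    rw [h2] at h1
    filter_upwards [h1.eventually (lt_mem_nhds hB), eventually_ge_atTop lam] with t h3 h4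
    rwa [scalarPenalty_of_le hlam h4]

theorem exists_abs_le_of_scalarPenalty_le (hlam : 0 < lam) (hp : p < 1) {B : ℝ}
    (hB : 0 ≤ p ∨ p < 0 ∧ B < lam ^ 2 * (p - 2) / (2 * p)) :
    ∃ R, ∀ t, scalarPenalty lam p t ≤ B → |t| ≤ R := by
  obtain ⟨R, hR⟩ := eventually_atTop.1 (eventually_lt_scalarPenalty hlam hp hB)
  refine ⟨R, fun t ht => ?_⟩
  by_contra! h
  have := hR |t| h.le
  rw [scalarPenalty_abs] at this
  linarith

/-- Along an ultrafilter, shrinkage and its potential agree with analytic branches. -/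
theorem exists_analytic_branch (hlam : 0 < lam) (hp : p < 1) (U : Ultrafilter ℕ) {t : ℕ → ℝ}
    {a : ℝ} (ht : Tendsto t U (𝓝 a)) :
    ∃ (ξ η ξ' : ℝ → ℝ), AnalyticAt ℝ ξ a ∧ AnalyticAt ℝ η a ∧ ∀ᶠ k in (U : Filter ℕ),
      ξ (t k) = scalarShrink lam p (t k) ∧
      η (t k) = t k * scalarShrink lam p (t k) - scalarPot lam p (t k) ∧
      HasDerivAt ξ (ξ' (t k)) (t k) ∧ HasDerivAt η (t k * ξ' (t k)) (t k) ∧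
      |ξ' (t k)| ≤ 2 - p := by
  have hconj : ∀ s, 0 < s → HasDerivAt (fun s => s * shrinkPos lam p s - shrinkPot lam p s)
      (s * (1 + lam ^ (2 - p) * ((1 - p) * s ^ (p - 2)))) s := by
    intro s hs
    refine (((hasDerivAt_id s).mul (hasDerivAt_shrinkPos hs)).sub
      (hasDerivAt_shrinkPot hs)).congr_deriv ?_
    simp
  have hbd : ∀ s, lam ≤ s → |1 + lam ^ (2 - p) * ((1 - p) * s ^ (p - 2))| ≤ 2 - p := by
    intro s hs
    have h1 : s ^ (p - 2) ≤ lam ^ (p - 2) := Real.rpow_le_rpow_of_nonpos hlam hs (by linarith)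
    have h2 : lam ^ (2 - p) * lam ^ (p - 2) = 1 := by
      rw [← Real.rpow_add hlam]; simp
    have h3 := mul_le_mul_of_nonneg_left h1 (Real.rpow_pos_of_pos hlam (2 - p)).le
    have h4 : 0 ≤ lam ^ (2 - p) * s ^ (p - 2) :=
      mul_nonneg (Real.rpow_nonneg hlam.le _) (Real.rpow_nonneg (hlam.le.trans hs) _)
    rw [h2] at h3
    rw [abs_of_nonneg] <;> nlinarith
  have han : ∀ s, 0 < s → AnalyticAt ℝ (fun s => s * shrinkPos lam p s - shrinkPot lam p s) s :=
    fun s hs => (analyticAt_id.mul (analyticAt_shrinkPos hs)).sub (analyticAt_shrinkPot hs)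
  have hcases : (∀ᶠ k in (U : Filter ℕ), lam ≤ t k) ∨ (∀ᶠ k in (U : Filter ℕ), lam ≤ -t k) ∨
      ∀ᶠ k in (U : Filter ℕ), |t k| ≤ lam := by
    rw [← Ultrafilter.eventually_or, ← Ultrafilter.eventually_or]
    refine Eventually.of_forall fun k => ?_
    rcases le_total lam (t k) with h | h
    · exact Or.inl h
    · rcases le_total lam (-t k) with h' | h'
      · exact Or.inr (Or.inl h')
      · exact Or.inr (Or.inr (abs_le.2 ⟨by linarith, h⟩))
  rcases hcases with h | h | h
  · have ha : 0 < a := hlam.trans_le (ge_of_tendsto ht h)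
    refine ⟨_, _, fun s => 1 + lam ^ (2 - p) * ((1 - p) * s ^ (p - 2)),
      analyticAt_shrinkPos (lam := lam) (p := p) ha, han a ha, h.mono fun k hk => ?_⟩
    have hk0 := hlam.trans_le hk
    exact ⟨(scalarShrink_of_le hlam hk).symm,
      by rw [scalarShrink_of_le hlam hk, scalarPot_of_le hlam hk],
      hasDerivAt_shrinkPos hk0, hconj _ hk0, hbd _ hk⟩
  · have ha : 0 < -a := hlam.trans_le (ge_of_tendsto ht.neg h)
    refine ⟨fun s => -shrinkPos lam p (-s),
      fun s => (-s) * shrinkPos lam p (-s) - shrinkPot lam p (-s),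
      fun s => 1 + lam ^ (2 - p) * ((1 - p) * (-s) ^ (p - 2)),
      ((analyticAt_shrinkPos ha).comp_of_eq analyticAt_id.neg rfl).neg,
      (han (-a) ha).comp_of_eq (f := fun s => -s) analyticAt_id.neg rfl,
      h.mono fun k hk => ?_⟩
    have hk0 := hlam.trans_le hk
    refine ⟨?_, ?_, ?_, ?_, hbd _ hk⟩
    · dsimp only
      rw [← scalarShrink_of_le hlam hk, scalarShrink_neg, neg_neg]
    · dsimp only
      rw [← scalarShrink_of_le hlam hk, ← scalarPot_of_le hlam hk, scalarShrink_neg, scalarPot_neg]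
      ring
    · refine ((hasDerivAt_shrinkPos (lam := lam) (p := p) hk0).comp (t k)
        (hasDerivAt_neg (t k))).neg.congr_deriv ?_
      ring
    · simpa [Function.comp_def] using (hconj _ hk0).comp (t k) (hasDerivAt_neg (t k))
  · refine ⟨fun _ => 0, fun _ => 0, fun _ => 0, analyticAt_const, analyticAt_const,
      h.mono fun k hk => ⟨?_, ?_, hasDerivAt_const _ _, ?_, ?_⟩⟩
    · rw [scalarShrink_of_abs_le hk]
    · simp [scalarShrink_of_abs_le hk, scalarPot_of_abs_le hk]
    · simpa using hasDerivAt_const (t k) (0 : ℝ)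
    · simp; linarith

end

section

variable {m n : ℕ}

/-- The gradient step `s ↦ s - Aᵀ (A s - b)`. -/
def gradStep (A : Matrix (Fin m) (Fin n) ℝ) (b : Fin m → ℝ) (s : Fin n → ℝ) : Fin n → ℝ :=
  s - A.transpose.mulVec (A.mulVec s - b)

/-- The shrinkage objective expressed through separable branches `ξ` and `η`. -/
def branchEnergy (A : Matrix (Fin m) (Fin n) ℝ) (b : Fin m → ℝ) (ξ η : Fin n → ℝ → ℝ)
    (t : Fin n → ℝ) : ℝ :=
  ∑ i, (η i (t i) - ξ i (t i) ^ 2 / 2) +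
    ∑ j, (A.mulVec (fun i => ξ i (t i)) j - b j) ^ 2 / 2

theorem transpose_mulVec_dotProduct (A : Matrix (Fin m) (Fin n) ℝ) (z : Fin m → ℝ)
    (v : Fin n → ℝ) : A.transpose.mulVec z ⬝ᵥ v = z ⬝ᵥ A.mulVec v := by
  rw [Matrix.mulVec_transpose, Matrix.dotProduct_mulVec]

theorem analyticAt_branchEnergy (A : Matrix (Fin m) (Fin n) ℝ) (b : Fin m → ℝ)
    {ξ η : Fin n → ℝ → ℝ} {a : Fin n → ℝ} (hξ : ∀ i, AnalyticAt ℝ (ξ i) (a i))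
    (hη : ∀ i, AnalyticAt ℝ (η i) (a i)) : AnalyticAt ℝ (branchEnergy A b ξ η) a := by
  have h : ∀ (f : Fin n → ℝ → ℝ), (∀ i, AnalyticAt ℝ (f i) (a i)) → ∀ i,
      AnalyticAt ℝ (fun t : Fin n → ℝ => f i (t i)) a :=
    fun f hf i => (hf i).comp_of_eq (analyticAt_coord i a) rfl
  have hξ' := h ξ hξ
  have hη' := h η hη
  unfold branchEnergy
  refine AnalyticAt.add ?_ ?_
  · exact Finset.analyticAt_fun_sum _ fun i _ => (hη' i).sub ((hξ' i).pow 2).div_const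
  · refine Finset.analyticAt_fun_sum _ fun j _ => AnalyticAt.div_const (AnalyticAt.pow ?_ 2)
    refine AnalyticAt.sub ?_ analyticAt_const
    exact Finset.analyticAt_fun_sum Finset.univ
      (f := fun i (t : Fin n → ℝ) => A j i * ξ i (t i)) fun i _ => analyticAt_const.mul (hξ' i)

theorem hasDerivAt_branchEnergy_line (A : Matrix (Fin m) (Fin n) ℝ) (b : Fin m → ℝ)
    {ξ η : Fin n → ℝ → ℝ} {ξ' : Fin n → ℝ} {t : Fin n → ℝ}
    (hξ : ∀ i, HasDerivAt (ξ i) (ξ' i) (t i)) (hη : ∀ i, HasDerivAt (η i) (t i * ξ' i) (t i))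
    (v : Fin n → ℝ) :
    HasDerivAt (fun s : ℝ => branchEnergy A b ξ η (t + s • v))
      (∑ i, (t i - gradStep A b (fun i => ξ i (t i)) i) * (ξ' i * v i)) 0 := by
  have hline : ∀ i, HasDerivAt (fun s : ℝ => t i + s * v i) (v i) 0 := fun i => by
    simpa using ((hasDerivAt_id (0 : ℝ)).mul_const (v i)).const_add (t i)
  have hcomp : ∀ (f : ℝ → ℝ) (f' : ℝ) (i : Fin n), HasDerivAt f f' (t i) →
      HasDerivAt (fun s : ℝ => f (t i + s * v i)) (f' * v i) 0 := fun f f' i hf => by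
    have : HasDerivAt f f' (t i + 0 * v i) := by simpa using hf
    exact this.comp (0 : ℝ) (hline i)
  have h1 : HasDerivAt (fun s : ℝ => ∑ i, (η i (t i + s * v i) - ξ i (t i + s * v i) ^ 2 / 2))
      (∑ i, (t i - ξ i (t i)) * (ξ' i * v i)) 0 := by
    refine HasDerivAt.fun_sum fun i _ => ?_
    refine ((hcomp _ _ i (hη i)).sub (((hcomp _ _ i (hξ i)).pow 2).div_const 2)).congr_deriv ?_
    simp
    ring
  have h2 : HasDerivAt (fun s : ℝ => ∑ j,
      (A.mulVec (fun i => ξ i (t i + s * v i)) j - b j) ^ 2 / 2)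
      (∑ j, (A.mulVec (fun i => ξ i (t i)) j - b j) * A.mulVec (fun i => ξ' i * v i) j) 0 := by
    refine HasDerivAt.fun_sum fun j _ => ?_
    have h3 : HasDerivAt (fun s : ℝ => A.mulVec (fun i => ξ i (t i + s * v i)) j - b j)
        (A.mulVec (fun i => ξ' i * v i) j) 0 :=
      (HasDerivAt.fun_sum (u := Finset.univ) fun i _ => (hcomp _ _ i (hξ i)).const_mul (A j i)).sub_const (b j)
    refine ((h3.pow 2).div_const 2).congr_deriv ?_
    simp
    ring
  refine (h1.add h2).congr_deriv ?_
  have h4 := transpose_mulVec_dotProduct A (A.mulVec (fun i => ξ i (t i)) - b)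
    (fun i => ξ' i * v i)
  simp only [dotProduct, Pi.sub_apply] at h4
  rw [← h4, ← Finset.sum_add_distrib]
  refine Finset.sum_congr rfl fun i _ => ?_
  simp only [gradStep, Pi.sub_apply]
  ring

theorem norm_fderiv_branchEnergy_le (A : Matrix (Fin m) (Fin n) ℝ) (b : Fin m → ℝ)
    {ξ η : Fin n → ℝ → ℝ} {ξ' : Fin n → ℝ} {t : Fin n → ℝ} {C : ℝ} (hC : 0 ≤ C)
    (hξ : ∀ i, HasDerivAt (ξ i) (ξ' i) (t i)) (hη : ∀ i, HasDerivAt (η i) (t i * ξ' i) (t i))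
    (hC' : ∀ i, |ξ' i| ≤ C) :
    ‖fderiv ℝ (branchEnergy A b ξ η) t‖ ≤
      n * C * ‖t - gradStep A b (fun i => ξ i (t i))‖ := by
  by_cases hd : DifferentiableAt ℝ (branchEnergy A b ξ η) t
  swap
  · rw [fderiv_zero_of_not_differentiableAt hd, norm_zero]
    positivity
  refine ContinuousLinearMap.opNorm_le_bound _ (by positivity) fun v => ?_
  have hl : HasDerivAt (fun s : ℝ => t + s • v) v 0 := by
    simpa using ((hasDerivAt_id (0 : ℝ)).smul_const v).const_add t
  have h1 : HasDerivAt (fun s : ℝ => branchEnergy A b ξ η (t + s • v))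
      (fderiv ℝ (branchEnergy A b ξ η) t v) 0 := by
    have h2 : HasFDerivAt (branchEnergy A b ξ η) (fderiv ℝ (branchEnergy A b ξ η) t)
      (t + (0 : ℝ) • v) := by simpa using hd.hasFDerivAt
    exact h2.comp_hasDerivAt (0 : ℝ) hl
  rw [h1.unique (hasDerivAt_branchEnergy_line A b hξ hη v), Real.norm_eq_abs]
  set w := t - gradStep A b (fun i => ξ i (t i)) with hw
  calc |∑ i, (t i - gradStep A b (fun i => ξ i (t i)) i) * (ξ' i * v i)|
      ≤ ∑ i, |(t i - gradStep A b (fun i => ξ i (t i)) i) * (ξ' i * v i)| :=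
        Finset.abs_sum_le_sum_abs _ _
    _ ≤ ∑ _i : Fin n, ‖w‖ * (C * ‖v‖) := by
        refine Finset.sum_le_sum fun i _ => ?_
        rw [abs_mul, abs_mul]
        have h3 : |t i - gradStep A b (fun i => ξ i (t i)) i| ≤ ‖w‖ := norm_le_pi_norm w i
        have h4 : |v i| ≤ ‖v‖ := norm_le_pi_norm v i
        have := hC' i
        gcongr
    _ = n * C * ‖w‖ * ‖v‖ := by simp; ring

theorem l2_sq (v : Fin n → ℝ) : l2 v ^ 2 = v ⬝ᵥ v := by
  rw [l2, Real.sq_sqrt (Finset.sum_nonneg fun i _ => sq_nonneg _)]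
  simp [dotProduct, sq]

theorem l2_smul (c : ℝ) (v : Fin n → ℝ) : l2 (c • v) = |c| * l2 v := by
  simp only [l2, Pi.smul_apply, smul_eq_mul, mul_pow, ← Finset.mul_sum]
  rw [Real.sqrt_mul (sq_nonneg c), Real.sqrt_sq_eq_abs]

theorem l2_mulVec_le {A : Matrix (Fin m) (Fin n) ℝ} (hA : specNorm A ≤ 1) (v : Fin n → ℝ) :
    l2 (A.mulVec v) ≤ l2 v := by
  have hbdd : BddAbove {c | ∃ v : Fin n → ℝ, l2 v ≤ 1 ∧ c = l2 (A.mulVec v)} := by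
    refine ⟨Real.sqrt (∑ j, ∑ i, A j i ^ 2), ?_⟩
    rintro c ⟨v, hv, rfl⟩
    refine Real.sqrt_le_sqrt (Finset.sum_le_sum fun j _ => ?_)
    have h1 : (A.mulVec v j) ^ 2 ≤ (∑ i, A j i ^ 2) * ∑ i, v i ^ 2 :=
      Finset.sum_mul_sq_le_sq_mul_sq Finset.univ (A j) v
    have h2 : ∑ i, v i ^ 2 ≤ 1 := by
      simpa [l2] using hv
    exact h1.trans (mul_le_of_le_one_right (Finset.sum_nonneg fun i _ => sq_nonneg _) h2)
  have h0 : 0 ≤ l2 v := Real.sqrt_nonneg _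
  rcases h0.eq_or_lt with h | h
  · have hv : v = 0 := by
      have h2 := l2_sq v
      rw [← h] at h2
      exact dotProduct_self_eq_zero.1 (by simpa using h2.symm)
    simp [hv, l2]
  · have h3 : l2 (A.mulVec ((l2 v)⁻¹ • v)) ≤ specNorm A :=
      le_csSup hbdd ⟨_, by rw [l2_smul, abs_of_pos (inv_pos.2 h), inv_mul_cancel₀ h.ne'], rfl⟩
    rw [Matrix.mulVec_smul, l2_smul, abs_of_pos (inv_pos.2 h)] at h3
    have h4 := h3.trans hA
    rwa [inv_mul_le_iff₀ h, mul_one] at h4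

theorem mulVec_dotProduct_self_le {A : Matrix (Fin m) (Fin n) ℝ} (hA : specNorm A ≤ 1)
    (v : Fin n → ℝ) : A.mulVec v ⬝ᵥ A.mulVec v ≤ v ⬝ᵥ v := by
  rw [← l2_sq, ← l2_sq]
  exact pow_le_pow_left₀ (Real.sqrt_nonneg _) (l2_mulVec_le hA v) 2

theorem dotProduct_self_nonneg' (v : Fin n → ℝ) : 0 ≤ v ⬝ᵥ v := by
  rw [← l2_sq]; positivity

theorem transpose_mulVec_dotProduct_self_le {A : Matrix (Fin m) (Fin n) ℝ} (hA : specNorm A ≤ 1)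
    (z : Fin m → ℝ) : A.transpose.mulVec z ⬝ᵥ A.transpose.mulVec z ≤ z ⬝ᵥ z := by
  set w := A.transpose.mulVec z with hw
  have h1 : w ⬝ᵥ w = z ⬝ᵥ A.mulVec w := transpose_mulVec_dotProduct A z w
  have h2 := mulVec_dotProduct_self_le hA w
  have h3 := dotProduct_self_nonneg' (z - A.mulVec w)
  simp only [sub_dotProduct, dotProduct_sub, dotProduct_comm (A.mulVec w) z] at h3
  linarith

/-- The IPS map in the variable preceding shrinkage. -/
def shrinkGradStep (lam p : ℝ) (A : Matrix (Fin m) (Fin n) ℝ) (b : Fin m → ℝ) (t : Fin n → ℝ) :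
    Fin n → ℝ := gradStep A b fun i => scalarShrink lam p (t i)

/-- The shrinkage objective in the variable preceding shrinkage. -/
def shrinkEnergy (lam p : ℝ) (A : Matrix (Fin m) (Fin n) ℝ) (b : Fin m → ℝ) (t : Fin n → ℝ) : ℝ :=
  branchEnergy A b (fun _ => scalarShrink lam p)
    (fun _ s => s * scalarShrink lam p s - scalarPot lam p s) t

theorem shrinkEnergy_eq (lam p : ℝ) (A : Matrix (Fin m) (Fin n) ℝ) (b : Fin m → ℝ)
    (t : Fin n → ℝ) : shrinkEnergy lam p A b t = ∑ i, scalarPenalty lam p (t i) +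
      ∑ j, (A.mulVec (fun i => scalarShrink lam p (t i)) j - b j) ^ 2 / 2 := rfl

variable {lam p : ℝ} {A : Matrix (Fin m) (Fin n) ℝ} {b : Fin m → ℝ}

theorem scalarPenalty_le_shrinkEnergy (hlam : 0 < lam) (hp : p < 1) (t : Fin n → ℝ) (i : Fin n) :
    scalarPenalty lam p (t i) ≤ shrinkEnergy lam p A b t := by
  rw [shrinkEnergy_eq]
  have h1 : scalarPenalty lam p (t i) ≤ ∑ i, scalarPenalty lam p (t i) :=
    Finset.single_le_sum (f := fun i => scalarPenalty lam p (t i))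
      (fun i _ => scalarPenalty_nonneg hlam hp (t i)) (Finset.mem_univ i)
  have h2 : 0 ≤ ∑ j, (A.mulVec (fun i => scalarShrink lam p (t i)) j - b j) ^ 2 / 2 :=
    Finset.sum_nonneg fun j _ => by positivity
  linarith

theorem shrinkEnergy_nonneg (hlam : 0 < lam) (hp : p < 1) (t : Fin n → ℝ) :
    0 ≤ shrinkEnergy lam p A b t := by
  rw [shrinkEnergy_eq]
  exact add_nonneg (Finset.sum_nonneg fun i _ => scalarPenalty_nonneg hlam hp (t i))
    (Finset.sum_nonneg fun j _ => by positivity)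

theorem shrinkEnergy_zero (hlam : 0 < lam) : shrinkEnergy lam p A b 0 = l2 b ^ 2 / 2 := by
  have h : |(0 : ℝ)| ≤ lam := by simpa using hlam.le
  rw [shrinkEnergy_eq, l2_sq]
  have h2 : (fun i : Fin n => scalarShrink lam p ((0 : Fin n → ℝ) i)) = 0 := by
    ext i; simp [scalarShrink_of_abs_le h]
  rw [h2]
  simp [scalarPenalty_of_abs_le h, dotProduct, Finset.sum_div, sq]

theorem shrinkEnergy_descent (hlam : 0 < lam) (hp : p < 1) (hA : specNorm A ≤ 1)
    (t : Fin n → ℝ) :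
    dist (shrinkGradStep lam p A b t) (shrinkGradStep lam p A b (shrinkGradStep lam p A b t)) ^ 2 ≤
      2 * (shrinkEnergy lam p A b t - shrinkEnergy lam p A b (shrinkGradStep lam p A b t)) := by
  set s : Fin n → ℝ := fun i => scalarShrink lam p (t i) with hs
  set t' := shrinkGradStep lam p A b t with ht'
  set s' : Fin n → ℝ := fun i => scalarShrink lam p (t' i) with hs'
  set d := s - s' with hd
  set r := A.mulVec s - b with hr
  have ht1 : t' = s - A.transpose.mulVec r := rfl
  have hr' : A.mulVec s' - b = r - A.mulVec d := by
    rw [hr, hd, Matrix.mulVec_sub]; abel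
  have ht2 : shrinkGradStep lam p A b t' = s' - A.transpose.mulVec (r - A.mulVec d) := by
    rw [← hr']; rfl
  have hdiff : t' - shrinkGradStep lam p A b t' = d - A.transpose.mulVec (A.mulVec d) := by
    have h6 : s' = s - d := by rw [hd]; abel
    have habel : ∀ e f u w : Fin n → ℝ, e - u - (e - f - (u - w)) = f - w := by
      intros; abel
    rw [ht2, Matrix.mulVec_sub _ r, ht1, h6]
    exact habel _ _ _ _
  set z := A.mulVec d with hz
  have hnorm : dist t' (shrinkGradStep lam p A b t') ^ 2 ≤ d ⬝ᵥ d - z ⬝ᵥ z := by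
    have h1 : dist t' (shrinkGradStep lam p A b t') ≤
        l2 (t' - shrinkGradStep lam p A b t') := by
      rw [dist_eq_norm]
      refine (pi_norm_le_iff_of_nonneg (Real.sqrt_nonneg _)).2 fun i => ?_
      rw [Real.norm_eq_abs]
      refine Real.abs_le_sqrt ?_
      exact Finset.single_le_sum (f := fun i => (t' - shrinkGradStep lam p A b t') i ^ 2)
        (fun i _ => sq_nonneg _) (Finset.mem_univ i)
    refine (pow_le_pow_left₀ dist_nonneg h1 2).trans ?_
    rw [l2_sq, hdiff]
    have h2 := transpose_mulVec_dotProduct_self_le hA z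
    have h3 := transpose_mulVec_dotProduct A z d
    rw [← hz] at h3
    simp only [sub_dotProduct, dotProduct_sub, dotProduct_comm d (A.transpose.mulVec z), h3]
    linarith
  refine hnorm.trans ?_
  have hE : ∀ u : Fin n → ℝ, shrinkEnergy lam p A b u =
      ∑ i, (u i * scalarShrink lam p (u i) - scalarPot lam p (u i)) -
        ((fun i => scalarShrink lam p (u i)) ⬝ᵥ fun i => scalarShrink lam p (u i)) / 2 +
      ((A.mulVec (fun i => scalarShrink lam p (u i)) - b) ⬝ᵥ
        (A.mulVec (fun i => scalarShrink lam p (u i)) - b)) / 2 := by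
    intro u
    rw [shrinkEnergy_eq]
    simp only [scalarPenalty, dotProduct, Finset.sum_div, ← Finset.sum_sub_distrib, Pi.sub_apply,
      sq]
  have hbreg : t' ⬝ᵥ d ≤ ∑ i, (t i * s i - scalarPot lam p (t i)) -
      ∑ i, (t' i * s' i - scalarPot lam p (t' i)) := by
    rw [← Finset.sum_sub_distrib, dotProduct]
    refine Finset.sum_le_sum fun i _ => ?_
    have := scalarPot_tangent hlam hp (t i) (t' i)
    simp only [hd, Pi.sub_apply, hs, hs'] at this ⊢
    linarith
  have h5 : t' ⬝ᵥ d = s ⬝ᵥ d - r ⬝ᵥ z := by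
    rw [ht1, sub_dotProduct, transpose_mulVec_dotProduct]
  have h6 : s' = s - d := by rw [hd]; abel
  have hE1 := hE t
  have hE2 := hE t'
  rw [← hs, ← hr] at hE1
  rw [← hs', hr'] at hE2
  have h7 : s' ⬝ᵥ s' = s ⬝ᵥ s - 2 * (s ⬝ᵥ d) + d ⬝ᵥ d := by
    rw [h6]
    simp only [sub_dotProduct, dotProduct_sub, dotProduct_comm d s]
    ring
  have h8 : (r - z) ⬝ᵥ (r - z) = r ⬝ᵥ r - 2 * (r ⬝ᵥ z) + z ⬝ᵥ z := by
    simp only [sub_dotProduct, dotProduct_sub, dotProduct_comm z r]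
    ring
  rw [h7, h8] at hE2
  linarith

theorem shrinkGradStep_lojasiewicz (hlam : 0 < lam) (hp : p < 1) {t : ℕ → Fin n → ℝ}
    (hbdd : ∃ R, ∀ k, ‖t k‖ ≤ R) {l : ℝ}
    (hl : Tendsto (fun k => shrinkEnergy lam p A b (t k)) atTop (𝓝 l)) :
    ∃ M : ℕ, ∀ᶠ k in atTop, |shrinkEnergy lam p A b (t k) - l| ^ (1 - 1 / ((M : ℝ) + 2)) ≤
      (M + 2) * dist (t k) (shrinkGradStep lam p A b (t k)) := by
  have hsmall : ∀ᶠ k in atTop, |shrinkEnergy lam p A b (t k) - l| ≤ 1 := by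
    have : Tendsto (fun k => |shrinkEnergy lam p A b (t k) - l|) atTop (𝓝 |l - l|) :=
      (hl.sub_const l).abs
    exact this.eventually (ge_mem_nhds (by simp))
  refine exists_eventually_of_forall_ultrafilter ?_ ?_
  · filter_upwards [hsmall] with k hk M M' hM h
    exact rpow_exponent_mono (abs_nonneg _) hk dist_nonneg hM h
  intro U hU
  obtain ⟨R, hR⟩ := hbdd
  obtain ⟨a, -, ha⟩ := (isCompact_closedBall (0 : Fin n → ℝ) R).ultrafilter_le_nhds (U.map t) (by
    rw [le_principal_iff]
    exact mem_map.2 (univ_mem' fun k => by simpa using hR k))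
  have ha' : Tendsto t U (𝓝 a) := ha
  choose ξ η ξ' hξ hη hev using fun i =>
    exists_analytic_branch hlam hp U (tendsto_pi_nhds.1 ha' i)
  have hev' := eventually_all.2 hev
  have hE : ∀ᶠ k in (U : Filter ℕ), branchEnergy A b ξ η (t k) = shrinkEnergy lam p A b (t k) := by
    filter_upwards [hev'] with k hk
    simp only [shrinkEnergy, branchEnergy, fun i => (hk i).1, fun i => (hk i).2.1]
  have han := analyticAt_branchEnergy A b hξ hη
  have hlim : branchEnergy A b ξ η a = l :=
    tendsto_nhds_unique ((han.continuousAt.tendsto.comp ha').congr' hE) (hl.mono_left hU)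
  obtain ⟨N, hN, C, hC, hloj⟩ := exists_lojasiewicz U han ha'
  set B : ℝ := n * (2 - p) with hB
  have hB0 : 0 ≤ B := mul_nonneg (Nat.cast_nonneg n) (by linarith)
  obtain ⟨M, hM⟩ := exists_nat_ge (max (N : ℝ) (C * B ^ N))
  refine ⟨M, ?_⟩
  filter_upwards [hev', hE, hloj, hU hsmall] with k h1 h2 h3 h4
  have hgrad := norm_fderiv_branchEnergy_le A b (by linarith : (0 : ℝ) ≤ 2 - p)
    (fun i => (h1 i).2.2.1) (fun i => (h1 i).2.2.2.1) (fun i => (h1 i).2.2.2.2)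
  have hstep : gradStep A b (fun i => ξ i (t k i)) = shrinkGradStep lam p A b (t k) := by
    simp only [shrinkGradStep, fun i => (h1 i).1]
  rw [hstep, ← dist_eq_norm] at hgrad
  rw [h2, hlim] at h3
  refine rpow_le_mul_of_pow_le (C := C * B ^ N) hN (abs_nonneg _) h4 dist_nonneg ?_ ?_ ?_
  · refine h3.trans ?_
    calc _ ≤ C * |shrinkEnergy lam p A b (t k) - l| *
          (B * dist (t k) (shrinkGradStep lam p A b (t k))) ^ N := by gcongr
      _ = _ := by rw [mul_pow]; ring
  · have : (N : ℝ) ≤ M := (le_max_left _ _).trans hM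
    have : N ≤ M := by exact_mod_cast this
    omega
  · linarith [(le_max_right _ _).trans hM]

theorem exists_tendsto_shrinkGradStep (hlam : 0 < lam) (hp : p < 1) (hA : specNorm A ≤ 1)
    {t : ℕ → Fin n → ℝ} (ht : ∀ k, t (k + 1) = shrinkGradStep lam p A b (t k))
    (hcase : 0 ≤ p ∨ p < 0 ∧ shrinkEnergy lam p A b (t 0) < lam ^ 2 * (p - 2) / (2 * p)) :
    ∃ a, Tendsto t atTop (𝓝 a) := by
  have hdesc : ∀ k, dist (t (k + 1)) (t (k + 2)) ^ 2 ≤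
      2 * (shrinkEnergy lam p A b (t k) - shrinkEnergy lam p A b (t (k + 1))) := by
    intro k
    rw [ht (k + 1), ht k]
    exact shrinkEnergy_descent hlam hp hA (t k)
  have hanti : Antitone fun k => shrinkEnergy lam p A b (t k) :=
    antitone_nat_of_succ_le fun k => by nlinarith [hdesc k, sq_nonneg (dist (t (k + 1)) (t (k + 2)))]
  have hbelow : BddBelow (Set.range fun k => shrinkEnergy lam p A b (t k)) :=
    ⟨0, by rintro _ ⟨k, rfl⟩; exact shrinkEnergy_nonneg hlam hp _⟩
  have hl := tendsto_atTop_ciInf hanti hbelow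
  have hge : ∀ k, _ ≤ _ := fun k => ciInf_le hbelow k
  set l := ⨅ k, shrinkEnergy lam p A b (t k) with hldef
  have hbdd : ∃ R, ∀ k, ‖t k‖ ≤ R := by
    obtain ⟨R, hR⟩ := exists_abs_le_of_scalarPenalty_le hlam hp hcase
    refine ⟨max R 0, fun k => (pi_norm_le_iff_of_nonneg (le_max_right _ _)).2 fun i => ?_⟩
    refine le_max_of_le_left (hR _ ?_)
    exact (scalarPenalty_le_shrinkEnergy hlam hp (t k) i).trans (hanti (Nat.zero_le k))
  obtain ⟨M, hM⟩ := shrinkGradStep_lojasiewicz hlam hp hbdd hl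
  refine cauchySeq_tendsto_of_complete (cauchySeq_of_lojasiewicz (m := M) (l := l)
    (V := fun k => shrinkEnergy lam p A b (t k)) zero_le_two (C := (M : ℝ) + 2) (by positivity)
    hge hdesc (fun k => hanti (Nat.le_succ k)) ?_)
  filter_upwards [hM] with k hk
  rw [abs_of_nonneg (sub_nonneg.2 (hge k)), ← ht k] at hk
  exact hk

end

theorem Sp_eq {lam p : ℝ} (hlam : 0 < lam) (hp : p < 1) {n : ℕ} (x : Fin n → ℝ) :
    Sp lam p x = fun i => scalarShrink lam p (x i) :=
  funext fun i => pshrinkFun_mul_sign hlam hp (x i)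

/-- global convergence of IPS to a fixed point of the iteration map
(equivalently, a first-order stationary point of `F_p`). -/
theorem stmt19 (lam p : ℝ) (hlam : 0 < lam) (hp : p < 1)
    {m n : ℕ} (A : Matrix (Fin m) (Fin n) ℝ) (hA : specNorm A < 1)
    (b : Fin m → ℝ) (x : ℕ → Fin n → ℝ)
    (hiter : ∀ k : ℕ,
      x (k + 1) = Sp lam p (x k - A.transpose.mulVec (A.mulVec (x k) - b)))
    (hcase : 0 ≤ p ∨
      (p < 0 ∧ lam ^ 2 > p * (l2 b) ^ 2 / (p - 2) ∧ x 0 = 0)) :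
    ∃ xbar : Fin n → ℝ,
      Filter.Tendsto x Filter.atTop (nhds xbar) ∧
      xbar = Sp lam p (xbar - A.transpose.mulVec (A.mulVec xbar - b)) := by
  set t : ℕ → Fin n → ℝ := fun k => gradStep A b (x k) with ht
  have hx : ∀ k, x (k + 1) = fun i => scalarShrink lam p (t k i) := fun k => by
    rw [hiter k, Sp_eq hlam hp]; rfl
  have hstep : ∀ k, t (k + 1) = shrinkGradStep lam p A b (t k) := fun k => by
    change gradStep A b (x (k + 1)) = _
    rw [hx k]; rfl
  have hcase' : 0 ≤ p ∨ p < 0 ∧ shrinkEnergy lam p A b (t 0) < lam ^ 2 * (p - 2) / (2 * p) := by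
    refine hcase.imp id ?_
    rintro ⟨hp0, hb, hx0⟩
    refine ⟨hp0, ?_⟩
    have h0 : t 0 = shrinkGradStep lam p A b 0 := by
      have : |(0 : ℝ)| ≤ lam := by simpa using hlam.le
      change gradStep A b (x 0) = gradStep A b _
      rw [hx0]
      congr 1
      ext i
      simp [scalarShrink_of_abs_le this]
    have h1 := (sq_nonneg _).trans (shrinkEnergy_descent (b := b) hlam hp hA.le 0)
    rw [← h0, shrinkEnergy_zero hlam] at h1
    have h2 : l2 b ^ 2 / 2 < lam ^ 2 * (p - 2) / (2 * p) := by
      rw [gt_iff_lt, div_lt_iff_of_neg (by linarith)] at hb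
      rw [lt_div_iff_of_neg (by linarith)]
      linarith
    linarith
  obtain ⟨a, ha⟩ := exists_tendsto_shrinkGradStep hlam hp hA.le hstep hcase'
  have hcont : Continuous fun u : Fin n → ℝ => fun i => scalarShrink lam p (u i) :=
    continuous_pi fun i => (continuous_scalarShrink hlam).comp (continuous_apply i)
  have hcontg : Continuous (gradStep A b) := by
    unfold gradStep
    exact continuous_id.sub (continuous_const.matrix_mulVec
      ((continuous_const.matrix_mulVec continuous_id).sub continuous_const))
  set xbar : Fin n → ℝ := fun i => scalarShrink lam p (a i) with hxbar
  have hlim : Tendsto x atTop (𝓝 xbar) := by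
    refine (tendsto_add_atTop_iff_nat 1).1 ?_
    simp only [hx]
    exact (hcont.tendsto a).comp ha
  refine ⟨xbar, hlim, ?_⟩
  have hfix : a = gradStep A b xbar :=
    tendsto_nhds_unique ha ((hcontg.tendsto xbar).comp hlim)
  rw [Sp_eq hlam hp]
  change xbar = fun i => scalarShrink lam p (gradStep A b xbar i)
  rw [← hfix]

end
end
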